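/- Let F₀ be a field of characteristic 0 that is finitely generated over ℚ (i.e., there is a finite subset S₀ of F₀ with F₀ = ℚ(S₀)). Then there is a finite subset 𝒮 of ℕ × ℕ, depending only on F₀, with the following property: for every integer n of the form n = 3^{k₁} + 3^{k₂} + 3^{k₃} with integers k₁ > k₂ > k₃ ≥ 0 and (k₁ − k₃, k₂ − k₃) ∉ 𝒮, there exist fields F ⊆ E with F₀ ⊆ F and [E : F] = n such that no nonzero element δ ∈ E satisfies Tr_{E/F}(δ) = 0 and Tr_{E/F}(δ³) = 0. -/

import Mathlib

noncomputable def gch (α : ℝ) (n : ℕ) : ℝ := (∏ i ∈ Finset.range n, (α - i)) / n.factorial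

theorem gch_zero (α : ℝ) : gch α 0 = 1 := by simp [gch]

theorem gch_succ (α : ℝ) (n : ℕ) : (n + 1 : ℝ) * gch α (n+1) = (α - n) * gch α n := by
  unfold gch
  rw [Finset.prod_range_succ, Nat.factorial_succ]
  have : (n.factorial : ℝ) ≠ 0 := by positivity
  push_cast
  field_simp

theorem gch_succ' (α : ℝ) (n : ℕ) : (n + 1 : ℝ) * gch α (n+1) = α * gch (α - 1) n := by
  unfold gch
  rw [Finset.prod_range_succ', Nat.factorial_succ]
  have : (n.factorial : ℝ) ≠ 0 := by positivity
  have h : ∏ k ∈ Finset.range n, (α - ((k+1 : ℕ):ℝ)) = ∏ i ∈ Finset.range n, (α - 1 - i) := by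
    apply Finset.prod_congr rfl; intros; push_cast; ring
  rw [h]
  push_cast
  field_simp
  simp [mul_comm]

theorem gch_add (α : ℝ) (h n : ℕ) :
    gch α (h + n) * ((h+n).choose h : ℝ) = gch α h * gch (α - h) n := by
  unfold gch
  rw [Finset.prod_range_add, Nat.cast_add_choose]
  have h1 : ∏ x ∈ Finset.range n, (α - ((h + x : ℕ):ℝ)) = ∏ i ∈ Finset.range n, (α - h - i) := by
    apply Finset.prod_congr rfl; intros; push_cast; ring
  rw [h1]
  have a1 : (h.factorial : ℝ) ≠ 0 := by positivity
  have a2 : (n.factorial : ℝ) ≠ 0 := by positivity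
  have a3 : ((h+n).factorial : ℝ) ≠ 0 := by positivity
  field_simp

theorem gch_abs_le (α : ℝ) (A : ℕ) (hA : |α| ≤ A) (n : ℕ) : |gch α n| ≤ 2 ^ (A + n) := by
  unfold gch
  rw [abs_div, Finset.abs_prod, Nat.abs_cast]
  have h1 : ∏ i ∈ Finset.range n, |α - i| ≤ ∏ i ∈ Finset.range n, ((A:ℝ) + i) := by
    apply Finset.prod_le_prod
    · intros; positivity
    · intro i _
      calc |α - i| ≤ |α| + |(i:ℝ)| := abs_sub _ _
        _ ≤ _ := by simp [hA]
  have h2 : ∏ i ∈ Finset.range n, ((A:ℝ) + i) = (A.ascFactorial n : ℝ) := by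
    rw [Nat.ascFactorial_eq_prod_range]; push_cast; rfl
  rw [h2, Nat.ascFactorial_eq_factorial_mul_choose'] at h1
  have a1 : (0:ℝ) < (n.factorial : ℝ) := by positivity
  rw [div_le_iff₀ a1]
  refine h1.trans ?_
  push_cast
  rw [mul_comm]
  gcongr
  have : (A + n - 1).choose n ≤ 2 ^ (A + n) :=
    (Nat.choose_le_two_pow _ _).trans (Nat.pow_le_pow_right (by norm_num) (by omega))
  exact_mod_cast this

theorem gch_taylor (N : ℝ) (hN : 0 < N) (R : ℕ) : ∀ (α : ℝ), α ≤ R → ∀ x : ℝ, 0 ≤ x →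
    |(N + x) ^ α - ∑ n ∈ Finset.range R, gch α n * N ^ (α - n) * x ^ n|
      ≤ |gch α R| * N ^ (α - R) * x ^ R := by
  induction R with
  | zero =>
    intro α hα x hx
    simp only [Finset.range_zero, Finset.sum_empty, sub_zero, gch_zero, abs_one, one_mul,
      CharP.cast_eq_zero, pow_zero, mul_one]
    rw [abs_of_nonneg (by positivity)]
    exact Real.rpow_le_rpow_of_nonpos hN (by linarith) (by simpa using hα)
  | succ R ih =>
    intro α hα x hx
    have hα' : α - 1 ≤ R := by push_cast at hα; linarith
    have key := image_norm_le_of_norm_deriv_right_le_deriv_boundary (a := 0) (b := x)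
      (f := fun y => (N + y) ^ α - ∑ n ∈ Finset.range (R+1), gch α n * N ^ (α - n) * y ^ n)
      (f' := fun y => α * ((N + y) ^ (α - 1)
          - ∑ n ∈ Finset.range R, gch (α - 1) n * N ^ (α - 1 - n) * y ^ n))
      (B := fun y => |gch α (R+1)| * N ^ (α - (R+1 : ℕ)) * y ^ (R+1))
      (B' := fun y => |gch α (R+1)| * N ^ (α - (R+1 : ℕ)) * ((R+1 : ℕ) * y ^ R))
    have hder : ∀ y : ℝ, 0 ≤ y → HasDerivAt (fun y => (N + y) ^ α - ∑ n ∈ Finset.range (R+1), gch α n * N ^ (α - n) * y ^ n)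
       (α * ((N + y) ^ (α - 1)
          - ∑ n ∈ Finset.range R, gch (α - 1) n * N ^ (α - 1 - n) * y ^ n)) y := by
      intro y hy
      have h1 : HasDerivAt (fun y => (N + y) ^ α) (1 * α * (N + y) ^ (α - 1)) y :=
        HasDerivAt.rpow_const ((hasDerivAt_id y).const_add N) (Or.inl (by simp; linarith))
      have h2 : HasDerivAt (fun y => ∑ n ∈ Finset.range (R+1), gch α n * N ^ (α - n) * y ^ n)
         (∑ n ∈ Finset.range (R+1), gch α n * N ^ (α - n) * (n * y ^ (n-1))) y := by
        apply HasDerivAt.fun_sum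
        intro n _
        exact (hasDerivAt_pow n y).const_mul _
      refine (h1.sub h2).congr_deriv ?_
      symm
      rw [Finset.sum_range_succ', mul_sub]
      congr 1
      · ring
      · simp only [CharP.cast_eq_zero, zero_mul, mul_zero, add_zero, Finset.mul_sum]
        apply Finset.sum_congr rfl
        intro n _
        have := gch_succ' α n
        have e : α - ((n+1 : ℕ):ℝ) = α - 1 - n := by push_cast; ring
        rw [e, Nat.add_sub_cancel]
        push_cast
        linear_combination (- N ^ (α - 1 - n) * y ^ n) * this
    have := key (fun y hy => (hder y hy.1).continuousAt.continuousWithinAt)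
      (fun y hy => (hder y hy.1).hasDerivWithinAt) ?_ ?_ ?_ (x := x) ⟨hx, le_rfl⟩
    · simpa using this
    · simp only [add_zero]
      rw [Finset.sum_eq_single 0]
      · simp [gch_zero]
      · intro b _ hb; simp [hb]
      · simp
    · intro y
      have := (hasDerivAt_pow (R+1) y).const_mul (|gch α (R+1)| * N ^ (α - (R+1 : ℕ)))
      simpa using this
    · intro y hy
      have h := ih (α - 1) hα' y hy.1
      rw [Real.norm_eq_abs, abs_mul]
      have e : α - ((R+1 : ℕ):ℝ) = α - 1 - R := by push_cast; ring
      have e2 : ((R:ℝ)+1) * |gch α (R+1)| = |α| * |gch (α-1) R| := by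
        rw [← abs_mul, ← gch_succ', abs_mul, abs_of_nonneg (by positivity : (0:ℝ) ≤ R+1)]
      rw [e]
      push_cast
      calc _ ≤ |α| * (|gch (α - 1) R| * N ^ (α - 1 - R) * y ^ R) := by gcongr
        _ = _ := by linear_combination (-N ^ (α - 1 - R) * y ^ R) * e2

theorem gch_integral (p : ℕ) (hp : p.Prime) (k h : ℕ) (hk : h ≤ k) :
    ∃ z : ℤ, (z : ℝ) = (p:ℝ) ^ (2 * k) * gch (k + 1 / p) h := by
  have := Fact.mk hp
  obtain ⟨v, w, hw, hvw⟩ := Nat.exists_eq_pow_mul_and_not_dvd h.factorial_ne_zero p hp.ne_one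
  have hv : v ≤ h := by
    have h1 : padicValNat p h.factorial = v := by
      rw [hvw, padicValNat.mul (by simp [hp.ne_zero]) (by rintro rfl; simp at hw)]
      rw [padicValNat.prime_pow, padicValNat.eq_zero_of_not_dvd hw, add_zero]
    have h2 := sub_one_mul_padicValNat_factorial (p := p) h
    rw [h1] at h2
    have : 1 ≤ p - 1 := by have := hp.two_le; omega
    nlinarith [Nat.sub_le h (p.digits h).sum]
  have hw0 : w ≠ 0 := by rintro rfl; simp at hw
  have hcop : Nat.Coprime p w := (Nat.Prime.coprime_iff_not_dvd hp).2 hw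
  -- inverse
  obtain ⟨u, hu⟩ : ∃ u : ℕ, ((p * u : ℕ) : ZMod w) = 1 := by
    have : NeZero w := ⟨hw0⟩
    refine ⟨((p : ZMod w)⁻¹).val, ?_⟩
    push_cast
    rw [ZMod.natCast_val, ZMod.cast_id, ZMod.coe_mul_inv_eq_one p hcop]
  have hdvd : (w : ℤ) ∣ ∏ i ∈ Finset.range h, ((p:ℤ) * k + 1 - p * i) := by
    rw [← ZMod.intCast_zmod_eq_zero_iff_dvd] <;> try exact w
    push_cast
    have hu' : (p : ZMod w) * u = 1 := by exact_mod_cast hu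
    have : ∀ i ∈ Finset.range h, ((p : ZMod w) * k + 1 - p * i) = p * (((k + u - i : ℕ) : ℕ) : ZMod w) := by
      intro i hi
      have : i ≤ k + u := by have := Finset.mem_range.1 hi; omega
      rw [Nat.cast_sub this, ← hu']; push_cast; ring
    rw [Finset.prod_congr rfl this, Finset.prod_mul_distrib, Finset.prod_const, ← Nat.cast_prod, ← Nat.descFactorial_eq_prod_range]
    have h3 : (w : ℕ) ∣ (k+u).descFactorial h :=
      (Dvd.intro_left _ hvw.symm).trans (Nat.factorial_dvd_descFactorial _ _)
    rw [(ZMod.natCast_eq_zero_iff _ _).2 h3, mul_zero]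
  obtain ⟨z, hz⟩ := hdvd
  refine ⟨p ^ (2 * k - h - v) * z, ?_⟩
  have hp0 : (p:ℝ) ≠ 0 := by exact_mod_cast hp.ne_zero
  have hw0' : (w:ℝ) ≠ 0 := by exact_mod_cast hw0
  have e1 : ∏ i ∈ Finset.range h, ((k:ℝ) + 1/p - i) = (w * z) / p ^ h := by
    have : (w * z : ℝ) = ∏ i ∈ Finset.range h, ((p:ℝ) * k + 1 - p * i) := by exact_mod_cast hz.symm
    rw [this, eq_div_iff (by positivity)]
    conv_lhs => rw [← Finset.card_range h, ← Finset.prod_const, Finset.card_range, ← Finset.prod_mul_distrib]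
    apply Finset.prod_congr rfl
    intro i _
    field_simp
  unfold gch
  rw [e1, hvw]
  push_cast
  have e2 : (p:ℝ) ^ (2*k) = p ^ (2*k-h-v) * p ^ h * p ^ v := by
    rw [← pow_add, ← pow_add]; congr 1; omega
  rw [e2]
  field_simp

open Polynomial

def Bd (ρ : ℝ) (p : ℝ[X]) (c : ℝ) : Prop :=
  ∃ q : ℝ[X], (∀ i, |p.coeff i| ≤ q.coeff i) ∧ q.eval ρ ≤ c

namespace Bd
variable {ρ : ℝ} {p p' : ℝ[X]} {c c' : ℝ}

theorem eval_nonneg {q : ℝ[X]} (h : ∀ i, 0 ≤ q.coeff i) {x : ℝ} (hx : 0 ≤ x) : 0 ≤ q.eval x := by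
  rw [Polynomial.eval_eq_sum_range]
  exact Finset.sum_nonneg fun i _ => mul_nonneg (h i) (by positivity)

theorem nonneg (hρ : 0 ≤ ρ) (h : Bd ρ p c) : 0 ≤ c := by
  obtain ⟨q, hq, hc⟩ := h
  exact (eval_nonneg (fun i => (abs_nonneg _).trans (hq i)) hρ).trans hc

theorem mono (h : Bd ρ p c) (hc : c ≤ c') : Bd ρ p c' := by
  obtain ⟨q, hq, hc'⟩ := h
  exact ⟨q, hq, hc'.trans hc⟩

theorem add (h : Bd ρ p c) (h' : Bd ρ p' c') : Bd ρ (p + p') (c + c') := by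
  obtain ⟨q, hq, hc⟩ := h
  obtain ⟨q', hq', hc'⟩ := h'
  refine ⟨q + q', fun i => ?_, ?_⟩
  · rw [coeff_add, coeff_add]
    exact (abs_add_le _ _).trans (add_le_add (hq i) (hq' i))
  · rw [eval_add]; exact add_le_add hc hc'

theorem mul (hρ : 0 ≤ ρ) (h : Bd ρ p c) (h' : Bd ρ p' c') : Bd ρ (p * p') (c * c') := by
  have hc0 := h.nonneg hρ
  obtain ⟨q, hq, hc⟩ := h
  obtain ⟨q', hq', hc'⟩ := h'
  refine ⟨q * q', fun i => ?_, ?_⟩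
  · rw [coeff_mul, coeff_mul]
    refine (Finset.abs_sum_le_sum_abs _ _).trans (Finset.sum_le_sum fun x _ => ?_)
    rw [abs_mul]
    exact mul_le_mul (hq _) (hq' _) (abs_nonneg _) ((abs_nonneg _).trans (hq _))
  · rw [eval_mul]
    exact mul_le_mul hc hc' (eval_nonneg (fun i => (abs_nonneg _).trans (hq' i)) hρ) hc0

theorem const (x : ℝ) : Bd ρ (C x) |x| := by
  refine ⟨C |x|, fun i => ?_, by simp⟩
  rw [coeff_C, coeff_C]; split_ifs <;> simp

theorem one : Bd ρ 1 1 := by simpa using const (ρ := ρ) 1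

theorem zero : Bd ρ 0 0 := by simpa using const (ρ := ρ) 0

theorem X : Bd ρ X ρ := by
  refine ⟨Polynomial.X, fun i => ?_, by simp⟩
  rw [coeff_X]; split_ifs <;> simp

theorem neg (h : Bd ρ p c) : Bd ρ (-p) c := by
  obtain ⟨q, hq, hc⟩ := h
  exact ⟨q, fun i => by simpa using hq i, hc⟩

theorem sub (h : Bd ρ p c) (h' : Bd ρ p' c') : Bd ρ (p - p') (c + c') := by
  rw [sub_eq_add_neg]; exact h.add h'.neg

theorem pow (hρ : 0 ≤ ρ) (h : Bd ρ p c) (n : ℕ) : Bd ρ (p ^ n) (c ^ n) := by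
  induction n with
  | zero => simpa using one
  | succ n ih => rw [pow_succ, pow_succ]; exact ih.mul hρ h

theorem sum {ι : Type*} (s : Finset ι) (f : ι → ℝ[X]) (g : ι → ℝ) (h : ∀ i ∈ s, Bd ρ (f i) (g i)) :
    Bd ρ (∑ i ∈ s, f i) (∑ i ∈ s, g i) := by
  classical
  induction s using Finset.induction_on with
  | empty => simpa using zero
  | insert a s ha ih =>
    rw [Finset.sum_insert ha, Finset.sum_insert ha]
    exact (h a (by simp)).add (ih fun i hi => h i (by simp [hi]))

theorem prod {ι : Type*} (hρ : 0 ≤ ρ) (s : Finset ι) (f : ι → ℝ[X]) (g : ι → ℝ)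
    (h : ∀ i ∈ s, Bd ρ (f i) (g i)) :
    Bd ρ (∏ i ∈ s, f i) (∏ i ∈ s, g i) := by
  classical
  induction s using Finset.induction_on with
  | empty => simpa using one
  | insert a s ha ih =>
    rw [Finset.prod_insert ha, Finset.prod_insert ha]
    exact (h a (by simp)).mul hρ (ih fun i hi => h i (by simp [hi]))

theorem eval_le (h : Bd ρ p c) {x : ℝ} (hx : |x| ≤ ρ) : |p.eval x| ≤ c := by
  obtain ⟨q, hq, hc⟩ := h
  have e1 := Polynomial.eval_eq_sum_range' (p := p) (n := max p.natDegree q.natDegree + 1) (by omega) x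
  have e2 := Polynomial.eval_eq_sum_range' (p := q) (n := max p.natDegree q.natDegree + 1) (by omega) ρ
  refine le_trans ?_ hc
  rw [e1, e2]
  refine (Finset.abs_sum_le_sum_abs _ _).trans (Finset.sum_le_sum fun i _ => ?_)
  rw [abs_mul, abs_pow]
  exact mul_le_mul (hq _) (pow_le_pow_left₀ (abs_nonneg _) hx _) (by positivity) ((abs_nonneg _).trans (hq _))

theorem div_X_sub_C (h : Bd ρ p c) {a : ℝ} (ha : |a| + 1 ≤ ρ) : Bd ρ (p /ₘ (Polynomial.X - C a)) c := by
  obtain ⟨q, hq, hc⟩ := h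
  have hq0 : ∀ i, 0 ≤ q.coeff i := fun i => (abs_nonneg _).trans (hq i)
  set r := p /ₘ (Polynomial.X - C a) with hr
  set r' := q /ₘ (Polynomial.X - C |a|) with hr'
  have key : ∀ m n, r.natDegree + r'.natDegree + 1 ≤ n + m → |r.coeff n| ≤ r'.coeff n := by
    intro m
    induction m with
    | zero =>
      intro n hn
      rw [coeff_eq_zero_of_natDegree_lt (by omega), coeff_eq_zero_of_natDegree_lt (by omega)]
      simp
    | succ m ih =>
      intro n hn
      have := ih (n+1) (by omega)
      have e1 : r.coeff n = p.coeff (n+1) + a * r.coeff (n+1) := coeff_divByMonic_X_sub_C_rec _ _ _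
      have e2 : r'.coeff n = q.coeff (n+1) + |a| * r'.coeff (n+1) :=
        coeff_divByMonic_X_sub_C_rec _ _ _
      rw [e1, e2]
      refine (abs_add_le _ _).trans (add_le_add (hq _) ?_)
      rw [abs_mul]
      gcongr
  have key' : ∀ n, |r.coeff n| ≤ r'.coeff n := fun n => key (r.natDegree + r'.natDegree + 1) n (by omega)
  refine ⟨r', key', ?_⟩
  have e := Polynomial.modByMonic_add_div q (Polynomial.X - C |a|)
  rw [modByMonic_X_sub_C_eq_C_eval, ← hr'] at e
  have e2 := congrArg (eval ρ) e
  simp only [eval_add, eval_C, eval_mul, eval_sub, eval_X] at e2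
  have h1 := eval_nonneg hq0 (abs_nonneg a)
  have h2 := eval_nonneg (fun i => (abs_nonneg _).trans (key' i)) (by linarith [abs_nonneg a] : 0 ≤ ρ)
  nlinarith

end Bd

theorem divByMonic_mul' {f g : ℝ[X]} (hf : f.Monic) (hg : g.Monic) (p : ℝ[X]) :
    p /ₘ (f * g) = (p /ₘ f) /ₘ g := by
  refine (Polynomial.div_modByMonic_unique _ (p %ₘ f + f * ((p /ₘ f) %ₘ g)) (hf.mul hg) ⟨?_, ?_⟩).1
  · have h1 := Polynomial.modByMonic_add_div p f
    have h2 := Polynomial.modByMonic_add_div (p /ₘ f) g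
    linear_combination h1 + f * h2
  · rw [degree_mul]
    have hg1 := Polynomial.degree_modByMonic_lt (p /ₘ f) hg
    have hf1 := Polynomial.degree_modByMonic_lt p hf
    refine (degree_add_le _ _).trans_lt (max_lt ?_ ?_)
    · refine hf1.trans_le ?_
      rw [degree_eq_natDegree hf.ne_zero, degree_eq_natDegree hg.ne_zero]
      exact_mod_cast Nat.le_add_right _ _
    · rw [degree_mul, degree_eq_natDegree hf.ne_zero]
      exact (WithBot.add_lt_add_iff_left (by simp)).2 hg1

theorem Bd.div_pow {ρ : ℝ} {a : ℝ} (ha : |a| + 1 ≤ ρ) (k : ℕ) :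
    ∀ {p : ℝ[X]} {c : ℝ}, Bd ρ p c → Bd ρ (p /ₘ (Polynomial.X - C a) ^ k) c := by
  induction k with
  | zero => intro p c h; simpa using h
  | succ k ih =>
    intro p c h
    rw [pow_succ, divByMonic_mul' ((monic_X_sub_C a).pow k) (monic_X_sub_C a)]
    exact (ih h).div_X_sub_C ha

theorem Bd.div_prod {ρ : ℝ} {ι : Type*} (s : Finset ι) (a : ι → ℝ) (ha : ∀ i, |a i| + 1 ≤ ρ) (k : ℕ) :
    ∀ {p : ℝ[X]} {c : ℝ}, Bd ρ p c → Bd ρ (p /ₘ ∏ i ∈ s, (Polynomial.X - C (a i)) ^ k) c := by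
  classical
  induction s using Finset.induction_on with
  | empty => intro p c h; simpa using h
  | insert b s hb ih =>
    intro p c h
    rw [Finset.prod_insert hb, divByMonic_mul' ((monic_X_sub_C _).pow k)
      (monic_prod_of_monic _ _ fun i _ => (monic_X_sub_C _).pow k)]
    exact ih (h.div_pow (ha b) k)

open Polynomial
set_option linter.all false

noncomputable section
namespace Pade
variable {J : ℕ} (a : Fin J → ℕ) (k : ℕ)

def Qp : ℝ[X] := ∏ j, (X - C (a j : ℝ)) ^ k

theorem Qp_monic : (Qp a k).Monic := monic_prod_of_monic _ _ fun i _ => (monic_X_sub_C _).pow k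

theorem Qp_natDegree : (Qp a k).natDegree = J * k := by
  unfold Qp
  rw [natDegree_prod_of_monic _ _ fun i _ => (monic_X_sub_C _).pow k]
  simp only [natDegree_pow, natDegree_X_sub_C]
  simp

theorem Qp_degree : (Qp a k).degree = ((J * k : ℕ) : WithBot ℕ) := by
  rw [degree_eq_natDegree (Qp_monic a k).ne_zero, Qp_natDegree]

theorem Qp_succ : Qp a (k+1) = Qp a k * Qp a 1 := by
  unfold Qp
  rw [← Finset.prod_mul_distrib]
  apply Finset.prod_congr rfl; intros; ring

theorem divM_add {g : ℝ[X]} (hg : g.Monic) (p q : ℝ[X]) : (p + q) /ₘ g = p /ₘ g + q /ₘ g := by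
  refine (div_modByMonic_unique _ (p %ₘ g + q %ₘ g) hg ⟨?_, ?_⟩).1
  · linear_combination modByMonic_add_div p g + modByMonic_add_div q g
  · exact (degree_add_le _ _).trans_lt (max_lt (degree_modByMonic_lt p hg) (degree_modByMonic_lt q hg))

theorem divM_smul {g : ℝ[X]} (hg : g.Monic) (c : ℝ) (p : ℝ[X]) : (c • p) /ₘ g = c • (p /ₘ g) := by
  refine (div_modByMonic_unique _ (c • (p %ₘ g)) hg ⟨?_, ?_⟩).1
  · rw [mul_smul_comm, ← smul_add, modByMonic_add_div p g]
  · exact (degree_smul_le _ _).trans_lt (degree_modByMonic_lt p hg)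

def phi (i : Fin J) : ℝ[X] →ₗ[ℝ] ℝ where
  toFun p := (p /ₘ Qp a k).eval (a i : ℝ)
  map_add' p q := by rw [divM_add (Qp_monic a k), eval_add]
  map_smul' c p := by rw [divM_smul (Qp_monic a k), eval_smul]; simp

theorem phi_lt (i : Fin J) (p : ℝ[X]) (h : p.degree < ((J * k : ℕ) : WithBot ℕ)) : phi a k i p = 0 := by
  change (p /ₘ Qp a k).eval (a i : ℝ) = 0
  rw [(divByMonic_eq_zero_iff (Qp_monic a k)).2 (by rwa [Qp_degree]), eval_zero]

theorem phi_dvd (i : Fin J) (p : ℝ[X]) (h : Qp a (k+1) ∣ p) : phi a k i p = 0 := by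
  change (p /ₘ Qp a k).eval (a i : ℝ) = 0
  obtain ⟨r, rfl⟩ := h
  rw [Qp_succ, mul_assoc, mul_divByMonic_cancel_left _ (Qp_monic a k), eval_mul]
  unfold Qp
  rw [eval_prod, Finset.prod_eq_zero (Finset.mem_univ i)]
  · simp
  · simp

theorem phi_bd {ρ : ℝ} (hρ : ∀ i, (a i : ℝ) + 1 ≤ ρ) (i : Fin J) {p : ℝ[X]} {c : ℝ} (h : Bd ρ p c) :
    |phi a k i p| ≤ c := by
  apply Bd.eval_le (ρ := ρ)
  · exact Bd.div_prod _ _ (by simpa using hρ) _ h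
  · simp; linarith [hρ i]

abbrev IL : Subsemiring ℝ[X] := Polynomial.lifts (Int.castRingHom ℝ)

theorem il_X : (X : ℝ[X]) ∈ IL := X_mem_lifts _
theorem il_C (z : ℤ) : (C (z:ℝ) : ℝ[X]) ∈ IL := C_mem_lifts (Int.castRingHom ℝ) z
theorem il_N (n : ℕ) : (C (n:ℝ) : ℝ[X]) ∈ IL := by simpa using il_C n
theorem il_sub {p q : ℝ[X]} (hp : p ∈ IL) (hq : q ∈ IL) : p - q ∈ IL := by
  have : p - q = p + C ((-1 : ℤ) : ℝ) * q := by simp; ring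
  rw [this]
  exact add_mem hp (mul_mem (il_C _) hq)
theorem il_Xa (n : ℕ) : (X - C (n:ℝ) : ℝ[X]) ∈ IL := il_sub il_X (il_N n)

theorem phi_int (i : Fin J) {p : ℝ[X]} (h : p ∈ IL) : ∃ z : ℤ, (z : ℝ) = phi a k i p := by
  obtain ⟨p0, rfl⟩ := (mem_lifts _).1 h
  have hQ : Qp a k = (∏ j, (X - C (a j : ℤ)) ^ k : ℤ[X]).map (Int.castRingHom ℝ) := by
    unfold Qp
    simp [Polynomial.map_prod]
  refine ⟨(p0 /ₘ ∏ j, (X - C (a j : ℤ)) ^ k).eval (a i : ℤ), ?_⟩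
  change _ = (map (Int.castRingHom ℝ) p0 /ₘ Qp a k).eval (a i : ℝ)
  rw [hQ, ← map_divByMonic _ (monic_prod_of_monic _ _ fun i _ => (monic_X_sub_C _).pow k)]
  have := eval_intCast_map (Int.castRingHom ℝ) (p0 /ₘ ∏ j, (X - C (a j : ℤ)) ^ k) (a i : ℤ)
  simpa using this.symm

theorem cop (ha : Function.Injective a) (m : ℕ) : Pairwise (Function.onFun IsCoprime fun j => (X - C (a j : ℝ)) ^ m) := by
  intro i j hij
  apply IsCoprime.pow
  exact pairwise_coprime_X_sub_C (s := fun j => (a j : ℝ)) (fun x y h => ha (by simpa using h)) hij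

theorem Qp_dvd (ha : Function.Injective a) (m : ℕ) (p : ℝ[X]) (h : ∀ j, (X - C (a j : ℝ)) ^ m ∣ p) :
    Qp a m ∣ p :=
  Finset.prod_dvd_of_coprime (fun i _ j _ hij => cop a ha m hij) fun i _ => h i

/-- the partition of unity -/
theorem exists_E (ha : Function.Injective a) {ρ : ℝ} (hρ : ∀ i, (a i : ℝ) + 1 ≤ ρ) (hρ1 : 1 ≤ ρ) (m : ℕ) :
    ∃ (E : Fin J → ℝ[X]) (D : ℝ), D ≠ 0 ∧ (∀ j, E j ∈ IL) ∧
      (∀ j l, l ≠ j → (X - C (a l : ℝ)) ^ m ∣ E j) ∧ (∀ j, (X - C (a j : ℝ)) ^ m ∣ E j - C D) ∧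
      ∀ j, Bd ρ (E j) ((3 * (2 * ρ) ^ J) ^ (2 * m * (J + 1))) := by
  classical
  have hρ0 : 0 ≤ ρ := by linarith
  set T : ℝ := (2 * ρ) ^ J with hT
  have hT1 : 1 ≤ T := one_le_pow₀ (by linarith)
  set U : Fin J → ℝ[X] := fun j => ∏ l ∈ Finset.univ.erase j, (X - C (a l : ℝ)) with hU
  set d : Fin J → ℤ := fun j => ∏ l ∈ Finset.univ.erase j, ((a j : ℤ) - a l) with hd
  have hdU : ∀ j, (d j : ℝ) = (U j).eval (a j : ℝ) := by
    intro j; simp [hd, hU, eval_prod]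
  have hd0 : ∀ j, (d j : ℝ) ≠ 0 := by
    intro j
    rw [Int.cast_ne_zero]
    refine Finset.prod_ne_zero_iff.2 fun l hl => ?_
    rw [sub_ne_zero]
    intro h
    exact (Finset.mem_erase.1 hl).1 (ha (by exact_mod_cast h.symm))
  have hU_il : ∀ j, U j ∈ IL := fun j => prod_mem fun l _ => il_Xa _
  have hcard : ∀ j : Fin J, (Finset.univ.erase j).card ≤ J := by
    intro j; exact (Finset.card_le_univ _).trans (by simp)
  have hUB : ∀ j, Bd ρ (U j) T := by
    intro j
    have := Bd.prod hρ0 (Finset.univ.erase j) (fun l => (X - C (a l : ℝ))) (fun _ => 2 * ρ) (by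
      intro i _
      refine (Bd.X.sub (Bd.const _)).mono ?_
      rw [Nat.abs_cast]; linarith [hρ i])
    refine this.mono ?_
    rw [Finset.prod_const]
    exact pow_le_pow_right₀ (by linarith) (hcard j)
  have hdB : ∀ j, |(d j : ℝ)| ≤ T := by
    intro j; rw [hdU]
    apply (hUB j).eval_le
    simp; linarith [hρ j]
  set V : Fin J → ℝ[X] := fun j => C (d j : ℝ) - U j with hV
  have hV_dvd : ∀ j, (X - C (a j : ℝ)) ∣ V j := by
    intro j
    rw [dvd_iff_isRoot, IsRoot, hV]
    simp [hdU]
  have hVB : ∀ j, Bd ρ (V j) (2 * T) := fun j =>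
    ((Bd.const _).sub (hUB j)).mono (by linarith [hdB j])
  have hV_il : ∀ j, V j ∈ IL := fun j => il_sub (il_C _) (hU_il j)
  set tm : Fin J → ℕ → ℝ[X] := fun j i => U j ^ i * V j ^ (2 * m - i) * ((2*m).choose i : ℝ[X]) with htm
  set e : Fin J → ℝ[X] := fun j => ∑ i ∈ (Finset.range (2*m+1)).filter (m ≤ ·), tm j i with he
  have he_rest : ∀ j, C ((d j:ℝ) ^ (2*m)) - e j = ∑ i ∈ (Finset.range (2*m+1)).filter (¬ m ≤ ·), tm j i := by
    intro j
    have h1 : C ((d j:ℝ) ^ (2*m)) = ∑ i ∈ Finset.range (2*m+1), tm j i := by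
      have : C ((d j:ℝ) ^ (2*m)) = (U j + V j) ^ (2*m) := by rw [hV]; simp
      rw [this, add_pow]
    rw [h1, ← Finset.sum_filter_add_sum_filter_not (Finset.range (2*m+1)) (m ≤ ·)]
    rw [he]; ring
  have he1 : ∀ j, U j ^ m ∣ e j := by
    intro j
    refine Finset.dvd_sum fun i hi => ?_
    have := (Finset.mem_filter.1 hi).2
    exact Dvd.dvd.mul_right (Dvd.dvd.mul_right (pow_dvd_pow _ this) _) _
  have he2 : ∀ j, (X - C (a j : ℝ)) ^ m ∣ C ((d j:ℝ) ^ (2*m)) - e j := by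
    intro j
    rw [he_rest]
    refine Finset.dvd_sum fun i hi => ?_
    have := (Finset.mem_filter.1 hi).2
    refine Dvd.dvd.mul_right (Dvd.dvd.mul_left ?_ _) _
    exact (pow_dvd_pow_of_dvd (hV_dvd j) m).trans (pow_dvd_pow _ (by omega))
  have he_il : ∀ j, e j ∈ IL := by
    intro j
    refine sum_mem fun i _ => ?_
    exact mul_mem (mul_mem (pow_mem (hU_il j) _) (pow_mem (hV_il j) _)) (natCast_mem _ _)
  have heB : ∀ j, Bd ρ (e j) ((3 * T) ^ (2*m)) := by
    intro j
    have := Bd.sum (ρ := ρ) ((Finset.range (2*m+1)).filter (m ≤ ·)) (tm j)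
      (fun i => T ^ i * (2 * T) ^ (2*m-i) * ((2*m).choose i : ℝ)) (by
        intro i _
        refine (((hUB j).pow hρ0 i).mul hρ0 ((hVB j).pow hρ0 _)).mul hρ0 ?_
        have := Bd.const (ρ := ρ) (((2*m).choose i : ℝ))
        simpa using this)
    refine this.mono ?_
    have h3 : (3 * T) ^ (2*m) = (T + 2 * T) ^ (2*m) := by ring
    rw [h3, add_pow]
    refine Finset.sum_le_sum_of_subset_of_nonneg (Finset.filter_subset _ _) ?_
    intros; positivity
  refine ⟨fun j => C (∏ l ∈ Finset.univ.erase j, (d l : ℝ) ^ (2*m)) * e j, ∏ l, (d l : ℝ) ^ (2*m), ?_, ?_, ?_, ?_, ?_⟩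
  · exact Finset.prod_ne_zero_iff.2 fun l _ => pow_ne_zero _ (hd0 l)
  · intro j
    refine mul_mem ?_ (he_il j)
    have := il_C (∏ l ∈ Finset.univ.erase j, (d l) ^ (2*m))
    push_cast at this
    exact this
  · intro j l hl
    refine Dvd.dvd.mul_left (Dvd.dvd.trans ?_ (he1 j)) _
    exact pow_dvd_pow_of_dvd (Finset.dvd_prod_of_mem (fun l => (X - C (a l : ℝ))) (by simp [hl])) m
  · intro j
    rw [← Finset.prod_erase_mul _ _ (Finset.mem_univ j), C_mul, ← mul_sub]
    refine Dvd.dvd.mul_left ?_ _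
    exact (dvd_sub_comm).1 (he2 j)
  · intro j
    refine ((Bd.const _).mul hρ0 (heB j)).mono ?_
    rw [Finset.abs_prod]
    have h1 : ∏ l ∈ Finset.univ.erase j, |(d l : ℝ) ^ (2*m)| ≤ ((3 * T) ^ (2 * m)) ^ J := by
      calc _ ≤ ∏ l ∈ Finset.univ.erase j, (3 * T) ^ (2*m) := by
            apply Finset.prod_le_prod
            · intros; positivity
            · intro i _
              rw [abs_pow]
              exact pow_le_pow_left₀ (abs_nonneg _) (by linarith [hdB i]) _
        _ = ((3 * T) ^ (2*m)) ^ (Finset.univ.erase j).card := by rw [Finset.prod_const]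
        _ ≤ _ := pow_le_pow_right₀ (one_le_pow₀ (by linarith)) (hcard j)
    calc _ ≤ ((3 * T) ^ (2 * m)) ^ J * (3 * T) ^ (2*m) := by gcongr
      _ = _ := by rw [← pow_succ, ← pow_mul]
end Pade
end

open Polynomial
set_option linter.all false

noncomputable section
namespace Pade
variable {J : ℕ} (a : Fin J → ℕ) (k : ℕ)

def tt (β : ℝ) (α : ℝ) (N : ℝ) (k : ℕ) (a : ℝ) : ℝ[X] :=
  ∑ h ∈ Finset.range (k+1), C (β * gch α h * (N + a) ^ (k - h)) * (X - C a) ^ h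

theorem ode_aux (β α N : ℝ) (k : ℕ) (a : ℝ) (n : ℕ) (hn : n ≤ k) :
    (C N + X) * derivative (∑ h ∈ Finset.range (n+1), C (β * gch α h * (N + a) ^ (k - h)) * (X - C a) ^ h)
      - C α * (∑ h ∈ Finset.range (n+1), C (β * gch α h * (N + a) ^ (k - h)) * (X - C a) ^ h)
      = - (C (β * (α - n) * gch α n * (N + a) ^ (k - n)) * (X - C a) ^ n) := by
  induction n with
  | zero =>
    simp only [zero_add, Finset.sum_range_one, pow_zero, mul_one, derivative_C, mul_zero, Nat.cast_zero,
      sub_zero, gch_zero, zero_sub, tsub_zero]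
    rw [← C_mul, ← C_neg, ← C_neg]; congr 1; ring
  | succ n ih =>
    have := ih (by omega)
    rw [Finset.sum_range_succ, derivative_add]
    have e : (N + a) ^ (k - n) = (N + a) ^ (k - (n+1)) * (N + a) := by
      rw [← pow_succ]; congr 1; omega
    have g := gch_succ α n
    rw [e] at this
    have g' : (C (β * (α - n) * gch α n * ((N + a) ^ (k - (n+1)) * (N + a))) : ℝ[X])
      = C ((n:ℝ)+1) * C (β * gch α (n+1) * (N + a) ^ (k - (n+1))) * (C N + C a) := by
      rw [← C_mul, ← C_add, ← C_mul]; congr 1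
      linear_combination (-β * (N + a) ^ (k - (n+1)) * (N + a)) * g
    rw [g'] at this
    have g2 : (C (β * (α - (n+1 : ℕ)) * gch α (n+1) * (N + a) ^ (k - (n+1))) : ℝ[X])
      = (C α - C ((n:ℝ)+1)) * C (β * gch α (n+1) * (N + a) ^ (k - (n+1))) := by
      rw [← C_sub, ← C_mul]; congr 1; push_cast; ring
    rw [g2]
    have d1 : derivative (C (β * gch α (n+1) * (N + a) ^ (k - (n+1))) * (X - C a) ^ (n+1))
      = C (β * gch α (n+1) * (N + a) ^ (k - (n+1))) * (C ((n:ℝ)+1) * (X - C a) ^ n) := by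
      rw [derivative_C_mul, derivative_X_sub_C_pow]; simp
    rw [d1]
    linear_combination this

theorem ode (β α N : ℝ) (k : ℕ) (a : ℝ) :
    (X - C a) ^ k ∣ (C N + X) * derivative (tt β α N k a) - C α * tt β α N k a := by
  unfold tt
  rw [ode_aux β α N k a k le_rfl]
  exact (Dvd.intro_left _ rfl).neg_right

theorem tt_eval (β α N : ℝ) (k : ℕ) (a : ℝ) : (tt β α N k a).eval a = β * (N + a) ^ k := by
  unfold tt
  rw [eval_finset_sum, Finset.sum_eq_single 0]
  · simp [gch_zero]
  · intro b _ hb; simp [hb]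
  · simp

theorem ode_zero (N α : ℝ) (hα : ∀ n : ℕ, α ≠ n) (H : ℝ[X])
    (h : (C N + X) * derivative H - C α * H = 0) : H = 0 := by
  by_contra hH
  have h1 := congrArg (fun p => coeff p H.natDegree) h
  simp only [coeff_sub, coeff_C_mul, coeff_zero, add_mul, coeff_add] at h1
  have h2 : (derivative H).coeff H.natDegree = 0 := by
    rw [coeff_derivative, coeff_eq_zero_of_natDegree_lt (by omega)]; simp
  have h3 : (X * derivative H).coeff H.natDegree = H.natDegree * H.leadingCoeff := by
    rcases Nat.eq_zero_or_pos H.natDegree with h0 | h0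
    · rw [h0]; simp
    · obtain ⟨n, hn⟩ := Nat.exists_eq_succ_of_ne_zero h0.ne'
      rw [leadingCoeff, hn, Nat.succ_eq_add_one, coeff_X_mul, coeff_derivative]; push_cast; ring
  rw [h2, h3] at h1
  have : ((H.natDegree : ℝ) - α) * H.leadingCoeff = 0 := by
    rw [leadingCoeff] at *; linear_combination h1
  rcases mul_eq_zero.1 this with h4 | h4
  · exact hα H.natDegree (by linarith)
  · exact hH (leadingCoeff_eq_zero.1 h4)

theorem nonvan (ha : Function.Injective a) (β α N : ℝ) (hβ : β ≠ 0) (hN : 0 < N) (hα : ∀ n : ℕ, α ≠ n)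
    (E : Fin J → ℝ[X]) (D : ℝ) (hD : D ≠ 0)
    (hE1 : ∀ j l, l ≠ j → (X - C (a l : ℝ)) ^ (k+1) ∣ E j)
    (hE2 : ∀ j, (X - C (a j : ℝ)) ^ (k+1) ∣ E j - C D) (v : Fin J → ℝ)
    (hv : ∀ i, phi a k i (∑ j, v j • (E j * tt β α N k (a j))) = 0) : v = 0 := by
  classical
  set G := ∑ j, v j • (E j * tt β α N k (a j)) with hG
  set q := G /ₘ Qp a k with hq
  set H := G %ₘ Qp a k with hH
  have e : H + Qp a k * q = G := modByMonic_add_div _ _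
  have hq1 : ∀ i, (X - C (a i : ℝ)) ∣ q := fun i => dvd_iff_isRoot.2 (hv i)
  have hq2 : ∀ i, (X - C (a i : ℝ)) ^ (k+1) ∣ Qp a k * q := fun i => by
    rw [pow_succ]
    exact mul_dvd_mul (Finset.dvd_prod_of_mem (fun j => (X - C (a j : ℝ))^k) (Finset.mem_univ i)) (hq1 i)
  have hc : ∀ i, (X - C (a i : ℝ)) ^ (k+1) ∣ H - C (v i * D) * tt β α N k (a i) := by
    intro i
    have h1 : (X - C (a i : ℝ)) ^ (k+1) ∣ G - C (v i * D) * tt β α N k (a i) := by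
      rw [hG, ← Finset.add_sum_erase _ _ (Finset.mem_univ i), add_sub_right_comm]
      refine dvd_add ?_ (Finset.dvd_sum fun j hj => ?_)
      · have : v i • (E i * tt β α N k (a i)) - C (v i * D) * tt β α N k (a i)
          = (E i - C D) * (C (v i) * tt β α N k (a i)) := by
          rw [smul_eq_C_mul, C_mul]; ring
        rw [this]
        exact (hE2 i).mul_right _
      · rw [smul_eq_C_mul]
        exact ((hE1 j i (Finset.mem_erase.1 hj).1.symm).mul_right _).mul_left _
    have h2 : H - C (v i * D) * tt β α N k (a i)
      = (G - C (v i * D) * tt β α N k (a i)) - Qp a k * q := by rw [← e]; ring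
    rw [h2]
    exact dvd_sub h1 (hq2 i)
  have hdeg : H.degree < (Qp a k).degree := degree_modByMonic_lt _ (Qp_monic a k)
  have hR : Qp a k ∣ (C N + X) * derivative H - C α * H := by
    refine Qp_dvd a ha k _ fun i => ?_
    obtain ⟨r, hr⟩ := hc i
    have hH' : H = C (v i * D) * tt β α N k (a i) + (X - C (a i : ℝ)) ^ (k+1) * r := by
      rw [← hr]; ring
    obtain ⟨s, hs⟩ := ode β α N k (a i)
    rw [hH']
    simp only [derivative_add, derivative_mul, derivative_C, zero_mul, zero_add,
      derivative_X_sub_C_pow]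
    refine ⟨C (v i * D) * s + (C N + X) * (C ((k+1:ℕ) : ℝ) * r + (X - C (a i:ℝ)) * derivative r)
      - C α * (X - C (a i:ℝ)) * r, ?_⟩
    simp only [Nat.add_sub_cancel]
    linear_combination C (v i * D) * hs
  have hdegR : ((C N + X) * derivative H - C α * H).degree < (Qp a k).degree := by
    rcases eq_or_ne H 0 with h0 | h0
    · simp only [h0, derivative_zero, mul_zero, sub_zero, degree_zero]
      rw [Qp_degree]; exact WithBot.bot_lt_coe _
    · have h1 := degree_derivative_lt h0
      refine (degree_sub_le _ _).trans_lt (max_lt ?_ ?_)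
      · refine lt_of_le_of_lt ?_ hdeg
        rw [degree_mul, degree_eq_natDegree h0]
        have : (C N + X : ℝ[X]).degree = 1 := by rw [add_comm]; exact degree_X_add_C N
        rw [this]
        rcases eq_or_ne (derivative H) 0 with h2 | h2
        · rw [h2]; simp
        · rw [degree_eq_natDegree h2]
          rw [degree_eq_natDegree h0, degree_eq_natDegree h2] at h1
          have : (derivative H).natDegree < H.natDegree := by exact_mod_cast h1
          have h3 : 1 + (derivative H).natDegree ≤ H.natDegree := by omega
          exact_mod_cast h3
      · refine lt_of_le_of_lt ?_ hdeg
        rw [← smul_eq_C_mul]; exact degree_smul_le _ _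
  have hH0 : H = 0 := ode_zero N α hα H (eq_zero_of_dvd_of_degree_lt hR hdegR)
  funext i
  have h1 := hc i
  rw [hH0, zero_sub, dvd_neg] at h1
  have h2 : (C (v i * D) * tt β α N k (a i)).eval (a i : ℝ) = 0 := by
    apply dvd_iff_isRoot.1
    exact (dvd_pow_self _ (by omega)).trans h1
  rw [eval_mul, eval_C, tt_eval] at h2
  have : (0:ℝ) < N + a i := by positivity
  have h4 : β * (N + a i) ^ k ≠ 0 := by positivity
  simpa [hD, h4] using h2

/-- smallness identity -/
theorem small_id (ha : Function.Injective a) (c : ℕ → ℝ)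
    (E : Fin J → ℝ[X]) (D : ℝ)
    (hE1 : ∀ j l, l ≠ j → (X - C (a l : ℝ)) ^ (k+1) ∣ E j)
    (hE2 : ∀ j, (X - C (a j : ℝ)) ^ (k+1) ∣ E j - C D) (i : Fin J) :
    ∑ j, ∑ h ∈ Finset.range (k+1), phi a k i (E j * (X - C (a j : ℝ)) ^ h) *
      (∑ n ∈ Finset.range (J * k), c n * n.choose h * (a j : ℝ) ^ (n - h)) = 0 := by
  classical
  have hsum : Qp a (k+1) ∣ (∑ j, E j) - C D := by
    refine Qp_dvd a ha _ _ fun l => ?_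
    rw [← Finset.add_sum_erase _ _ (Finset.mem_univ l), add_sub_right_comm]
    exact dvd_add (hE2 l) (Finset.dvd_sum fun j hj => hE1 j l (Finset.mem_erase.1 hj).1.symm)
  have hX : ∀ n < J * k, ∑ j, phi a k i (E j * X ^ n) = 0 := by
    intro n hn
    rw [← map_sum, ← Finset.sum_mul]
    have : (∑ j, E j) * X ^ n = ((∑ j, E j) - C D) * X ^ n + C D * X ^ n := by ring
    rw [this, map_add, phi_dvd _ _ _ _ (hsum.mul_right _), phi_lt, add_zero]
    refine (degree_C_mul_X_pow_le _ _).trans_lt ?_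
    exact_mod_cast hn
  have hexp : ∀ j n, phi a k i (E j * X ^ n) = ∑ h ∈ Finset.range (k+1),
      phi a k i (E j * (X - C (a j : ℝ)) ^ h) * (n.choose h * (a j : ℝ) ^ (n - h)) := by
    intro j n
    have h1 : (X:ℝ[X]) ^ n = ∑ h ∈ Finset.range (n + k + 1), (n.choose h * (a j : ℝ) ^ (n - h)) • (X - C (a j : ℝ)) ^ h := by
      have : (X:ℝ[X]) ^ n = ((X - C (a j : ℝ)) + C (a j : ℝ)) ^ n := by ring
      rw [this, add_pow]
      symm
      have hs : Finset.range (n+1) ⊆ Finset.range (n+k+1) := by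
        intro x; simp only [Finset.mem_range]; omega
      rw [← Finset.sum_subset hs]
      · apply Finset.sum_congr rfl; intro h _
        rw [smul_eq_C_mul]; simp; ring
      · intro x _ hx
        rw [Nat.choose_eq_zero_of_lt (by simpa using hx)]; simp
    rw [h1, Finset.mul_sum, map_sum]
    have hs : Finset.range (k+1) ⊆ Finset.range (n+k+1) := by
      intro x; simp only [Finset.mem_range]; omega
    rw [← Finset.sum_subset hs]
    · apply Finset.sum_congr rfl; intro h _
      rw [mul_smul_comm, map_smul, smul_eq_mul, mul_comm]
    · intro x _ hx
      apply phi_dvd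
      rw [mul_smul_comm]
      rw [smul_eq_C_mul]
      refine Dvd.dvd.mul_left (Qp_dvd a ha _ _ fun l => ?_) _
      rcases eq_or_ne l j with rfl | hl
      · exact (pow_dvd_pow _ (by simpa using hx)).mul_left _
      · exact (hE1 j l hl).mul_right _
  have : ∑ n ∈ Finset.range (J*k), c n * ∑ j, phi a k i (E j * X ^ n) = 0 := by
    apply Finset.sum_eq_zero; intro n hn
    rw [hX n (Finset.mem_range.1 hn), mul_zero]
  rw [← this]
  simp only [hexp, Finset.mul_sum]
  conv_rhs => rw [Finset.sum_comm]
  apply Finset.sum_congr rfl; intro j _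
  rw [Finset.sum_comm]
  apply Finset.sum_congr rfl; intro n _
  apply Finset.sum_congr rfl; intro h _
  ring

end Pade
end

open Polynomial
set_option linter.all false

noncomputable section
namespace Pade

theorem taylor_sum (α N x : ℝ) (R h : ℕ) (hh : h ≤ R) :
    ∑ n ∈ Finset.range R, gch α n * N ^ (α - n) * n.choose h * x ^ (n - h)
     = gch α h * ∑ n ∈ Finset.range (R - h), gch (α - h) n * N ^ (α - h - n) * x ^ n := by
  obtain ⟨S, rfl⟩ := Nat.exists_eq_add_of_le hh
  rw [Finset.sum_range_add, Finset.sum_eq_zero, zero_add, Finset.mul_sum, Nat.add_sub_cancel_left]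
  · apply Finset.sum_congr rfl; intro n _
    have := gch_add α h n
    have e : α - ((h + n : ℕ) : ℝ) = α - h - n := by push_cast; ring
    rw [e, Nat.add_sub_cancel_left]
    linear_combination (N ^ (α - h - n) * x ^ n) * this
  · intro n hn
    rw [Nat.choose_eq_zero_of_lt (Finset.mem_range.1 hn)]; simp

theorem main (J p : ℕ) (hp : p.Prime) (hJ : 2 ≤ J) (H N : ℕ) (a : Fin J → ℕ)
    (ha : Function.Injective a) (haH : ∀ j, a j ≤ H) (hN : H + 1 ≤ N) (k : ℕ) (hk : 1 ≤ k) :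
    ∃ P : Fin J → Fin J → ℤ,
      (∀ i j, |(P i j : ℝ)| ≤ ((p:ℝ)^2 * 2 ^ (2*J+10) * ((H:ℝ)+1)^(J+1) * (3*(2*((H:ℝ)+1))^J)^(4*(J+1))) ^ k * (N:ℝ)^k) ∧
      (∀ i, |∑ j, (P i j : ℝ) * ((N:ℝ) + a j) ^ (1/(p:ℝ))| ≤
        ((p:ℝ)^2 * 2 ^ (2*J+10) * ((H:ℝ)+1)^(J+1) * (3*(2*((H:ℝ)+1))^J)^(4*(J+1))) ^ k * (N:ℝ)^(1/(p:ℝ) - (J-1:ℝ) * k)) ∧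
      ∀ v : Fin J → ℤ, (∀ i, ∑ j, P i j * v j = 0) → v = 0 := by
  set ρ : ℝ := (H:ℝ) + 1 with hρd
  have hρ1 : 1 ≤ ρ := by simp [hρd]
  have hρ0 : 0 ≤ ρ := by linarith
  have hρa : ∀ i, (a i : ℝ) + 1 ≤ ρ := by
    intro i; have : (a i : ℝ) ≤ H := by exact_mod_cast haH i
    linarith
  have hNρ : ρ ≤ N := by rw [hρd]; exact_mod_cast hN
  have hN1 : (1:ℝ) ≤ N := hρ1.trans hNρ
  have hN0 : (0:ℝ) < N := by linarith
  have hp2 : (2:ℝ) ≤ p := by exact_mod_cast hp.two_le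
  obtain ⟨E, D, hD, hE_il, hE1, hE2, hEB⟩ := exists_E a ha hρa hρ1 (k+1)
  set e0 : ℝ := (3*(2*ρ)^J)^(4*(J+1)) with he0
  have h3T : 1 ≤ 3*(2*ρ)^J := by
    have : 1 ≤ (2*ρ)^J := one_le_pow₀ (by linarith)
    linarith
  have he01 : 1 ≤ e0 := one_le_pow₀ h3T
  have hEB' : ∀ j, Bd ρ (E j) (e0 ^ k) := by
    intro j
    refine (hEB j).mono ?_
    rw [he0, ← pow_mul]
    apply pow_le_pow_right₀ h3T
    nlinarith
  set ν : ℝ := 1/(p:ℝ) with hν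
  have hν0 : 0 < ν := by positivity
  have hν1 : ν < 1 := by rw [hν, div_lt_one (by linarith)]; linarith
  set α : ℝ := k + ν with hαd
  set β : ℝ := (p:ℝ)^(2*k) with hβ
  have hβ0 : 0 < β := by positivity
  have hα : ∀ n : ℕ, α ≠ n := by
    intro n hn
    have h1 : (k:ℝ) < n := by linarith
    have h2 : (n:ℝ) < k + 1 := by linarith
    have h1' : k < n := by exact_mod_cast h1
    have h2' : n < k + 1 := by exact_mod_cast h2
    omega
  have htt_il : ∀ j, tt β α N k (a j) ∈ IL := by
    intro j
    refine sum_mem fun h hh => ?_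
    obtain ⟨z, hz⟩ := gch_integral p hp k h (by have := Finset.mem_range.1 hh; omega)
    refine mul_mem ?_ (pow_mem (il_Xa _) _)
    have : β * gch α h * ((N:ℝ) + a j) ^ (k - h) = ((z * ((N:ℤ) + a j) ^ (k-h) : ℤ) : ℝ) := by
      push_cast; rw [hz]
    rw [this]
    exact il_C _
  have hgα : ∀ h, |gch α h| ≤ 2 ^ (k + 1 + h) := fun h => gch_abs_le α (k+1) (by
    rw [abs_of_pos (by positivity)]; push_cast; linarith) h
  have hXB : ∀ j h, Bd ρ ((X - C (a j : ℝ)) ^ h) ((2*ρ)^h) := fun j h =>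
    ((Bd.X.sub (Bd.const _)).mono (by rw [Nat.abs_cast]; linarith [hρa j])).pow hρ0 h
  have hk2 : ((k:ℝ) + 1) ≤ 2 ^ k := by
    have : k + 1 ≤ 2 ^ k := Nat.lt_two_pow_self
    exact_mod_cast this
  have httB : ∀ j, Bd ρ (tt β α N k (a j)) (((p:ℝ)^2 * 32)^k * (N:ℝ)^k) := by
    intro j
    have := Bd.sum (ρ := ρ) (Finset.range (k+1)) (fun h => C (β * gch α h * ((N:ℝ) + a j) ^ (k - h)) * (X - C (a j:ℝ)) ^ h)
      (fun h => |β * gch α h * ((N:ℝ) + a j) ^ (k - h)| * (2*ρ)^h) (fun h _ => (Bd.const _).mul hρ0 (hXB j h))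
    refine this.mono ?_
    have hterm : ∀ h ∈ Finset.range (k+1), |β * gch α h * ((N:ℝ) + a j) ^ (k - h)| * (2*ρ)^h
        ≤ β * 2 ^ (3*k) * (2*N)^k := by
      intro h hh
      have hh' : h ≤ k := by have := Finset.mem_range.1 hh; omega
      rw [abs_mul, abs_mul, abs_of_pos hβ0, abs_of_nonneg (by positivity : 0 ≤ ((N:ℝ) + a j) ^ (k - h))]
      have h1 : ((N:ℝ) + a j) ^ (k-h) * (2*ρ)^h ≤ (2*N)^k := by
        calc ((N:ℝ) + a j) ^ (k-h) * (2*ρ)^h ≤ (2*N)^(k-h) * (2*N)^h := by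
              gcongr
              linarith [hρa j]
          _ = (2*N)^k := by rw [← pow_add]; congr 1; omega
      have h2 : |gch α h| ≤ 2 ^ (3*k) := (hgα h).trans (pow_le_pow_right₀ (by norm_num) (by omega))
      calc β * |gch α h| * ((N:ℝ) + a j) ^ (k-h) * (2*ρ)^h = β * |gch α h| * (((N:ℝ) + a j) ^ (k-h) * (2*ρ)^h) := by ring
        _ ≤ _ := by gcongr
    refine (Finset.sum_le_sum hterm).trans ?_
    rw [Finset.sum_const, Finset.card_range, nsmul_eq_mul]
    push_cast
    calc ((k:ℝ)+1) * (β * 2 ^ (3*k) * (2*N)^k) ≤ 2^k * (β * 2 ^ (3*k) * (2*N)^k) := by gcongr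
      _ = (((p:ℝ)^2 * 32)^k * (N:ℝ)^k) := by
        rw [hβ, pow_mul, pow_mul, ← mul_pow, ← mul_pow, ← mul_pow, ← mul_pow]; congr 1; ring
  choose P hP using fun i j => phi_int a k i (mul_mem (hE_il j) (htt_il j))
  have hρJ : 1 ≤ ρ ^ (J+1) := one_le_pow₀ hρ1
  refine ⟨P, ?_, ?_, ?_⟩
  · intro i j
    rw [hP]
    refine (phi_bd a k hρa i ((hEB' j).mul hρ0 (httB j))).trans ?_
    rw [← mul_assoc, ← mul_pow]
    gcongr ?_ ^ k * _
    have h32 : (32:ℝ) ≤ 2^(2*J+10) := by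
      calc (32:ℝ) = 2^5 := by norm_num
        _ ≤ _ := pow_le_pow_right₀ (by norm_num) (by omega)
    calc e0 * ((p:ℝ)^2 * 32) = (p:ℝ)^2 * 32 * 1 * e0 := by ring
      _ ≤ _ := by gcongr
  · intro i
    set w : Fin J → ℕ → ℝ := fun j h => phi a k i (E j * (X - C (a j : ℝ)) ^ h) with hw
    have hsm := small_id a k ha (fun n => gch α n * (N:ℝ) ^ (α - n)) E D hE1 hE2 i
    have hkJ : ∀ h ∈ Finset.range (k+1), h ≤ J * k := by
      intro h hh; have := Finset.mem_range.1 hh; nlinarith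
    set Rm : Fin J → ℕ → ℝ := fun j h => ((N:ℝ) + a j) ^ (α - h) -
      ∑ n ∈ Finset.range (J*k - h), gch (α - h) n * (N:ℝ) ^ (α - h - n) * (a j:ℝ) ^ n with hRm
    have hL : ∑ j, (P i j : ℝ) * ((N:ℝ) + a j) ^ ν
        = ∑ j, ∑ h ∈ Finset.range (k+1), β * (w j h * gch α h * Rm j h) := by
      have h0 : ∑ j, ∑ h ∈ Finset.range (k+1), β * (w j h * (gch α h * ∑ n ∈ Finset.range (J*k - h), gch (α - h) n * (N:ℝ) ^ (α - h - n) * (a j:ℝ) ^ n)) = 0 := by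
        simp only [← Finset.mul_sum]
        rw [← mul_zero β, ← hsm]
        congr 1
        refine Finset.sum_congr rfl fun j _ => Finset.sum_congr rfl fun h hh => ?_
        rw [taylor_sum _ _ _ _ _ (hkJ h hh)]
      rw [← sub_zero (∑ j, (P i j : ℝ) * ((N:ℝ) + a j) ^ ν), ← h0, ← Finset.sum_sub_distrib]
      refine Finset.sum_congr rfl fun j _ => ?_
      rw [hP]
      unfold tt
      rw [Finset.mul_sum, map_sum, Finset.sum_mul, ← Finset.sum_sub_distrib]
      refine Finset.sum_congr rfl fun h hh => ?_
      have e1 : E j * (C (β * gch α h * ((N:ℝ) + a j) ^ (k - h)) * (X - C (a j:ℝ)) ^ h)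
        = (β * gch α h * ((N:ℝ) + a j) ^ (k - h)) • (E j * (X - C (a j:ℝ)) ^ h) := by
        rw [smul_eq_C_mul]; ring
      have e2 : ((N:ℝ) + a j) ^ (α - h) = ((N:ℝ) + a j) ^ (k - h) * ((N:ℝ) + a j) ^ ν := by
        have hh' : h ≤ k := by have := Finset.mem_range.1 hh; omega
        rw [← Real.rpow_natCast, ← Real.rpow_add (by positivity), Nat.cast_sub hh']
        congr 1; rw [hαd]; ring
      rw [e1, map_smul, smul_eq_mul, hRm]
      simp only
      rw [e2]
      simp only [hw]
      ring
    rw [hL]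
    have hwB : ∀ j h, |w j h| ≤ e0 ^ k * (2*ρ)^h := fun j h =>
      phi_bd a k hρa i ((hEB' j).mul hρ0 (hXB j h))
    have hterm : ∀ j, ∀ h ∈ Finset.range (k+1), |β * (w j h * gch α h * Rm j h)| ≤
        β * (e0^k * (2*ρ)^k * 2^(3*k) * (2^((J+2)*k) * ρ^(J*k) * (N:ℝ)^(ν - (J-1:ℝ)*k))) := by
      intro j h hh
      have hh' : h ≤ k := by have := Finset.mem_range.1 hh; omega
      rw [abs_mul, abs_of_pos hβ0, abs_mul, abs_mul]
      have hJk : k ≤ (J-1) * k := Nat.le_mul_of_pos_left _ (by omega)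
      have hJk' : 2 * k ≤ J * k := Nat.mul_le_mul_right _ hJ
      have b1 : |w j h| ≤ e0^k * (2*ρ)^k := (hwB j h).trans (by
        gcongr; linarith)
      have b2 : |gch α h| ≤ 2^(3*k) := (hgα h).trans (pow_le_pow_right₀ (by norm_num) (by omega))
      have hcast : ((J*k - h : ℕ) : ℝ) = J * k - h := by
        rw [Nat.cast_sub (hkJ h hh)]; push_cast; ring
      have hJk'' : (2:ℝ) * k ≤ J * k := by exact_mod_cast hJk'
      have hk1 : (1:ℝ) ≤ k := by exact_mod_cast hk
      have hhk : (h:ℝ) ≤ k := by exact_mod_cast hh'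
      have b3 := gch_taylor N hN0 (J*k-h) (α - h) (by rw [hcast, hαd]; nlinarith) (a j) (by positivity)
      have b4 : |gch (α - h) (J*k-h)| ≤ 2^((J+2)*k) := by
        refine (gch_abs_le (α - h) (k+1) (by
          rw [abs_of_nonneg (by rw [hαd]; linarith)]; push_cast; rw [hαd]
          have : (0:ℝ) ≤ h := by positivity
          linarith) _).trans (pow_le_pow_right₀ (by norm_num) ?_)
        have : (J+2)*k = J * k + 2 * k := by ring
        omega
      have b5 : (a j:ℝ)^(J*k-h) ≤ ρ^(J*k) := by
        calc (a j:ℝ)^(J*k-h) ≤ ρ^(J*k-h) := by gcongr; linarith [hρa j]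
          _ ≤ _ := pow_le_pow_right₀ hρ1 (by omega)
      have e3 : α - h - ((J*k - h : ℕ) : ℝ) = ν - (J-1:ℝ)*k := by rw [hcast, hαd]; ring
      rw [e3] at b3
      have b6 : |Rm j h| ≤ 2^((J+2)*k) * ρ^(J*k) * (N:ℝ)^(ν - (J-1:ℝ)*k) := by
        refine b3.trans ?_
        have hNp : 0 < (N:ℝ)^(ν - (J-1:ℝ)*k) := by positivity
        calc |gch (α - h) (J*k-h)| * (N:ℝ)^(ν - (J-1:ℝ)*k) * (a j:ℝ)^(J*k-h)
            ≤ 2^((J+2)*k) * (N:ℝ)^(ν - (J-1:ℝ)*k) * ρ^(J*k) := by gcongr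
          _ = _ := by ring
      gcongr
    have hsumle : |∑ j, ∑ h ∈ Finset.range (k+1), β * (w j h * gch α h * Rm j h)| ≤
        (J:ℝ) * (((k:ℝ)+1) * (β * (e0^k * (2*ρ)^k * 2^(3*k) * (2^((J+2)*k) * ρ^(J*k) * (N:ℝ)^(ν - (J-1:ℝ)*k))))) := by
      refine (Finset.abs_sum_le_sum_abs _ _).trans ?_
      have : ∀ j ∈ (Finset.univ : Finset (Fin J)), |∑ h ∈ Finset.range (k+1), β * (w j h * gch α h * Rm j h)| ≤ 
        (((k:ℝ)+1) * (β * (e0^k * (2*ρ)^k * 2^(3*k) * (2^((J+2)*k) * ρ^(J*k) * (N:ℝ)^(ν - (J-1:ℝ)*k))))) := by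
        intro j _
        refine (Finset.abs_sum_le_sum_abs _ _).trans ((Finset.sum_le_sum (hterm j)).trans ?_)
        rw [Finset.sum_const, Finset.card_range, nsmul_eq_mul]; push_cast; exact le_rfl
      refine (Finset.sum_le_sum this).trans ?_
      rw [Finset.sum_const, Finset.card_univ, Fintype.card_fin, nsmul_eq_mul]
    refine hsumle.trans ?_
    have hJ2 : (J:ℝ) ≤ (2^J)^k := by
      have h1 : J ≤ (2^J)^k := (Nat.lt_two_pow_self).le.trans (Nat.le_self_pow (by omega) _)
      exact_mod_cast h1
    have hNp : 0 < (N:ℝ)^(ν - (J-1:ℝ)*k) := by positivity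
    have e5 : (2:ℝ)^(3*k) = (2^3)^k := pow_mul _ _ _
    have e6 : (2:ℝ)^((J+2)*k) = (2^(J+2))^k := pow_mul _ _ _
    have e7 : ρ^(J*k) = (ρ^J)^k := pow_mul _ _ _
    have e8 : β = ((p:ℝ)^2)^k := pow_mul _ _ _
    rw [e5, e6, e7, e8]
    calc _ ≤ (2^J)^k * (2^k * (((p:ℝ)^2)^k * (e0^k * (2*ρ)^k * (2^3)^k * ((2^(J+2))^k * (ρ^J)^k * (N:ℝ)^(ν - (J-1:ℝ)*k))))) := by
          gcongr
      _ = ((2^J) * (2 * (((p:ℝ)^2) * (e0 * (2*ρ) * (2^3) * ((2^(J+2)) * (ρ^J))))))^k * (N:ℝ)^(ν - (J-1:ℝ)*k) := by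
          simp only [mul_pow]; ring
      _ ≤ _ := by
          gcongr ?_ ^ k * _
          have : (2^J) * (2 * (((p:ℝ)^2) * (e0 * (2*ρ) * (2^3) * ((2^(J+2)) * (ρ^J))))) = (p:ℝ)^2 * (2^J * 2 ^J * 128) * ρ^(J+1) * e0 := by
            ring
          rw [this]
          gcongr
          have : (2:ℝ)^(2*J+10) = 2^J*2^J*1024 := by ring
          rw [this]
          gcongr
          norm_num
  · intro v hv
    have := nonvan a k ha β α N hβ0.ne' hN0 hα E D hD hE1 hE2 (fun j => (v j : ℝ)) (by
      intro i
      rw [map_sum]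
      have h1 := congrArg (fun z : ℤ => (z:ℝ)) (hv i)
      push_cast at h1
      rw [← h1]
      refine Finset.sum_congr rfl fun j _ => ?_
      rw [map_smul, smul_eq_mul, ← hP, mul_comm])
    funext j
    have h2 := congrFun this j
    simpa using h2

/-- consequence -/
theorem cons (J p : ℕ) (hp : p.Prime) (hJ : 2 ≤ J) : ∃ c : ℕ, 1 ≤ c ∧ ∀ (H N : ℕ) (a : Fin J → ℕ),
    Function.Injective a → (∀ j, a j ≤ H) → H + 1 ≤ N → ∀ k : ℕ, 1 ≤ k →
    ∀ (v : Fin J → ℤ) (lam η : ℝ), 0 ≤ lam → v ≠ 0 →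
     (∀ j, |(v j : ℝ) - lam * ((N:ℝ) + a j) ^ (1/(p:ℝ))| ≤ η) →
     1 ≤ (((c:ℝ) * (H+1))^c)^k * (lam * (N:ℝ)^(1/(p:ℝ) - (J-1:ℝ)*k) + J * (N:ℝ)^k * η) := by
  set c1 : ℕ := p^2 * 2^(2*J+10) * (3*2^J)^(4*(J+1)) with hc1
  have hc1' : 1 ≤ c1 := Nat.one_le_iff_ne_zero.2 (by have := hp.ne_zero; positivity)
  set c : ℕ := c1 + (J+1) + J*(4*(J+1)) with hc
  refine ⟨c, by omega, ?_⟩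
  intro H N a ha haH hN k hk v lam η hlam hv hη
  obtain ⟨P, h1, h2, h3⟩ := main J p hp hJ H N a ha haH hN k hk
  set κ : ℝ := (p:ℝ)^2 * 2 ^ (2*J+10) * ((H:ℝ)+1)^(J+1) * (3*(2*((H:ℝ)+1))^J)^(4*(J+1)) with hκ
  have hκ0 : 0 ≤ κ := by positivity
  have hκle : κ ≤ ((c:ℝ) * (H+1))^c := by
    have e : κ = c1 * ((H:ℝ)+1)^((J+1) + J*(4*(J+1))) := by
      have e1 : (3*(2*((H:ℝ)+1))^J) = (3 * 2^J) * ((H:ℝ)+1)^J := by rw [mul_pow]; ring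
      rw [hκ, hc1, pow_add ((H:ℝ)+1) (J+1), pow_mul _ J, e1, mul_pow _ (((H:ℝ)+1)^J)]; push_cast
      generalize (3 * (2:ℝ)^J)^(4*(J+1)) = q
      generalize (((H:ℝ)+1)^J)^(4*(J+1)) = q'
      ring
    have hH1 : (1:ℝ) ≤ (H:ℝ)+1 := by simp
    have hc0 : (1:ℝ) ≤ c := by exact_mod_cast (by omega : 1 ≤ c)
    have hcc : c ≠ 0 := by omega
    have hc1c : (c1:ℝ) ≤ c := by exact_mod_cast (by omega : c1 ≤ c)
    calc κ ≤ (c:ℝ)^c * ((H:ℝ)+1)^c := by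
          rw [e]
          gcongr
          · exact hc1c.trans (le_self_pow₀ hc0 hcc)
          · omega
      _ = _ := by rw [mul_pow]
  obtain ⟨i, hi⟩ : ∃ i, ∑ j, P i j * v j ≠ 0 := by
    by_contra hcon
    push Not at hcon
    exact hv (h3 v hcon)
  have hη0 : 0 ≤ η := (abs_nonneg _).trans (hη ⟨0, by omega⟩)
  have h1' : (1:ℝ) ≤ |∑ j, (P i j:ℝ) * v j| := by
    have := Int.one_le_abs hi
    exact_mod_cast this
  have e : ∑ j, (P i j:ℝ) * v j = lam * ∑ j, (P i j:ℝ) * ((N:ℝ) + a j) ^ (1/(p:ℝ)) +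
      ∑ j, (P i j:ℝ) * ((v j : ℝ) - lam * ((N:ℝ) + a j) ^ (1/(p:ℝ))) := by
    rw [Finset.mul_sum, ← Finset.sum_add_distrib]
    refine Finset.sum_congr rfl fun j _ => ?_
    ring
  have b2 : |∑ j, (P i j:ℝ) * ((v j : ℝ) - lam * ((N:ℝ) + a j) ^ (1/(p:ℝ)))| ≤ J * (κ^k * (N:ℝ)^k * η) := by
    refine (Finset.abs_sum_le_sum_abs _ _).trans ?_
    have : ∀ j ∈ (Finset.univ : Finset (Fin J)), |(P i j:ℝ) * ((v j : ℝ) - lam * ((N:ℝ) + a j) ^ (1/(p:ℝ)))| ≤ κ^k * (N:ℝ)^k * η := by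
      intro j _
      rw [abs_mul]
      exact mul_le_mul (h1 i j) (hη j) (abs_nonneg _) (by positivity)
    refine (Finset.sum_le_sum this).trans ?_
    rw [Finset.sum_const, Finset.card_univ, Fintype.card_fin, nsmul_eq_mul]
  have b1 := mul_le_mul_of_nonneg_left (h2 i) hlam
  calc (1:ℝ) ≤ |∑ j, (P i j:ℝ) * v j| := h1'
    _ ≤ lam * |∑ j, (P i j:ℝ) * ((N:ℝ) + a j) ^ (1/(p:ℝ))| + |∑ j, (P i j:ℝ) * ((v j : ℝ) - lam * ((N:ℝ) + a j) ^ (1/(p:ℝ)))| := by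
        rw [e]; refine (abs_add_le _ _).trans ?_
        rw [abs_mul, abs_of_nonneg hlam]
    _ ≤ lam * (κ^k * (N:ℝ)^(1/(p:ℝ) - (J-1:ℝ)*k)) + J * (κ^k * (N:ℝ)^k * η) := add_le_add b1 b2
    _ = κ^k * (lam * (N:ℝ)^(1/(p:ℝ) - (J-1:ℝ)*k) + J * (N:ℝ)^k * η) := by ring
    _ ≤ _ := by gcongr

end Pade
end

set_option linter.all false

namespace HT
open HahnSeries

variable {k : Type} [Field k] {Δ Γ : Type} [AddCommGroup Δ] [LinearOrder Δ] [IsOrderedAddMonoid Δ]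
  [AddCommGroup Γ] [LinearOrder Γ] [IsOrderedAddMonoid Γ]

noncomputable def proj (ι : Δ →+ Γ) (hle : ∀ g g', ι g ≤ ι g' ↔ g ≤ g') (x : Γ)
    (f : HahnSeries Γ k) : HahnSeries Δ k where
  coeff d := f.coeff (ι d + x)
  isPWO_support' := by
    intro u
    obtain ⟨m, n, h, h'⟩ := f.isPWO_support (fun n => ⟨ι (u n) + x, (u n).2⟩)
    refine ⟨m, n, h, ?_⟩
    have : ι (u m).1 + x ≤ ι (u n).1 + x := h'
    have := (add_le_add_iff_right x).1 this
    exact (hle _ _).1 this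

theorem main (ι : Δ →+ Γ) (hinj : Function.Injective ι) (hle : ∀ g g', ι g ≤ ι g' ↔ g ≤ g')
    (C : Type) [Fintype C] (g : C → Γ)
    (hg : Function.Bijective (fun p : Δ × C => ι p.1 + g p.2)) :
    letI := (embDomainRingHom ι hinj hle : HahnSeries Δ k →+* HahnSeries Γ k).toAlgebra
    FiniteDimensional (HahnSeries Δ k) (HahnSeries Γ k) ∧
    Module.finrank (HahnSeries Δ k) (HahnSeries Γ k) = Fintype.card C ∧
    ∀ f d, (Algebra.trace (HahnSeries Δ k) (HahnSeries Γ k) f).coeff d =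
      (Fintype.card C : k) * f.coeff (ι d) := by
  classical
  letI := (embDomainRingHom ι hinj hle : HahnSeries Δ k →+* HahnSeries Γ k).toAlgebra
  have halg : ∀ l : HahnSeries Δ k, algebraMap _ (HahnSeries Γ k) l = embDomain ⟨⟨ι, hinj⟩, hle _ _⟩ l := fun l => rfl
  let Φ : (C → HahnSeries Δ k) →ₗ[HahnSeries Δ k] HahnSeries Γ k :=
    { toFun := fun l => ∑ c, l c • (single (g c) (1:k) : HahnSeries Γ k)
      map_add' := by intro x y; simp [add_smul, Finset.sum_add_distrib]
      map_smul' := by intro a x; simp [Finset.smul_sum, mul_smul] }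
  have key : ∀ (l : C → HahnSeries Δ k) c d, (Φ l).coeff (ι d + g c) = (l c).coeff d := by
    intro l c d
    change (∑ c, l c • (single (g c) (1:k) : HahnSeries Γ k)).coeff _ = _
    rw [HahnSeries.coeff_sum, Finset.sum_eq_single c]
    · rw [Algebra.smul_def, coeff_mul_single_add, mul_one, halg]
      exact embDomain_coeff
    · intro c' _ hc
      rw [Algebra.smul_def, coeff_mul_single, mul_one, halg]
      apply embDomain_of_notMem_range
      rintro ⟨d', hd'⟩
      have hd'' : ι d' = ι d + g c - g c' := hd'
      have := @hg.1 (d', c') (d, c) (by simp [hd''])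
      exact hc (by simpa using congrArg Prod.snd this)
    · simp
  let e : (C → HahnSeries Δ k) ≃ₗ[HahnSeries Δ k] HahnSeries Γ k :=
    { Φ with
      invFun := fun f c => proj ι hle (g c) f
      left_inv := by
        intro l; funext c; ext d
        exact key l c d
      right_inv := by
        intro f; ext γ
        obtain ⟨⟨d, c⟩, rfl⟩ := hg.2 γ
        exact key _ c d }
  let b : Module.Basis C (HahnSeries Δ k) (HahnSeries Γ k) := Module.Basis.ofEquivFun e.symm
  have hb : ∀ c, b c = single (g c) 1 := by
    intro c
    simp only [b, Module.Basis.coe_ofEquivFun]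
    change Φ _ = _
    change ∑ c', (Pi.single c (1: HahnSeries Δ k) : C → HahnSeries Δ k) c' • (single (g c') (1:k) : HahnSeries Γ k) = _
    rw [Finset.sum_eq_single c]
    · simp
    · intro c' _ h; simp [Pi.single_eq_of_ne h]
    · simp
  refine ⟨b.finiteDimensional_of_finite, Module.finrank_eq_card_basis b, ?_⟩
  intro f d
  rw [Algebra.trace_eq_matrix_trace b, Matrix.trace, HahnSeries.coeff_sum]
  have : ∀ c ∈ Finset.univ, (Matrix.diag (Algebra.leftMulMatrix b f) c).coeff d = f.coeff (ι d) := by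
    intro c _
    rw [Matrix.diag, Algebra.leftMulMatrix_eq_repr_mul, hb]
    change (proj ι hle (g c) (f * single (g c) 1)).coeff d = _
    change (f * single (g c) 1).coeff (ι d + g c) = _
    rw [coeff_mul_single_add, mul_one]
  rw [Finset.sum_congr rfl this]
  simp
end HT

set_option linter.all false

namespace HT
open HahnSeries

section
variable {k : Type} [Field k] {G : Type} [AddCommGroup G] [LinearOrder G] [IsOrderedAddMonoid G]

theorem coeff_mul_low (x y : HahnSeries G k) (a b : G) (hx : (a : WithTop G) ≤ x.orderTop)
    (hy : (b : WithTop G) ≤ y.orderTop) :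
    ((a + b : G) : WithTop G) ≤ (x * y).orderTop ∧ (x * y).coeff (a + b) = x.coeff a * y.coeff b := by
  have h0 : ((a + b : G) : WithTop G) ≤ x.orderTop + y.orderTop := by
    rw [WithTop.coe_add]; exact add_le_add hx hy
  refine ⟨h0.trans orderTop_add_le_mul, ?_⟩
  rcases eq_or_lt_of_le hx with hx' | hx'
  · rcases eq_or_lt_of_le hy with hy' | hy'
    · have hxo : x ≠ 0 := by rintro rfl; simp at hx'
      have hyo : y ≠ 0 := by rintro rfl; simp at hy'
      have h1 : x.order = a := by
        have := order_eq_orderTop_of_ne_zero hxo; rw [← hx'] at this; exact_mod_cast this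
      have h2 : y.order = b := by
        have := order_eq_orderTop_of_ne_zero hyo; rw [← hy'] at this; exact_mod_cast this
      rw [← h1, ← h2, coeff_mul_order_add_order, leadingCoeff_eq, leadingCoeff_eq]
    · rw [coeff_eq_zero_of_lt_orderTop hy', mul_zero]
      apply coeff_eq_zero_of_lt_orderTop
      refine lt_of_lt_of_le ?_ orderTop_add_le_mul
      rw [WithTop.coe_add, ← hx']
      exact WithTop.add_lt_add_left (by simp) hy'
  · rw [coeff_eq_zero_of_lt_orderTop hx', zero_mul]
    apply coeff_eq_zero_of_lt_orderTop
    refine lt_of_lt_of_le ?_ orderTop_add_le_mul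
    rw [WithTop.coe_add]
    exact WithTop.add_lt_add_of_lt_of_le (by simp) hx' hy

theorem lowest [CharZero k] (Δ : AddSubgroup G) (Γ : Fin 3 → AddSubgroup G) (w : Fin 3 → ℕ) (hw : ∀ i, w i ≠ 0)
    (h3 : ∀ i, ∀ x ∈ Γ i, x + x + x ∈ Δ) (hint : ∀ i j, i ≠ j → ∀ x, x ∈ Γ i → x ∈ Γ j → x ∈ Δ)
    (hns : ∀ c : Fin 3 → k, ∑ i, (w i : k) * c i = 0 → ∑ i, (w i : k) * c i ^ 3 = 0 → c = 0)
    (D : Fin 3 → HahnSeries G k) (hD : ∀ i x, (D i).coeff x ≠ 0 → x ∈ Γ i)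
    (h1 : ∀ d ∈ Δ, ∑ i, (w i : k) * (D i).coeff d = 0)
    (h2 : ∀ d ∈ Δ, ∑ i, (w i : k) * ((D i) ^ 3).coeff d = 0) : D = 0 := by
  by_contra hne
  obtain ⟨i0, hi0⟩ := Finite.exists_min (fun i => (D i).orderTop)
  have hDi : D i0 ≠ 0 := by
    intro h
    apply hne
    funext i
    have := hi0 i
    rw [h, orderTop_zero, top_le_iff] at this
    simpa using this
  set γ := (D i0).order with hγ
  have hγ' : (γ : WithTop G) = (D i0).orderTop := order_eq_orderTop_of_ne_zero hDi
  have hγc : (D i0).coeff γ ≠ 0 := coeff_order_eq_zero.not.2 hDi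
  have hγΓ : γ ∈ Γ i0 := hD _ _ hγc
  have hle : ∀ i, (γ : WithTop G) ≤ (D i).orderTop := fun i => hγ' ▸ hi0 i
  have hc : ∀ i, ((D i)^3).coeff (γ + γ + γ) = (D i).coeff γ ^ 3 := by
    intro i
    have a1 := coeff_mul_low _ _ γ γ (hle i) (hle i)
    have a2 := coeff_mul_low _ _ (γ + γ) γ a1.1 (hle i)
    rw [pow_three', a2.2, a1.2]; ring
  have e3 := h2 _ (h3 i0 γ hγΓ)
  simp only [hc] at e3
  by_cases hΔ : γ ∈ Δ
  · have := hns (fun i => (D i).coeff γ) (h1 γ hΔ) e3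
    exact hγc (congrFun this i0)
  · rw [Finset.sum_eq_single i0] at e3
    · simp [hw, hγc] at e3
    · intro j _ hj
      have : (D j).coeff γ = 0 := by
        by_contra h
        exact hΔ (hint j i0 hj γ (hD _ _ h) hγΓ)
      simp [this]
    · simp
end

theorem three (k : Type) [Field k] [CharZero k] (m : ℕ) (β : Fin m → Fin 3) (n : Fin 3 → ℕ)
    (hn : ∀ i, Fintype.card {j // β j = i} = n i)
    (hns : ∀ c : Fin 3 → k, ∑ i, ((3 ^ n i : ℕ) : k) * c i = 0 → ∑ i, ((3 ^ n i : ℕ) : k) * c i ^ 3 = 0 → c = 0) :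
    ∃ (L : Type) (E : Fin 3 → Type) (_ : Field L) (_ : ∀ i, Field (E i)) (_ : Algebra k L)
      (_ : ∀ i, Algebra L (E i)), (∀ i, FiniteDimensional L (E i)) ∧ (∀ i, Module.finrank L (E i) = 3 ^ n i) ∧
      ∀ δ : (∀ i, E i), ∑ i, Algebra.trace L (E i) (δ i) = 0 → ∑ i, Algebra.trace L (E i) (δ i ^ 3) = 0 → δ = 0 := by
  classical
  let G := Lex (Fin m → ℤ)
  let Δ : AddSubgroup G :=
    { carrier := {x | ∀ j, (3:ℤ) ∣ ofLex x j}
      zero_mem' := by intro j; exact dvd_zero _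
      add_mem' := by intro a b ha hb j; exact dvd_add (ha j) (hb j)
      neg_mem' := by intro a ha j; exact (ha j).neg_right }
  let Γ : Fin 3 → AddSubgroup G := fun i =>
    { carrier := {x | ∀ j, β j ≠ i → (3:ℤ) ∣ ofLex x j}
      zero_mem' := by intro j _; exact dvd_zero _
      add_mem' := by intro a b ha hb j h; exact dvd_add (ha j h) (hb j h)
      neg_mem' := by intro a ha j h; exact (ha j h).neg_right }
  have hΔΓ : ∀ i, Δ ≤ Γ i := fun i x hx j _ => hx j
  let ι : ∀ i, Δ →+ Γ i := fun i => AddSubgroup.inclusion (hΔΓ i)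
  have hinj : ∀ i, Function.Injective (ι i) := fun i => AddSubgroup.inclusion_injective _
  have hle : ∀ i g g', ι i g ≤ ι i g' ↔ g ≤ g' := fun i g g' => Iff.rfl
  let C : Fin 3 → Type := fun i => {j // β j = i} → ZMod 3
  let g : ∀ i, C i → Γ i := fun i c => ⟨toLex (fun j => if h : β j = i then ((c ⟨j, h⟩).val : ℤ) else 0), by
    intro j hj
    simp [hj]⟩
  have hg : ∀ i, Function.Bijective (fun p : Δ × C i => ι i p.1 + g i p.2) := by
    intro i
    constructor
    · rintro ⟨d, c⟩ ⟨d', c'⟩ h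
      have h' : ∀ j, ofLex d.1 j + (if h : β j = i then ((c ⟨j, h⟩).val : ℤ) else 0) =
          ofLex d'.1 j + (if h : β j = i then ((c' ⟨j, h⟩).val : ℤ) else 0) := fun j =>
        congrFun (congrArg (fun z : Γ i => ofLex z.1) h) j
      have hc : c = c' := by
        funext ⟨j, hj⟩
        have h1 := h' j
        simp only [hj, dite_true] at h1
        have h2 := congrArg (Int.cast : ℤ → ZMod 3) h1
        have z1 : ((ofLex d.1 j : ℤ) : ZMod 3) = 0 := (ZMod.intCast_zmod_eq_zero_iff_dvd _ 3).2 (d.2 j)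
        have z2 : ((ofLex d'.1 j : ℤ) : ZMod 3) = 0 := (ZMod.intCast_zmod_eq_zero_iff_dvd _ 3).2 (d'.2 j)
        push_cast at h2
        rw [z1, z2] at h2
        simpa using h2
      subst hc
      have hd : d = d' := by
        apply Subtype.ext
        apply ofLex.injective
        funext j
        exact add_right_cancel (h' j)
      rw [hd]
    · intro x
      let c : C i := fun j => ((ofLex x.1 j.1 : ℤ) : ZMod 3)
      refine ⟨(⟨x.1 - (g i c).1, ?_⟩, c), ?_⟩
      · intro j
        change (3:ℤ) ∣ ofLex x.1 j - (if h : β j = i then ((c ⟨j, h⟩).val : ℤ) else 0)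
        by_cases hj : β j = i
        · simp only [hj, dite_true]
          apply (ZMod.intCast_zmod_eq_zero_iff_dvd _ 3).1
          push_cast
          simp [c]
        · simp only [hj, dite_false, sub_zero]
          exact x.2 j hj
      · apply Subtype.ext
        change x.1 - (g i c).1 + (g i c).1 = x.1
        abel
  letI alg : ∀ i, Algebra (HahnSeries Δ k) (HahnSeries (Γ i) k) := fun i =>
    (embDomainRingHom (ι i) (hinj i) (hle i) : HahnSeries Δ k →+* HahnSeries (Γ i) k).toAlgebra
  have hmain := fun i => main (k := k) (ι i) (hinj i) (hle i) (C i) (g i) (hg i)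
  have hcard : ∀ i, Fintype.card (C i) = 3 ^ n i := by
    intro i
    simp only [C, Fintype.card_fun, hn, ZMod.card]
  refine ⟨HahnSeries Δ k, fun i => HahnSeries (Γ i) k, inferInstance, inferInstance,
    (HahnSeries.C : k →+* HahnSeries Δ k).toAlgebra, alg,
    fun i => (hmain i).1, fun i => (hmain i).2.1.trans (hcard i), ?_⟩
  intro δ ht1 ht2
  let emb : ∀ i, HahnSeries (Γ i) k →+* HahnSeries G k := fun i =>
    embDomainRingHom (Γ i).subtype Subtype.val_injective (fun _ _ => Iff.rfl)
  have hemb : ∀ i x (z : Γ i), (emb i x).coeff z.1 = x.coeff z := by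
    intro i x z
    exact embDomain_coeff (f := ⟨⟨(Γ i).subtype, Subtype.val_injective⟩, Iff.rfl⟩)
  have hemb0 : ∀ i x (z : G), z ∉ Γ i → (emb i x).coeff z = 0 := by
    intro i x z hz
    apply embDomain_of_notMem_range (f := ⟨⟨(Γ i).subtype, Subtype.val_injective⟩, Iff.rfl⟩)
    rintro ⟨y, hy⟩
    exact hz (hy ▸ y.2)
  have tr : ∀ i x (d : G) (hd : d ∈ Δ), (Algebra.trace (HahnSeries Δ k) (HahnSeries (Γ i) k) x).coeff ⟨d, hd⟩ =
      ((3 ^ n i : ℕ) : k) * (emb i x).coeff d := by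
    intro i x d hd
    rw [← hcard, (hmain i).2.2 x ⟨d, hd⟩]
    congr 1
    exact (hemb i x ⟨d, hΔΓ i hd⟩).symm
  have := lowest Δ Γ (fun i => 3 ^ n i) (by simp) ?_ ?_ hns (fun i => emb i (δ i)) ?_ ?_ ?_
  · funext i
    have h := congrFun this i
    exact (map_eq_zero (emb i)).1 h
  · intro i x hx j
    change (3:ℤ) ∣ ofLex x j + ofLex x j + ofLex x j
    exact ⟨ofLex x j, by ring⟩
  · intro i i' hii x hx hx' j
    by_cases h : β j = i
    · exact hx' j (by rw [h]; exact hii)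
    · exact hx j h
  · intro i x hx
    by_contra h
    exact hx (hemb0 i _ _ h)
  · intro d hd
    have := congrArg (fun z : HahnSeries Δ k => z.coeff ⟨d, hd⟩) ht1
    simp only [HahnSeries.coeff_sum, HahnSeries.coeff_zero] at this
    rw [← this]
    exact Finset.sum_congr rfl fun i _ => (tr i _ d hd).symm
  · intro d hd
    have := congrArg (fun z : HahnSeries Δ k => z.coeff ⟨d, hd⟩) ht2
    simp only [HahnSeries.coeff_sum, HahnSeries.coeff_zero] at this
    rw [← this]
    refine Finset.sum_congr rfl fun i _ => ?_
    rw [tr i _ d hd, map_pow]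

theorem three' (k : Type) [Field k] [CharZero k] (n : Fin 3 → ℕ)
    (hns : ∀ c : Fin 3 → k, ∑ i, ((3 ^ n i : ℕ) : k) * c i = 0 → ∑ i, ((3 ^ n i : ℕ) : k) * c i ^ 3 = 0 → c = 0) :
    ∃ (L : Type) (E : Fin 3 → Type) (_ : Field L) (_ : ∀ i, Field (E i)) (_ : Algebra k L)
      (_ : ∀ i, Algebra L (E i)), (∀ i, FiniteDimensional L (E i)) ∧ (∀ i, Module.finrank L (E i) = 3 ^ n i) ∧
      ∀ δ : (∀ i, E i), ∑ i, Algebra.trace L (E i) (δ i) = 0 → ∑ i, Algebra.trace L (E i) (δ i ^ 3) = 0 → δ = 0 := by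
  classical
  let e := Fintype.equivFin (Σ i : Fin 3, Fin (n i))
  refine three k _ (fun j => (e.symm j).1) n ?_ hns
  intro i
  rw [← Fintype.card_fin (n i)]
  apply Fintype.card_congr
  refine Equiv.trans ?_ (Equiv.sigmaSubtype (β := fun i => Fin (n i)) i)
  exact Equiv.subtypeEquiv e.symm (fun _ => Iff.rfl)
end HT

set_option linter.all false

namespace Deform
open Polynomial

noncomputable def ptr {R : Type} [CommRing R] (g a : R[X]) : R :=
  ∑ j ∈ Finset.range g.natDegree, ((a * X ^ j) %ₘ g).coeff j

theorem ptr_map {R S : Type} [CommRing R] [CommRing S] [Nontrivial S] (f : R →+* S) (g a : R[X]) (hg : g.Monic) :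
    ptr (g.map f) (a.map f) = f (ptr g a) := by
  unfold ptr
  rw [hg.natDegree_map, map_sum]
  refine Finset.sum_congr rfl fun j _ => ?_
  rw [← Polynomial.coeff_map, map_modByMonic f hg]
  simp

theorem ptr_C_mul {R : Type} [CommRing R] (g a : R[X]) (r : R) : ptr g (C r * a) = r * ptr g a := by
  unfold ptr
  rw [Finset.mul_sum]
  refine Finset.sum_congr rfl fun j _ => ?_
  rw [mul_assoc, ← smul_eq_C_mul, smul_modByMonic, coeff_smul, smul_eq_mul]

theorem ptr_trace {R : Type} [CommRing R] (g a : R[X]) (hg : g.Monic) :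
    Algebra.trace R (AdjoinRoot g) (AdjoinRoot.mk g a) = ptr g a := by
  classical
  rw [Algebra.trace_eq_matrix_trace (AdjoinRoot.powerBasis' hg).basis, Matrix.trace]
  unfold ptr
  rw [← Fin.sum_univ_eq_sum_range (fun j => ((a * X ^ j) %ₘ g).coeff j)]
  refine Finset.sum_congr rfl fun j _ => ?_
  rw [Matrix.diag, Algebra.leftMulMatrix_eq_repr_mul, PowerBasis.basis_eq_pow]
  refine (AdjoinRoot.powerBasisAux'_repr_apply_to_fun hg _ _).trans ?_
  rw [AdjoinRoot.powerBasis'_gen]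
  rw [← AdjoinRoot.mk_X, ← map_pow, ← map_mul, AdjoinRoot.modByMonicHom_mk]

theorem trace_pi {R : Type} [Field R] {ι : Type} [Fintype ι] [DecidableEq ι] (E : ι → Type) [∀ i, Field (E i)]
    [∀ i, Algebra R (E i)] [∀ i, FiniteDimensional R (E i)] (x : ∀ i, E i) :
    Algebra.trace R (∀ i, E i) x = ∑ i, Algebra.trace R (E i) (x i) := by
  classical
  let b := fun i => Module.finBasis R (E i)
  rw [Algebra.trace_eq_matrix_trace (Pi.basis b), Matrix.trace, Fintype.sum_sigma]
  refine Finset.sum_congr rfl fun i _ => ?_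
  rw [Algebra.trace_eq_matrix_trace (b i), Matrix.trace]
  refine Finset.sum_congr rfl fun j _ => ?_
  rw [Matrix.diag, Matrix.diag, Algebra.leftMulMatrix_eq_repr_mul, Algebra.leftMulMatrix_eq_repr_mul,
    Pi.basis_repr, Pi.basis_apply]
  simp

theorem step1 (L : Type) [Field L] [CharZero L] (h : L[X]) (hm : h.Monic) (h0 : h.coeff 0 ≠ 0)
    (hd : 0 < h.natDegree)
    (hns : ∀ a : L[X], ptr h a = 0 → ptr h (a ^ 3) = 0 → h ∣ a) :
    ∃ (F E : Type) (_ : Field F) (_ : Field E) (_ : Algebra L F) (_ : Algebra F E),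
          Module.finrank F E = h.natDegree ∧
          ∀ δ : E, δ ≠ 0 →
            ¬ (Algebra.trace F E δ = 0 ∧ Algebra.trace F E (δ ^ 3) = 0) := by
  classical
  set n := h.natDegree with hn
  let g : L[X][X] := h.map C + C X * (X ^ n - h.map C)
  have hCm : (h.map (C : L →+* L[X])).Monic := hm.map _
  have hCn : (h.map (C : L →+* L[X])).natDegree = n := hm.natDegree_map _
  have hCd : (h.map (C : L →+* L[X])).degree = n := by
    rw [degree_eq_natDegree hCm.ne_zero, hCn]
  have hdeg1 : (X ^ n - h.map (C : L →+* L[X])).degree < (n : WithBot ℕ) := by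
    have := degree_sub_lt (p := (X ^ n : L[X][X])) (q := h.map (C : L →+* L[X])) (by rw [degree_X_pow, hCd])
      (pow_ne_zero _ X_ne_zero) (by rw [hCm.leadingCoeff]; simp)
    rwa [degree_X_pow] at this
  have hdeg2 : (C X * (X ^ n - h.map (C : L →+* L[X]))).degree < (h.map (C : L →+* L[X])).degree := by
    rw [hCd, degree_C_mul X_ne_zero]; exact hdeg1
  have hgm : g.Monic := hCm.add_of_left hdeg2
  have hgn : g.natDegree = n := by
    have : g.degree = n := by rw [degree_add_eq_left_of_degree_lt hdeg2, hCd]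
    exact natDegree_eq_of_degree_eq_some this
  have hg0 : g.map (evalRingHom 0) = h := by
    simp only [g, Polynomial.map_add, Polynomial.map_mul, Polynomial.map_map, map_C]
    have : (evalRingHom (0:L)).comp C = RingHom.id L := by ext; simp
    rw [this]; simp
  have hco : ∀ j, j < n → g.coeff j = (1 - X) * C (h.coeff j) := by
    intro j hj
    simp only [g, coeff_add, coeff_C_mul, coeff_sub, coeff_X_pow, coeff_map, if_neg hj.ne]
    ring
  have heis : g.IsEisensteinAt (Ideal.span {X - C (1:L)}) := by
    refine ⟨?_, ?_, ?_⟩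
    · rw [hgm.leadingCoeff, Ideal.mem_span_singleton]
      intro hu
      exact (not_isUnit_X_sub_C (1:L)) (isUnit_of_dvd_one hu)
    · intro j hj
      rw [hco j (hgn ▸ hj), Ideal.mem_span_singleton]
      exact ⟨-C (h.coeff j), by simp; ring⟩
    · rw [hco 0 hd, Ideal.span_singleton_pow, Ideal.mem_span_singleton]
      intro hu
      have e : (1 - X) * C (h.coeff 0) = -(C (h.coeff 0) * (X - C (1:L))) := by simp; ring
      have hne : (1 - X) * C (h.coeff 0) ≠ 0 := by
        rw [e, neg_ne_zero]; exact mul_ne_zero (C_ne_zero.2 h0) (X_sub_C_ne_zero 1)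
      have := natDegree_le_of_dvd hu hne
      rw [e, natDegree_neg, natDegree_C_mul h0, natDegree_pow, natDegree_X_sub_C] at this
      omega
  have hirr : Irreducible g := heis.irreducible
    ((Ideal.span_singleton_prime (X_sub_C_ne_zero 1)).2 (prime_X_sub_C 1)) hgm.isPrimitive (by omega)
  let F := FractionRing L[X]
  have hirrF : Irreducible (g.map (algebraMap L[X] F)) :=
    hgm.irreducible_iff_irreducible_map_fraction_map.1 hirr
  haveI : Fact (Irreducible (g.map (algebraMap L[X] F))) := ⟨hirrF⟩
  set gF := g.map (algebraMap L[X] F) with hgF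
  have hgFm : gF.Monic := hgm.map _
  have hgFn : gF.natDegree = n := by rw [hgF, hgm.natDegree_map, hgn]
  refine ⟨F, AdjoinRoot gF, inferInstance, inferInstance, inferInstance, inferInstance, ?_, ?_⟩
  · rw [(AdjoinRoot.powerBasis' hgFm).finrank, AdjoinRoot.powerBasis'_dim, hgFn]
  rintro δ hδ ⟨t1, t3⟩
  obtain ⟨a0, rfl⟩ := AdjoinRoot.mk_surjective δ
  set a := a0 %ₘ gF with ha
  have hmk : AdjoinRoot.mk gF a0 = AdjoinRoot.mk gF a := by
    rw [AdjoinRoot.mk_eq_mk, ha, modByMonic_eq_sub_mul_div a0 gF]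
    simp
  rw [hmk] at hδ t1 t3
  have ha0 : a ≠ 0 := by rintro h; rw [h] at hδ; simp at hδ
  have had : a.natDegree < n := by
    have := natDegree_modByMonic_lt a0 hgFm (by rintro h1; rw [h1] at hgFn; simp at hgFn; omega)
    rwa [hgFn] at this
  rw [← map_pow, ptr_trace _ _ hgFm] at t3
  rw [ptr_trace _ _ hgFm] at t1
  obtain ⟨b, hb, hb'⟩ := IsLocalization.integerNormalization_spec (nonZeroDivisors L[X]) a
  set a' := IsLocalization.integerNormalization (nonZeroDivisors L[X]) a with ha'
  have hb0 : algebraMap L[X] F b ≠ 0 := by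
    simpa using nonZeroDivisors.ne_zero hb
  have hb'' : a'.map (algebraMap L[X] F) = C (algebraMap L[X] F b) * a := by
    rw [hb', ← smul_eq_C_mul, algebraMap_smul]
  have hinj : Function.Injective (algebraMap L[X] F) := IsFractionRing.injective _ _
  have q1 : ptr g a' = 0 := by
    apply hinj
    rw [← ptr_map _ _ _ hgm, hb'', ptr_C_mul, t1]; simp
  have q3 : ptr g (a' ^ 3) = 0 := by
    apply hinj
    rw [← ptr_map _ _ _ hgm, Polynomial.map_pow, hb'', mul_pow, ← C_pow, ptr_C_mul, t3]; simp
  have ha'0 : a' ≠ 0 := by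
    intro h1
    rw [h1, Polynomial.map_zero] at hb''
    exact mul_ne_zero (C_ne_zero.2 hb0) ha0 hb''.symm
  have ha'd : a'.natDegree < n := by
    rw [← natDegree_map_eq_of_injective hinj, hb'', natDegree_C_mul hb0]; exact had
  have hnu : ¬ IsUnit (C X : L[X][X]) := by
    rw [isUnit_C]; exact not_isUnit_X
  obtain ⟨c, hc, hc'⟩ := (FiniteMultiplicity.of_not_isUnit hnu ha'0).exists_eq_pow_mul_and_not_dvd
  rw [← C_pow] at hc
  set s := (X ^ multiplicity (C X) a' : L[X]) with hs
  have hs0 : s ≠ 0 := pow_ne_zero _ X_ne_zero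
  have r1 : ptr g c = 0 := by
    rw [hc, ptr_C_mul] at q1
    exact (mul_eq_zero.1 q1).resolve_left hs0
  have r3 : ptr g (c ^ 3) = 0 := by
    rw [hc, mul_pow, ← C_pow, ptr_C_mul] at q3
    exact (mul_eq_zero.1 q3).resolve_left (pow_ne_zero _ hs0)
  have hcd : c.natDegree < n := by
    rw [hc, natDegree_C_mul hs0] at ha'd; exact ha'd
  have hc0 : c.map (evalRingHom 0) ≠ 0 := by
    intro h1
    apply hc'
    rw [C_dvd_iff_dvd_coeff]
    intro i
    have := congrArg (fun p => coeff p i) h1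
    simp only [coeff_map, coeff_zero, coe_evalRingHom] at this
    rw [X_dvd_iff, coeff_zero_eq_eval_zero, this]
  have hdiv := hns (c.map (evalRingHom 0)) (by rw [← hg0, ptr_map _ _ _ hgm, r1, map_zero])
    (by rw [← hg0, ← Polynomial.map_pow, ptr_map _ _ _ hgm, r3, map_zero])
  have := natDegree_le_of_dvd hdiv hc0
  have h5 : (c.map (evalRingHom (0:L))).natDegree ≤ c.natDegree := natDegree_map_le
  omega

theorem prim (L E : Type) [Field L] [CharZero L] [Field E] [Algebra L E] [FiniteDimensional L E] :
    ∃ θ : E, θ ≠ 0 ∧ (minpoly L θ).natDegree = Module.finrank L E := by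
  obtain ⟨θ, hθ⟩ := Field.exists_primitive_element L E
  have key : ∀ θ : E, IntermediateField.adjoin L {θ} = ⊤ → (minpoly L θ).natDegree = Module.finrank L E := by
    intro θ h
    rw [← IntermediateField.adjoin.finrank (Algebra.IsIntegral.isIntegral θ), h, IntermediateField.finrank_top']
  by_cases h0 : θ = 0
  · refine ⟨1, one_ne_zero, key 1 ?_⟩
    rw [← hθ, h0]; simp
  · exact ⟨θ, h0, key θ hθ⟩

theorem deform (L : Type) [Field L] [CharZero L] (E : Fin 3 → Type) [∀ i, Field (E i)]
    [∀ i, Algebra L (E i)] [∀ i, FiniteDimensional L (E i)]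
    (hd : Function.Injective (fun i => Module.finrank L (E i)))
    (hns : ∀ δ : (∀ i, E i), ∑ i, Algebra.trace L (E i) (δ i) = 0 → ∑ i, Algebra.trace L (E i) (δ i ^ 3) = 0 → δ = 0) :
    ∃ (F E' : Type) (_ : Field F) (_ : Field E') (_ : Algebra L F) (_ : Algebra F E'),
          Module.finrank F E' = ∑ i, Module.finrank L (E i) ∧
          ∀ δ : E', δ ≠ 0 →
            ¬ (Algebra.trace F E' δ = 0 ∧ Algebra.trace F E' (δ ^ 3) = 0) := by
  classical
  choose θ hθ0 hθd using fun i => prim L (E i)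
  have hint : ∀ i, IsIntegral L (θ i) := fun i => Algebra.IsIntegral.isIntegral _
  let p : Fin 3 → L[X] := fun i => minpoly L (θ i)
  have hpm : ∀ i, (p i).Monic := fun i => minpoly.monic (hint i)
  have hpi : ∀ i, Irreducible (p i) := fun i => minpoly.irreducible (hint i)
  let h : L[X] := ∏ i, p i
  have hm : h.Monic := monic_prod_of_monic _ _ fun i _ => hpm i
  have hn : h.natDegree = ∑ i, Module.finrank L (E i) := by
    rw [natDegree_prod_of_monic _ _ fun i _ => hpm i]
    exact Finset.sum_congr rfl fun i _ => hθd i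
  have h0 : h.coeff 0 ≠ 0 := by
    rw [coeff_zero_prod, Finset.prod_ne_zero_iff]
    intro i _
    exact minpoly.coeff_zero_ne_zero (hint i) (hθ0 i)
  have hcop : Pairwise (Function.onFun IsCoprime p) := by
    intro i j hij
    refine (hpi i).coprime_iff_not_dvd.2 fun hdvd => hij (hd ?_)
    have := (hpi i).associated_of_dvd (hpi j) hdvd
    have := eq_of_monic_of_associated (hpm i) (hpm j) this
    change Module.finrank L (E i) = Module.finrank L (E j)
    rw [← hθd i, ← hθd j]
    exact congrArg natDegree this
  have hev : ∀ (a : L[X]) i, (aeval θ a : ∀ i, E i) i = aeval (θ i) a := by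
    intro a i
    exact (Polynomial.aeval_algHom_apply (Pi.evalAlgHom L E i) θ a).symm
  have hker : ∀ a : L[X], (aeval θ a : ∀ i, E i) = 0 → h ∣ a := by
    intro a ha
    refine Fintype.prod_dvd_of_coprime hcop fun i => minpoly.dvd _ _ ?_
    rw [← hev, ha]; rfl
  have hz : aeval θ h = (0 : ∀ i, E i) := by
    funext i
    rw [hev, map_prod, Pi.zero_apply]
    exact Finset.prod_eq_zero (Finset.mem_univ i) (minpoly.aeval L (θ i))
  let ψ : AdjoinRoot h →ₐ[L] (∀ i, E i) := AdjoinRoot.liftAlgHom h (Algebra.ofId L _) θ hz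
  have hψ : ∀ a, ψ (AdjoinRoot.mk h a) = aeval θ a := fun a => AdjoinRoot.liftAlgHom_mk _ _ _ _ _
  have hψi : Function.Injective ψ := by
    rw [injective_iff_map_eq_zero]
    intro x hx
    obtain ⟨a, rfl⟩ := AdjoinRoot.mk_surjective x
    rw [hψ] at hx
    exact AdjoinRoot.mk_eq_zero.2 (hker a hx)
  haveI : FiniteDimensional L (AdjoinRoot h) := (AdjoinRoot.powerBasis' hm).finite
  have hfr : Module.finrank L (AdjoinRoot h) = Module.finrank L (∀ i, E i) := by
    rw [(AdjoinRoot.powerBasis' hm).finrank, AdjoinRoot.powerBasis'_dim, Module.finrank_pi_fintype, hn]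
  have hψs : Function.Surjective ψ :=
    (LinearMap.injective_iff_surjective_of_finrank_eq_finrank hfr (f := ψ.toLinearMap)).1 hψi
  let e := AlgEquiv.ofBijective ψ ⟨hψi, hψs⟩
  have htr : ∀ a : L[X], ptr h a = ∑ i, Algebra.trace L (E i) (aeval (θ i) a) := by
    intro a
    rw [← ptr_trace h a hm, ← Algebra.trace_eq_of_algEquiv e, trace_pi]
    refine Finset.sum_congr rfl fun i _ => ?_
    congr 1
    rw [← hev, ← hψ]; rfl
  rw [← hn]
  have hnpos : 0 < h.natDegree := by
    rw [hn]
    exact Finset.sum_pos (fun i _ => Module.finrank_pos) Finset.univ_nonempty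
  refine step1 L h hm h0 hnpos ?_
  intro a h1 h3
  rw [htr] at h1 h3
  have := hns (fun i => aeval (θ i) a) h1 (by simpa using h3)
  apply hker
  funext i
  rw [hev]; exact congrFun this i

theorem final (k : Type) [Field k] [CharZero k] (n : Fin 3 → ℕ) (hn : Function.Injective n)
    (hns : ∀ c : Fin 3 → k, ∑ i, ((3 ^ n i : ℕ) : k) * c i = 0 → ∑ i, ((3 ^ n i : ℕ) : k) * c i ^ 3 = 0 → c = 0) :
    ∃ (F E : Type) (_ : Field F) (_ : Field E) (_ : Algebra k F) (_ : Algebra F E),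
          Module.finrank F E = ∑ i, 3 ^ n i ∧
          ∀ δ : E, δ ≠ 0 →
            ¬ (Algebra.trace F E δ = 0 ∧ Algebra.trace F E (δ ^ 3) = 0) := by
  obtain ⟨L, E, iL, iE, iA, iLE, hfd, hfr, h⟩ := HT.three' k n hns
  haveI : CharZero L := charZero_of_injective_algebraMap (algebraMap k L).injective
  obtain ⟨F, E', i1, i2, i3, i4, h1, h2⟩ := deform L E (fun i j hij => hn (by
    simp only [hfr] at hij
    exact Nat.pow_right_injective (le_refl 2 |>.trans (by norm_num)) hij)) h
  refine ⟨F, E', i1, i2, ((algebraMap L F).comp (algebraMap k L)).toAlgebra, i4, ?_, h2⟩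
  rw [h1]
  exact Finset.sum_congr rfl fun i _ => hfr i
end Deform

set_option linter.all false

namespace Eis
open QuadraticAlgebra

abbrev Z3 := QuadraticAlgebra ℤ (-1) (-1)

theorem nrm (z : Z3) : norm z = z.re ^ 2 - z.re * z.im + z.im ^ 2 := by
  rw [norm_def]; ring

theorem nrm_pos (z : Z3) (hz : z ≠ 0) : 0 < norm z := by
  rw [nrm]
  by_contra h
  have h1 : z.im = 0 := by nlinarith [sq_nonneg (2 * z.re - z.im), sq_nonneg z.im]
  have h2 : z.re = 0 := by rw [h1] at h; nlinarith [sq_nonneg z.re]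
  exact hz (by ext <;> simp [h1, h2])

instance : IsDomain Z3 := by
  haveI : NoZeroDivisors Z3 := ⟨by
    intro a b hab
    by_contra h
    push Not at h
    have h1 := mul_pos (nrm_pos a h.1) (nrm_pos b h.2)
    rw [← map_mul, hab] at h1
    simp at h1⟩
  exact NoZeroDivisors.to_isDomain _

theorem round_div (u n : ℤ) (hn : 0 < n) : ∃ q r : ℤ, u = n * q + r ∧ 2 * |r| ≤ n := by
  refine ⟨round ((u:ℚ) / n), u - n * round ((u:ℚ)/n), by ring, ?_⟩
  have h := abs_sub_round ((u:ℚ)/n)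
  have hn' : (0:ℚ) < n := by exact_mod_cast hn
  have e : (u:ℚ) - n * round ((u:ℚ)/n) = n * ((u:ℚ)/n - round ((u:ℚ)/n)) := by
    field_simp
  have : 2 * |(u:ℚ) - n * round ((u:ℚ)/n)| ≤ n := by
    rw [e, abs_mul, abs_of_pos hn']; nlinarith
  exact_mod_cast this

theorem div_ex (x y : Z3) (hy : y ≠ 0) : ∃ q : Z3, norm (x - y * q) < norm y := by
  have hn := nrm_pos y hy
  obtain ⟨q1, r1, e1, b1⟩ := round_div (x * star y).re (norm y) hn
  obtain ⟨q2, r2, e2, b2⟩ := round_div (x * star y).im (norm y) hn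
  refine ⟨⟨q1, q2⟩, ?_⟩
  set n := norm y with hnn
  have e : (x - y * ⟨q1, q2⟩) * star y = ⟨r1, r2⟩ := by
    have h0 : y * star y = algebraMap ℤ Z3 n := (algebraMap_norm_eq_mul_star y).symm
    have : (x - y * ⟨q1, q2⟩) * star y = x * star y - algebraMap ℤ Z3 n * ⟨q1, q2⟩ := by
      rw [← h0]; ring
    rw [this]
    ext
    · rw [re_sub, e1]; simp
    · rw [im_sub, e2]; simp
  have h := congrArg (fun z : Z3 => norm z) e
  rw [map_mul, QuadraticAlgebra.norm_star, ← hnn, nrm ⟨r1, r2⟩] at h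
  dsimp only at h
  have hb1 : 4 * r1 ^ 2 ≤ n ^ 2 := by
    rw [← sq_abs r1]; nlinarith [abs_nonneg r1]
  have hb2 : 4 * r2 ^ 2 ≤ n ^ 2 := by
    rw [← sq_abs r2]; nlinarith [abs_nonneg r2]
  by_contra hc
  push Not at hc
  have : n * n ≤ norm (x - y * ⟨q1, q2⟩) * n := by nlinarith
  nlinarith [sq_nonneg (r1 + r2)]

noncomputable instance : EuclideanDomain Z3 :=
  { (inferInstance : CommRing Z3), (inferInstance : Nontrivial Z3) with
    quotient := fun x y => by classical exact if h : y = 0 then 0 else (div_ex x y h).choose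
    remainder := fun x y => by classical exact x - y * (if h : y = 0 then 0 else (div_ex x y h).choose)
    quotient_zero := fun x => by simp
    quotient_mul_add_remainder_eq := fun x y => by ring
    r := fun x y => (norm x).natAbs < (norm y).natAbs
    r_wellFounded := (measure (fun z : Z3 => (norm z).natAbs)).wf
    remainder_lt := fun x y hy => by
      simp only [hy, dite_false]
      have h := (div_ex x y hy).choose_spec
      have h0 : ∀ z : Z3, 0 ≤ norm z := fun z => by
        by_cases hz : z = 0
        · simp [hz]
        · exact (nrm_pos z hz).le
      have := h0 (x - y * (div_ex x y hy).choose)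
      omega
    mul_left_not_lt := fun a b hb => by
      rw [map_mul, Int.natAbs_mul]
      have := nrm_pos b hb
      have h1 : 1 ≤ (norm b).natAbs := by omega
      exact not_lt.2 (Nat.le_mul_of_pos_right _ h1) }

theorem unit_cases (u : Z3) (hu : IsUnit u) : (u = 1 ∨ u = -1) ∨ (u = ⟨0,1⟩ ∨ u = ⟨0,-1⟩) ∨ (u = ⟨1,1⟩ ∨ u = ⟨-1,-1⟩) := by
  have h := isUnit_iff_norm_isUnit.1 hu
  have hp := nrm_pos u hu.ne_zero
  have h1 : norm u = 1 := by
    rcases Int.isUnit_iff.1 h with h | h <;> omega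
  rw [nrm] at h1
  obtain ⟨a, b⟩ := u
  simp only at h1
  have hb : -1 ≤ b ∧ b ≤ 1 := by constructor <;> nlinarith [sq_nonneg (2*a-b), sq_nonneg b]
  have ha : -1 ≤ a ∧ a ≤ 1 := by constructor <;> nlinarith [sq_nonneg (2*b-a), sq_nonneg a]
  obtain ⟨hb1, hb2⟩ := hb
  obtain ⟨ha1, ha2⟩ := ha
  interval_cases a <;> interval_cases b <;> simp_all [QuadraticAlgebra.ext_iff, re_one, im_one]

/-- key cube lemma -/
theorem cube (x s υ : ℤ) (hx : ¬ (3:ℤ) ∣ x) (hs : (3:ℤ) ∣ s) (hc : IsCoprime x s)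
    (h : x ^ 2 - 3 * s * x + 3 * s ^ 2 = υ ^ 3) :
    ∃ p q : ℤ, x - s = p ^ 3 + q ^ 3 - 3 * p * q ^ 2 ∧ s = 3 * p * q * (p - q) ∧
      υ ^ 3 = (p ^ 2 - p * q + q ^ 2) ^ 3 := by
  classical
  let η : Z3 := ⟨x - s, s⟩
  have hprod : η * star η = (υ : Z3) ^ 3 := by
    have : η * star η = algebraMap ℤ Z3 (norm η) := (algebraMap_norm_eq_mul_star η).symm
    rw [this, nrm]
    simp only [η]
    rw [show (x - s) ^ 2 - (x - s) * s + s ^ 2 = υ ^ 3 by rw [← h]; ring]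
    simp
  have hc3 : IsCoprime (3 * s) (υ ^ 3) := by
    rw [← h]
    have h3p : Prime (3:ℤ) := Int.prime_three
    apply IsCoprime.mul_left
    · rw [h3p.coprime_iff_not_dvd]
      intro hd
      have : (3:ℤ) ∣ x ^ 2 := by
        have h5 := dvd_sub hd (Dvd.intro (s^2 - s*x) (rfl : 3 * (s^2 - s*x) = _))
        have e : x ^ 2 - 3 * s * x + 3 * s ^ 2 - 3 * (s ^ 2 - s * x) = x ^ 2 := by ring
        rwa [e] at h5
      exact hx (h3p.dvd_of_dvd_pow this)
    · have : IsCoprime s (x ^ 2) := (hc.symm).pow_right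
      have := this.add_mul_left_right (3 * s - 3 * x)
      rwa [show x ^ 2 + s * (3 * s - 3 * x) = x ^ 2 - 3 * s * x + 3 * s ^ 2 by ring] at this
  have hcop : IsCoprime η (star η) := by
    obtain ⟨a, b, hab⟩ := hc3
    have e1 : ((3 * s : ℤ) : Z3) = -(η - star η) * ⟨1, 2⟩ := by
      ext
      · simp [η]; omega
      · simp [η]; omega
    refine ⟨-(a : Z3) * ⟨1, 2⟩, (a : Z3) * ⟨1,2⟩ + (b : Z3) * η, ?_⟩
    have h1 : (a : Z3) * ((3 * s : ℤ) : Z3) + (b : Z3) * (υ : Z3) ^ 3 = 1 := by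
      have := congrArg (Int.cast : ℤ → Z3) hab
      push_cast at this ⊢
      exact this
    rw [e1, ← hprod] at h1
    rw [← h1]; ring
  obtain ⟨γ, u, hγ⟩ := exists_associated_pow_of_mul_eq_pow' hcop hprod
  -- hγ : γ ^ 3 * u = η
  obtain ⟨p, q⟩ := γ
  have hg3 : (⟨p, q⟩ : Z3) ^ 3 = ⟨p ^ 3 + q ^ 3 - 3 * p * q ^ 2, 3 * p * q * (p - q)⟩ := by
    rw [pow_three]
    ext <;> simp <;> ring
  have hnorm : υ ^ 3 = (p ^ 2 - p * q + q ^ 2) ^ 3 := by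
    have h1 := congrArg (fun z : Z3 => norm z) hγ
    have hu1 : norm (u : Z3) = 1 := by
      have := isUnit_iff_norm_isUnit.1 u.isUnit
      have hp := nrm_pos _ u.ne_zero
      rcases Int.isUnit_iff.1 this with h | h <;> omega
    rw [map_mul, hu1, mul_one, map_pow, nrm, nrm] at h1
    simp only [η] at h1
    rw [h1, ← h]; ring
  rw [hg3] at hγ
  have hre := congrArg QuadraticAlgebra.re hγ
  have him := congrArg QuadraticAlgebra.im hγ
  simp only [re_mul, im_mul, η] at hre him
  rcases unit_cases _ u.isUnit with (h1 | h1) | (h1 | h1) | (h1 | h1)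
  · rw [h1] at hre him
    simp only [re_one, im_one] at hre him
    exact ⟨p, q, by linarith, by linarith, hnorm⟩
  · rw [h1] at hre him
    simp only [re_one, im_one, re_neg, im_neg] at hre him
    refine ⟨-p, -q, by linarith, by linarith, by rw [hnorm]; ring⟩
  all_goals
    exfalso
    rw [h1] at hre him
    simp only at hre him
    apply hx
    generalize hm : p * q * (p - q) = m at *
    generalize hm2 : p * q ^ 2 = m2 at *
    have hm' : 3 * p * q * (p - q) = 3 * m := by rw [← hm]; ring
    have hm2' : 3 * p * q ^ 2 = 3 * m2 := by rw [← hm2]; ring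
    rw [hm', hm2'] at hre him
    generalize p ^ 3 + q ^ 3 = w at *
    omega
end Eis

set_option linter.all false

namespace Eis

structure Sol (e : ℕ) (x y z : ℤ) : Prop where
  cop : IsCoprime x y
  eq : x ^ 3 + y ^ 3 = 3 ^ e * z ^ 3
  nd : ¬ (3:ℤ) ∣ z

theorem p3 : Prime (3:ℤ) := Int.prime_three

theorem first {e : ℕ} {x y z : ℤ} (h : Sol (e + 1) x y z) (he : 1 ≤ e) :
    ∃ τ υ : ℤ, x + y = 3 ^ e * τ ^ 3 ∧ x ^ 2 - x * y + y ^ 2 = 3 * υ ^ 3 ∧ ¬ (3:ℤ) ∣ τ ∧ ¬ (3:ℤ) ∣ x := by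
  have h3 : (3:ℤ) ∣ x + y := by
    have : (3:ℤ) ∣ (x + y) ^ 3 := by
      have e1 : (x + y) ^ 3 = 3 * (3 ^ e * z ^ 3 + x * y * (x + y)) := by
        have := h.eq
        rw [pow_succ] at this
        linear_combination this
      rw [e1]; exact dvd_mul_right _ _
    exact p3.dvd_of_dvd_pow this
  have hx : ¬ (3:ℤ) ∣ x := by
    intro hd
    have hy : (3:ℤ) ∣ y := (dvd_add_right hd).1 h3
    exact p3.not_unit (h.cop.isUnit_of_dvd' hd hy)
  have hy : ¬ (3:ℤ) ∣ y := fun hd => hx ((dvd_add_left hd).1 h3)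
  obtain ⟨s, hs⟩ := h3
  have hQ : x ^ 2 - x * y + y ^ 2 = 3 * (3 * s ^ 2 - x * y) := by
    have : y = 3 * s - x := by linarith
    rw [this]; ring
  set Q := 3 * s ^ 2 - x * y with hQd
  have hQ3 : ¬ (3:ℤ) ∣ Q := by
    intro hd
    have : (3:ℤ) ∣ x * y := by
      have := dvd_sub (Dvd.intro (s^2) (rfl : 3 * s^2 = _)) hd
      rwa [hQd, sub_sub_cancel] at this
    rcases p3.dvd_or_dvd this with h | h
    · exact hx h
    · exact hy h
  have hprod : (x + y) * Q = 3 ^ e * z ^ 3 := by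
    have := h.eq
    have h2 : (x + y) * (3 * Q) = 3 ^ (e+1) * z ^ 3 := by rw [← hQ, ← this]; ring
    rw [pow_succ] at h2
    linarith
  have hcop : IsCoprime ((3:ℤ) ^ e) Q := IsCoprime.pow_left ((p3.coprime_iff_not_dvd).2 hQ3)
  obtain ⟨S, hS⟩ : (3:ℤ) ^ e ∣ x + y := hcop.dvd_of_dvd_mul_right (hprod ▸ dvd_mul_right _ _)
  have hSQ : S * Q = z ^ 3 := by
    have : (3:ℤ) ^ e * (S * Q) = 3 ^ e * z ^ 3 := by rw [← hprod, hS]; ring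
    exact mul_left_cancel₀ (by positivity) this
  have c1 : IsCoprime (x + y) (x * y) := by
    apply IsCoprime.mul_right
    · have := h.cop.symm.add_mul_left_left 1
      simpa [add_comm] using this
    · have := h.cop.add_mul_left_left 1
      simpa using this
  have c2 : IsCoprime S Q := by
    have c3 : IsCoprime S (x * y) := by
      rw [hS] at c1; exact c1.of_mul_left_right
    have hS3 : S ∣ 3 * s ^ 2 * 1 ∨ True := Or.inr trivial
    have hs3 : (3:ℤ) * s = 3 ^ e * S := by linarith
    obtain ⟨e', rfl⟩ : ∃ e', e = e' + 1 := ⟨e - 1, by omega⟩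
    have hs4 : s = 3 ^ e' * S := by
      rw [pow_succ] at hs3; linarith
    have : IsCoprime S (-(x * y)) := c3.neg_right
    have := this.add_mul_left_right (3 * 3 ^ e' * s)
    rwa [show -(x * y) + S * (3 * 3 ^ e' * s) = Q by rw [hQd]; rw [show s^2 = s * s by ring]; nth_rewrite 2 [hs4]; ring] at this
  have hodd : Odd 3 := by decide
  obtain ⟨⟨τ, hτ⟩, ⟨υ, hυ⟩⟩ := Int.eq_pow_of_mul_eq_pow_odd c2 hodd hSQ
  refine ⟨τ, υ, by rw [hS, hτ], by rw [hQ, hυ], ?_, hx⟩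
  intro hd
  apply h.nd
  have : (3:ℤ) ∣ z ^ 3 := by
    rw [← hSQ, hτ]; exact dvd_mul_of_dvd_left (dvd_pow hd (by norm_num)) _
  exact p3.dvd_of_dvd_pow this

theorem split {a b c τ : ℤ} {f : ℕ} (hab : IsCoprime a b) (hac : IsCoprime a c) (hbc : IsCoprime b c)
    (h : a * (b * c) = 3 ^ f * τ ^ 3) (hτ : ¬ (3:ℤ) ∣ τ) (ha : (3:ℤ) ∣ a) :
    ∃ a1 b1 c1 : ℤ, a = 3 ^ f * a1 ^ 3 ∧ b = b1 ^ 3 ∧ c = c1 ^ 3 ∧ ¬ (3:ℤ) ∣ a1 := by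
  have hb : ¬ (3:ℤ) ∣ b := fun hd => p3.not_unit (hab.isUnit_of_dvd' ha hd)
  have hc : ¬ (3:ℤ) ∣ c := fun hd => p3.not_unit (hac.isUnit_of_dvd' ha hd)
  have hcop : IsCoprime ((3:ℤ) ^ f) (b * c) :=
    IsCoprime.pow_left (((p3.coprime_iff_not_dvd).2 hb).mul_right ((p3.coprime_iff_not_dvd).2 hc))
  obtain ⟨A, hA⟩ : (3:ℤ) ^ f ∣ a := hcop.dvd_of_dvd_mul_right (h ▸ dvd_mul_right _ _)
  have hAbc : A * (b * c) = τ ^ 3 := by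
    have : (3:ℤ) ^ f * (A * (b * c)) = 3 ^ f * τ ^ 3 := by rw [← h, hA]; ring
    exact mul_left_cancel₀ (by positivity) this
  have hodd : Odd 3 := by decide
  have c1 : IsCoprime A (b * c) := by
    have := hab.mul_right hac
    rw [hA] at this; exact this.of_mul_left_right
  obtain ⟨⟨a1, ha1⟩, ⟨d, hd⟩⟩ := Int.eq_pow_of_mul_eq_pow_odd c1 hodd hAbc
  obtain ⟨⟨b1, hb1⟩, ⟨c1, hc1⟩⟩ := Int.eq_pow_of_mul_eq_pow_odd hbc hodd hd
  refine ⟨a1, b1, c1, by rw [hA, ha1], hb1, hc1, ?_⟩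
  intro hd
  apply hτ
  have : (3:ℤ) ∣ τ ^ 3 := by
    rw [← hAbc, ha1]; exact dvd_mul_of_dvd_left (dvd_pow hd (by norm_num)) _
  exact p3.dvd_of_dvd_pow this

theorem desc {e : ℕ} {x y z : ℤ} (h : Sol (e + 4) x y z) :
    ∃ x1 y1 z1 N : ℤ, Sol (e + 1) x1 y1 z1 ∧ 3 * x1 ^ 6 ≤ 4 * N ∧ 3 * y1 ^ 6 ≤ 4 * N ∧
      x ^ 2 - x * y + y ^ 2 = 3 * N ^ 3 := by
  obtain ⟨τ, υ, h1, h2, h3, h4⟩ := first (e := e + 3) h (by omega)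
  set s : ℤ := 3 ^ (e + 2) * τ ^ 3 with hs
  have hxy : x + y = 3 * s := by rw [h1, hs]; ring
  have hy : y = 3 * s - x := by linarith
  have h3s : (3:ℤ) ∣ s := ⟨3 ^ (e+1) * τ ^ 3, by rw [hs]; ring⟩
  have hcop : IsCoprime x s := by
    have := h.cop
    have h5 := this.add_mul_left_right 1
    rw [show y + x * 1 = 3 * s by linarith] at h5
    exact h5.of_mul_right_right
  have hυ : x ^ 2 - 3 * s * x + 3 * s ^ 2 = υ ^ 3 := by
    rw [hy] at h2; linarith
  obtain ⟨p, q, hp, hq, hN⟩ := cube x s υ h4 h3s hcop hυ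
  have hpq3 : p * q * (p - q) = 3 ^ (e + 1) * τ ^ 3 := by
    have : (3:ℤ) * (p * q * (p - q)) = 3 * (3 ^ (e + 1) * τ ^ 3) := by
      rw [show (3:ℤ) * (p * q * (p - q)) = s by rw [hq]; ring, hs]; ring
    linarith
  have hpq : IsCoprime p q := by
    rw [Int.isCoprime_iff_gcd_eq_one]
    by_contra hg
    obtain ⟨l, hl, hl'⟩ := Nat.exists_prime_and_dvd hg
    have hlp : (l:ℤ) ∣ p := (Int.natCast_dvd_natCast.2 hl').trans (Int.gcd_dvd_left ..)
    have hlq : (l:ℤ) ∣ q := (Int.natCast_dvd_natCast.2 hl').trans (Int.gcd_dvd_right ..)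
    have d1 : (l:ℤ) ∣ s := by
      rw [hq]; exact dvd_mul_of_dvd_left (dvd_mul_of_dvd_right hlq _) _
    have d2 : (l:ℤ) ∣ x - s := by
      rw [hp]
      exact dvd_sub (dvd_add (dvd_pow hlp (by norm_num)) (dvd_pow hlq (by norm_num))) (dvd_mul_of_dvd_right (dvd_pow hlq (by norm_num)) _)
    have d3 : (l:ℤ) ∣ x := (dvd_sub_left d1).1 d2
    exact (Nat.prime_iff_prime_int.1 hl).not_unit (hcop.isUnit_of_dvd' d3 d1)
  have hpr : IsCoprime p (p - q) := by
    have := hpq.neg_right.add_mul_left_right 1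
    rwa [show -q + p * 1 = p - q by ring] at this
  have hqr : IsCoprime q (p - q) := by
    have := hpq.symm.add_mul_left_right (-1)
    rwa [show p + q * -1 = p - q by ring] at this
  set N := p ^ 2 - p * q + q ^ 2 with hNd
  have hQ : x ^ 2 - x * y + y ^ 2 = 3 * N ^ 3 := by rw [h2, hN]
  have n1 : 3 * p ^ 2 ≤ 4 * N := by nlinarith [sq_nonneg (p - 2 * q)]
  have n2 : 3 * q ^ 2 ≤ 4 * N := by nlinarith [sq_nonneg (q - 2 * p)]
  have n3 : 3 * (p - q) ^ 2 ≤ 4 * N := by nlinarith [sq_nonneg (q + p)]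
  have hd : (3:ℤ) ∣ p * q * (p - q) := by rw [hpq3, pow_succ]; exact ⟨3 ^ e * τ ^ 3, by ring⟩
  have cc : ∀ u v : ℤ, IsCoprime (u ^ 3) (v ^ 3) → IsCoprime u v := fun u v hh =>
    (IsCoprime.pow_iff (by norm_num) (by norm_num)).1 hh
  rcases p3.dvd_or_dvd hd with hd | hd
  · rcases p3.dvd_or_dvd hd with hd | hd
    · obtain ⟨a, b, c, ha, hb, hc, hnd⟩ := split hpq hpr hqr (by rw [← hpq3]; ring) h3 hd
      refine ⟨b, c, a, N, ⟨cc _ _ (by rw [← hb, ← hc]; exact hqr), by rw [← ha, ← hb, ← hc]; ring, hnd⟩, ?_, ?_, hQ⟩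
      · rw [show b ^ 6 = (b ^ 3) ^ 2 by ring, ← hb]; exact n2
      · rw [show c ^ 6 = (c ^ 3) ^ 2 by ring, ← hc]; exact n3
    · obtain ⟨a, b, c, ha, hb, hc, hnd⟩ := split hpq.symm hqr hpr (by rw [← hpq3]; ring) h3 hd
      refine ⟨b, -c, a, N, ⟨(cc _ _ (by rw [← hb, ← hc]; exact hpr)).neg_right, ?_, hnd⟩, ?_, ?_, hQ⟩
      · rw [← ha, ← hb, show (-c) ^ 3 = - (c^3) by ring, ← hc]; ring
      · rw [show b ^ 6 = (b ^ 3) ^ 2 by ring, ← hb]; exact n1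
      · rw [show (-c) ^ 6 = (c ^ 3) ^ 2 by ring, ← hc]; exact n3
  · obtain ⟨a, b, c, ha, hb, hc, hnd⟩ := split hpr.symm hqr.symm hpq (by rw [← hpq3]; ring) h3 hd
    refine ⟨b, -c, a, N, ⟨(cc _ _ (by rw [← hb, ← hc]; exact hpq)).neg_right, ?_, hnd⟩, ?_, ?_, hQ⟩
    · rw [← ha, ← hb, show (-c) ^ 3 = - (c^3) by ring, ← hc]; ring
    · rw [show b ^ 6 = (b ^ 3) ^ 2 by ring, ← hb]; exact n1
    · rw [show (-c) ^ 6 = (c ^ 3) ^ 2 by ring, ← hc]; exact n2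

theorem base {e : ℕ} {x y z : ℤ} (h : Sol (e + 1) x y z) (he : 1 ≤ e) : (3:ℤ) ^ (2 * e) ≤ 2 * (x ^ 2 + y ^ 2) := by
  obtain ⟨τ, υ, h1, h2, h3, h4⟩ := first h he
  have hτ : τ ≠ 0 := by rintro rfl; simp at h3
  have h5 : 1 ≤ (τ ^ 3) ^ 2 := by
    have : 0 < (τ ^ 3) ^ 2 := by positivity
    omega
  have : (x + y) ^ 2 = 3 ^ (2 * e) * (τ ^ 3) ^ 2 := by rw [h1]; ring
  have h6 : (3:ℤ) ^ (2 * e) ≤ (x + y) ^ 2 := by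
    rw [this]; exact le_mul_of_one_le_right (by positivity) h5
  nlinarith [sq_nonneg (x - y)]

theorem step {e : ℕ} {x y z : ℤ} (h : Sol (e + 6) x y z) :
    ∃ x1 y1 z1 : ℤ, Sol (e + 3) x1 y1 z1 ∧ (x1 ^ 2 + y1 ^ 2) ^ 6 ≤ x ^ 2 + y ^ 2 := by
  obtain ⟨x1, y1, z1, N, hs, hx, hy, hQ⟩ := desc (e := e + 2) h
  refine ⟨x1, y1, z1, hs, ?_⟩
  have hb := base (e := e + 2) hs (by omega)
  have hb' : (81:ℤ) ≤ 3 ^ (2 * (e + 2)) := by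
    calc (81:ℤ) = 3 ^ 4 := by norm_num
      _ ≤ _ := pow_le_pow_right₀ (by norm_num) (by omega)
  set R := x1 ^ 2 + y1 ^ 2 with hR
  have hR9 : 40 ≤ R := by omega
  have h1 : R ^ 3 ≤ 4 * (x1 ^ 6 + y1 ^ 6) := by
    have ha : 0 ≤ x1 ^ 2 := sq_nonneg _
    have hb : 0 ≤ y1 ^ 2 := sq_nonneg _
    rw [hR, show x1 ^ 6 = (x1^2)^3 by ring, show y1 ^ 6 = (y1^2)^3 by ring]
    nlinarith [mul_nonneg (add_nonneg ha hb) (sq_nonneg (x1^2 - y1^2))]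
  have h2 : 3 * R ^ 3 ≤ 32 * N := by linarith
  have h3 : R ^ 2 ≤ N := by nlinarith [sq_nonneg R]
  have h4 : (R ^ 2) ^ 3 ≤ N ^ 3 := pow_le_pow_left₀ (sq_nonneg R) h3 3
  have h5 : 2 * N ^ 3 ≤ x ^ 2 + y ^ 2 := by nlinarith [sq_nonneg (x + y)]
  have h6 : 0 ≤ N ^ 3 := le_trans (by positivity) h4
  calc R ^ 6 = (R ^ 2) ^ 3 := by ring
    _ ≤ N ^ 3 := h4
    _ ≤ _ := by linarith

theorem iter (l : ℕ) : ∀ {e : ℕ} {x y z : ℤ}, Sol (e + 3 + 3 * l) x y z →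
    ((3:ℤ) ^ (2 * e + 3)) ^ (6 ^ l) ≤ x ^ 2 + y ^ 2 := by
  induction l with
  | zero =>
    intro e x y z h
    have := base (e := e + 2) h (by omega)
    rw [show 2 * (e + 2) = (2 * e + 3) + 1 by ring, pow_succ] at this
    have h3 : (0:ℤ) < 3 ^ (2 * e + 3) := by positivity
    simp only [pow_zero, pow_one]
    linarith
  | succ l ih =>
    intro e x y z h
    obtain ⟨x1, y1, z1, hs, hR⟩ := step (e := e + 3 * l) (by convert h using 1; ring)
    have := ih (e := e) (by convert hs using 1; ring)
    refine le_trans ?_ hR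
    rw [pow_succ 6 l, pow_mul]
    exact pow_le_pow_left₀ (by positivity) this 6
end Eis

set_option linter.all false

theorem gapfin (N κ lam η β e0 e1 e2 : ℝ) (J k : ℕ) (hN : 2 ≤ N) (hκ0 : 0 ≤ κ) (hκ : κ ≤ N ^ e0)
    (hlam : lam ≤ N ^ e1) (hη : η ≤ N ^ e2) (hJ : J ≤ 3)
    (h1 : e0 * k + e1 + β ≤ -3) (h2 : e0 * k + k + e2 ≤ -3) :
    κ ^ k * (lam * N ^ β + J * N ^ k * η) < 1 := by
  have hN0 : 0 < N := by linarith
  have hk : κ ^ k ≤ N ^ (e0 * k) := by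
    rw [Real.rpow_mul hN0.le, Real.rpow_natCast]
    exact pow_le_pow_left₀ hκ0 hκ k
  have h3 : lam * N ^ β ≤ N ^ (e1 + β) := by
    rw [Real.rpow_add hN0]
    exact mul_le_mul_of_nonneg_right hlam (Real.rpow_nonneg hN0.le _)
  have h4 : (J:ℝ) * N ^ k * η ≤ 3 * N ^ (k + e2) := by
    rw [Real.rpow_add hN0, Real.rpow_natCast, mul_assoc]
    have hJ' : (J:ℝ) ≤ 3 := by exact_mod_cast hJ
    have : N ^ k * η ≤ N ^ k * N ^ e2 := mul_le_mul_of_nonneg_left hη (by positivity)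
    have hp : 0 ≤ N ^ k * N ^ e2 := by positivity
    calc (J:ℝ) * (N ^ k * η) ≤ J * (N ^ k * N ^ e2) := mul_le_mul_of_nonneg_left this (by positivity)
      _ ≤ _ := mul_le_mul_of_nonneg_right hJ' hp
  have h5 : N ^ (e0 * k) * (N ^ (e1 + β) + 3 * N ^ (k + e2)) ≤ 4 * N ^ (-3:ℝ) := by
    rw [mul_add, mul_left_comm, ← Real.rpow_add hN0, ← Real.rpow_add hN0]
    have a1 := Real.rpow_le_rpow_of_exponent_le (by linarith : 1 ≤ N) (show e0 * k + (e1 + β) ≤ -3 by linarith)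
    have a2 := Real.rpow_le_rpow_of_exponent_le (by linarith : 1 ≤ N) (show e0 * k + (k + e2) ≤ -3 by linarith)
    linarith
  have h6 : N ^ (-3:ℝ) ≤ 1/8 := by
    rw [Real.rpow_neg hN0.le, show (3:ℝ) = ((3:ℕ):ℝ) by norm_num, Real.rpow_natCast]
    rw [inv_eq_one_div]
    apply one_div_le_one_div_of_le (by norm_num)
    calc (8:ℝ) = 2 ^ 3 := by norm_num
      _ ≤ _ := pow_le_pow_left₀ (by norm_num) hN 3
  calc κ ^ k * (lam * N ^ β + J * N ^ k * η)
      ≤ κ ^ k * (N ^ (e1 + β) + 3 * N ^ (k + e2)) := mul_le_mul_of_nonneg_left (by linarith) (by positivity)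
    _ ≤ N ^ (e0 * k) * (N ^ (e1 + β) + 3 * N ^ (k + e2)) := mul_le_mul_of_nonneg_right hk (by positivity)
    _ ≤ 4 * N ^ (-3:ℝ) := h5
    _ < 1 := by linarith

namespace Rat3

structure T (b c : ℕ) (X W y : ℕ) : Prop where
  hb : 1 ≤ b
  hc : 1 ≤ c
  hX : 0 < X
  hW : 0 < W
  hy : y = 9 ^ c * X + W
  eq : y ^ 3 = X ^ 3 + 9 ^ b * W ^ 3
  cop : Nat.Coprime y X
  nd : ¬ 3 ∣ W

theorem p3 : Prime (3:ℤ) := Int.prime_three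

theorem norm_form (d b : ℕ) (hd : 1 ≤ d) (hb : 1 ≤ b) (t : ℚ)
    (h : 3 ^ d + t ^ 3 = 9 ^ b * (3 ^ d + t) ^ 3) :
    ∃ c X W y, d = 3 * c ∧ T b c X W y := by
  obtain ⟨x, y, hx, hcop, h⟩ : ∃ x y : ℤ, 0 < x ∧ IsCoprime x y ∧
      3 ^ d * x ^ 3 + y ^ 3 = 9 ^ b * (3 ^ d * x + y) ^ 3 := by
    refine ⟨t.den, t.num, by exact_mod_cast t.den_pos, ?_, ?_⟩
    · have := t.reduced
      rw [Int.isCoprime_iff_gcd_eq_one, Int.gcd_comm]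
      simpa [Int.gcd] using this
    · have hd : (t.den : ℚ) ≠ 0 := by exact_mod_cast t.den_ne_zero
      have e : t = t.num / t.den := (Rat.num_div_den t).symm
      have e2 : t * t.den = t.num := Rat.mul_den_eq_num t
      have : ((3 ^ d * (t.den:ℤ) ^ 3 + t.num ^ 3 : ℤ) : ℚ) = ((9 ^ b * (3 ^ d * (t.den:ℤ) + t.num) ^ 3 : ℤ) : ℚ) := by
        push_cast
        rw [← e2]
        linear_combination (t.den:ℚ)^3 * h
      exact_mod_cast this
  have h3d : (3:ℤ) ^ d = 3 * 3 ^ (d-1) := by rw [← pow_succ']; congr 1; omega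
  have h9b : (9:ℤ) ^ b = 9 * 9 ^ (b-1) := by rw [← pow_succ']; congr 1; omega
  have hy0 : y ≠ 0 := by
    rintro rfl
    have h1 : (3:ℤ)^d * x^3 * (9 ^ b * (3^d)^2 - 1) = 0 := by linear_combination -h
    have : (9:ℤ) ^ b * (3^d)^2 - 1 ≠ 0 := by
      have : (0:ℤ) < 9 ^ (b-1) * (3^d)^2 := by positivity
      rw [h9b]; nlinarith
    have h2 : (3:ℤ)^d * x^3 ≠ 0 := by positivity
    exact (mul_ne_zero h2 this) h1
  have hy3 : (3:ℤ) ∣ y := by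
    apply p3.dvd_of_dvd_pow (n := 3)
    rw [show y ^ 3 = 9 ^ b * (3 ^ d * x + y) ^ 3 - 3 ^ d * x ^ 3 by linear_combination h, h3d, h9b]
    exact ⟨3 * 9 ^ (b-1) * (3 * 3 ^ (d-1) * x + y) ^ 3 - 3 ^ (d-1) * x ^ 3, by ring⟩
  have hx3 : ¬ (3:ℤ) ∣ x := fun hh => p3.not_unit (hcop.isUnit_of_dvd' hh hy3)
  obtain ⟨c, Y, hY, hyY⟩ : ∃ (c : ℕ) (Y : ℤ), y = 3 ^ c * Y ∧ ¬ 3 ∣ Y := ⟨_, (Int.finiteMultiplicity_iff.2 ⟨by norm_num, hy0⟩ : FiniteMultiplicity (3:ℤ) y).exists_eq_pow_mul_and_not_dvd⟩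
  subst hY
  have hc : 1 ≤ c := by
    by_contra hc
    have : c = 0 := by omega
    subst this; simp at hy3; exact hyY hy3
  have h3x : ¬ (3:ℤ) ∣ x ^ 3 := fun hh => hx3 (p3.dvd_of_dvd_pow hh)
  have h3Y : ¬ (3:ℤ) ∣ Y ^ 3 := fun hh => hyY (p3.dvd_of_dvd_pow hh)
  have hdc : d = 3 * c := by
    rcases le_or_gt d c with h1 | h1
    · exfalso
      obtain ⟨e, rfl⟩ := Nat.exists_eq_add_of_le h1
      apply h3x
      have : (3:ℤ)^d * x^3 = 3^d * ((3^d)^2 * (9 ^ b * (x + 3^e*Y)^3 - (3^e*Y)^3)) := by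
        rw [pow_add] at h
        linear_combination h
      rw [mul_left_cancel₀ (by positivity) this, h3d]
      exact ⟨3 * (3 ^ (d-1))^2 * (9 ^ b * (x + 3^e*Y)^3 - (3^e*Y)^3), by ring⟩
    · rcases lt_trichotomy d (3 * c) with h2 | h2 | h2
      · exfalso
        obtain ⟨e, rfl⟩ := Nat.exists_eq_add_of_lt h1
        obtain ⟨f, hf⟩ := Nat.exists_eq_add_of_lt h2
        apply h3x
        have h27 : ((3:ℤ)^c)^3 = 3 ^ (c+e+1) * (3 ^ f * 3) := by
          rw [← pow_mul, mul_comm c 3, hf]; ring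
        have : (3:ℤ)^(c+e+1) * x^3 = 3^(c+e+1) * (3 ^ f * 3 * (9 ^ b * (3 ^ (e+1) * x + Y)^3 - Y^3)) := by
          rw [← mul_assoc, ← h27]
          linear_combination h
        rw [mul_left_cancel₀ (by positivity) this]
        exact ⟨3 ^ f * (9 ^ b * (3 ^ (e+1) * x + Y)^3 - Y^3), by ring⟩
      · exact h2
      · exfalso
        obtain ⟨f, rfl⟩ := Nat.exists_eq_add_of_lt h2
        apply h3Y
        have : ((3:ℤ)^c)^3 * Y^3 = (3^c)^3 * (9 ^ b * (3 ^ (2*c+f+1) * x + Y)^3 - 3^(f+1) * x^3) := by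
          linear_combination h
        rw [mul_left_cancel₀ (by positivity) this, h9b]
        exact ⟨3 * 9 ^ (b-1) * (3 ^ (2*c+f+1) * x + Y)^3 - 3^f * x^3, by ring⟩
  subst hdc
  have h9c : (9:ℤ) ^ c = 9 * 9 ^ (c-1) := by rw [← pow_succ']; congr 1; omega
  have h93 : (9:ℤ)^c = (3^c)^2 := by rw [← pow_mul, mul_comm, pow_mul]; norm_num
  have E : x^3 + Y^3 = 9^b * (9^c * x + Y)^3 := by
    have : ((3:ℤ)^c)^3 * (x^3 + Y^3) = (3^c)^3 * (9^b * (9^c * x + Y)^3) := by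
      rw [h93]; rw [pow_mul'] at h; linear_combination h
    exact mul_left_cancel₀ (by positivity) this
  have hcop' : IsCoprime x Y := hcop.of_isCoprime_of_dvd_right (dvd_mul_left _ _)
  obtain ⟨W, hW⟩ : ∃ W, W = -(9^c * x + Y) := ⟨_, rfl⟩
  have hYW : Y = -(9^c*x+W) := by rw [hW]; ring
  have hW3 : ¬ (3:ℤ) ∣ W := by
    intro hh
    apply hyY
    rw [hYW, h9c]
    rw [dvd_neg]
    exact dvd_add ⟨3 * 9^(c-1) * x, by ring⟩ hh
  have hW0 : W ≠ 0 := by rintro rfl; exact hW3 (dvd_zero _)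
  have hge9 : (9:ℤ) ≤ 9^c := by rw [h9c]; have : (0:ℤ) < 9^(c-1) := by positivity
                                linarith
  have hge9b : (9:ℤ) ≤ 9^b := by rw [h9b]; have : (0:ℤ) < 9^(b-1) := by positivity
                                 linarith
  have hWp : 0 < W := by
    by_contra hcon
    have hu : 0 < -W := by omega
    obtain ⟨u, hu'⟩ : ∃ u, u = -W := ⟨_, rfl⟩
    rw [← hu'] at hu
    have hWu : W = -u := by omega
    have E2 : x^3 + Y^3 = 9^b * u^3 := by rw [E]; congr 2; omega
    have hu3 : 9 * u^3 ≤ 9^b * u^3 := mul_le_mul_of_nonneg_right hge9b (by positivity)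
    have hu3p : 0 < u^3 := by positivity
    have hx9 : 9 * x ≤ 9^c * x := mul_le_mul_of_nonneg_right hge9 hx.le
    rcases le_or_gt x u with h1 | h1
    · have a1 : x^3 ≤ u^3 := pow_le_pow_left₀ hx.le h1 3
      have a2 : Y^3 ≤ u^3 := by
        apply Odd.pow_le_pow (by decide) |>.2
        rw [hYW]; linarith
      linarith
    · have a2 : Y^3 < (-x)^3 := by
        apply Odd.pow_lt_pow (by decide) |>.2
        rw [hYW]; linarith
      rw [Odd.neg_pow (by decide)] at a2
      linarith
  lift x to ℕ using hx.le
  lift W to ℕ using hWp.le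
  refine ⟨c, x, W, 9^c*x+W, rfl, hb, hc, by exact_mod_cast hx, by exact_mod_cast hWp, rfl, ?_, ?_, by exact_mod_cast hW3⟩
  · have : ((((9^c*x+W : ℕ))^3 : ℕ):ℤ) = ((x^3 + 9^b*W^3 : ℕ):ℤ) := by
      push_cast
      rw [hYW] at E
      linear_combination -E
    exact_mod_cast this
  · rw [hYW] at hcop'
    have := hcop'.neg_right.symm
    rw [neg_neg] at this
    rw [← Nat.isCoprime_iff_coprime]
    exact_mod_cast this
end Rat3

set_option linter.all false
namespace Rat3
variable {b c X W y : ℕ}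

theorem T.X_le (h : T b c X W y) : X ≤ 9 ^ b := by
  have hcop : Nat.Coprime X W := by
    have := h.cop
    rw [h.hy, mul_comm, Nat.coprime_mul_left_add_left] at this
    exact this.symm
  have e := h.eq
  have hb9 : 9 ≤ 9 ^ b := by
    calc 9 = 9^1 := by norm_num
      _ ≤ _ := Nat.pow_le_pow_right (by norm_num) h.hb
  have h1 : (X:ℤ) ∣ ((9:ℤ)^b - 1) * (W:ℤ)^3 := by
    have e' : ((9^c * X + W:ℤ))^3 = X^3 + 9^b*W^3 := by
      have := h.hy ▸ e
      exact_mod_cast this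
    refine ⟨(9^c)^3 * X^2 + 3*(9^c)^2*X*W + 3*9^c*W^2 - X^2, ?_⟩
    linear_combination -e'
  have h2 : (X:ℤ) ∣ (9:ℤ)^b - 1 := by
    refine IsCoprime.dvd_of_dvd_mul_right ?_ h1
    exact (Nat.isCoprime_iff_coprime.2 hcop).pow_right
  have h3 := Int.le_of_dvd (by have : (9:ℤ) ≤ 9^b := by exact_mod_cast hb9
                               linarith) h2
  have : (X:ℤ) ≤ (9:ℤ)^b := by linarith
  exact_mod_cast this

theorem T.W_le (h : T b c X W y) : 2 * W ≤ y := by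
  have hb9 : 9 ≤ 9 ^ b := by
    calc 9 = 9^1 := by norm_num
      _ ≤ _ := Nat.pow_le_pow_right (by norm_num) h.hb
  have : (2*W)^3 ≤ y^3 := by
    rw [h.eq]
    have : 9 * W^3 ≤ 9^b * W^3 := Nat.mul_le_mul_right _ hb9
    have e : (2*W)^3 = 8 * W^3 := by ring
    omega
  exact (Nat.pow_le_pow_iff_left (by norm_num)).1 this

theorem T.y_le (h : T b c X W y) : y ≤ 2 * 9^c * 9^b := by
  have h1 := h.W_le
  have h2 := h.hy
  have h3 : 9^c * X ≤ 9^c * 9^b := Nat.mul_le_mul_left _ h.X_le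
  rw [mul_assoc]
  omega

theorem T.le_y (h : T b c X W y) : 9^c < y := by
  have h2 := h.hy
  have := h.hW
  have : 9^c * 1 ≤ 9^c * X := Nat.mul_le_mul_left _ h.hX
  omega

theorem T.sol (h : T b c X W y) : Eis.Sol (2*b) (y:ℤ) (-(X:ℤ)) (W:ℤ) := by
  refine ⟨?_, ?_, ?_⟩
  · exact (Nat.isCoprime_iff_coprime.2 h.cop).neg_right
  · have := h.eq
    have e : (y:ℤ)^3 = X^3 + 9^b * W^3 := by exact_mod_cast this
    rw [pow_mul]
    norm_num
    linear_combination e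
  · have := h.nd
    exact_mod_cast this

theorem large (C : ℕ) : ∃ b0, ∀ {b c X W y}, T b c X W y → b0 ≤ b → C * (3^b)^C ≤ 9^c := by
  obtain ⟨l, hl⟩ : ∃ l, 2*C+8 ≤ 6^l := ⟨2*C+8, (Nat.lt_pow_self (by norm_num)).le⟩
  refine ⟨2*l+2+8*C^2, ?_⟩
  intro b c X W y h hb
  by_contra hcon
  push Not at hcon
  have hs := h.sol
  obtain ⟨e, he⟩ : ∃ e, 2*b = e + 3 + 3*l := ⟨2*b-3-3*l, by omega⟩
  rw [he] at hs
  have h1 := Eis.iter l hs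
  have hXy : (X:ℤ)^2 ≤ y^2 := by
    have h9 : 1 ≤ 9^c := Nat.one_le_pow _ _ (by norm_num)
    have : 1 * X ≤ 9^c * X := Nat.mul_le_mul_right _ h9
    have : X ≤ y := by rw [h.hy]; omega
    exact_mod_cast Nat.pow_le_pow_left this 2
  have h2 : ((3:ℤ)^b)^(2*C+8) ≤ 2 * y^2 := by
    calc ((3:ℤ)^b)^(2*C+8) ≤ ((3:ℤ)^b)^(6^l) := pow_le_pow_right₀ (one_le_pow₀ (by norm_num)) hl
      _ ≤ ((3:ℤ)^(2*e+3))^(6^l) := pow_le_pow_left₀ (by positivity) (pow_le_pow_right₀ (by norm_num) (by omega)) _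
      _ ≤ _ := h1
      _ ≤ _ := by rw [neg_sq]; linarith
  have h3 : (3^b)^(2*C+8) ≤ 2 * y^2 := by exact_mod_cast h2
  have h4 : y^2 ≤ (2*9^c*9^b)^2 := Nat.pow_le_pow_left h.y_le 2
  have h9 : 9^b = (3^b)^2 := by rw [← pow_mul, mul_comm, pow_mul]; norm_num
  rw [h9] at h4
  have hB : 8 * C^2 ≤ (3^b)^4 := by
    calc 8*C^2 ≤ b := by omega
      _ ≤ 3^b := (Nat.lt_pow_self (by norm_num)).le
      _ = (3^b)^1 := (pow_one _).symm
      _ ≤ _ := Nat.pow_le_pow_right (by positivity) (by norm_num)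
  have hp : 0 < 3^b := by positivity
  generalize 3^b = B at *
  generalize 9^c = N at *
  have h5 : N^2 < (C * B^C)^2 := Nat.pow_lt_pow_left hcon (by norm_num)
  have : B^(2*C+8) < B^(2*C+8) := by
    calc B^(2*C+8) ≤ 2 * (2*N*B^2)^2 := by omega
      _ = N^2 * (8 * B^4) := by ring
      _ < (C * B^C)^2 * (8*B^4) := Nat.mul_lt_mul_of_pos_right h5 (by positivity)
      _ = (8 * C^2) * B^(2*C+4) := by ring
      _ ≤ B^4 * B^(2*C+4) := Nat.mul_le_mul_right _ hB
      _ = _ := by ring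
  exact lt_irrefl _ this

/-- gap between two solutions of the same class -/
theorem gap (c0 : ℕ) (hcons : ∀ (H N : ℕ) (a : Fin 2 → ℕ),
    Function.Injective a → (∀ j, a j ≤ H) → H + 1 ≤ N → ∀ k : ℕ, 1 ≤ k →
    ∀ (v : Fin 2 → ℤ) (lam η : ℝ), 0 ≤ lam → v ≠ 0 →
     (∀ j, |(v j : ℝ) - lam * ((N:ℝ) + a j) ^ (1/((3:ℕ):ℝ))| ≤ η) →
     1 ≤ (((c0:ℝ) * (H+1))^c0)^k * (lam * (N:ℝ)^(1/((3:ℕ):ℝ) - ((2:ℕ)-1:ℝ)*k) + (2:ℕ) * (N:ℝ)^k * η))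
    (β q W X y q' W' X' y' : ℕ) (hX : 0 < X) (hβ : 0 < β) (hw : 0 < q * W) (hw' : 0 < q' * W')
    (hy : y^3 = X^3 + β * (q*W)^3) (hy' : y'^3 = X'^3 + β * (q'*W')^3)
    (hN : X^3 + 1 ≤ β * (q*W)^3) (hN2 : 2 ≤ β * (q*W)^3)
    (hκ : ((c0 * (X^3+1))^c0)^12 ≤ β * (q*W)^3)
    (hX' : X'^30 ≤ y') : y'^3 < (β * (q*W)^3)^42 := by
  by_contra hcon
  push Not at hcon
  generalize q * W = w at *
  generalize q' * W' = w' at *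
  obtain ⟨N, hNdef⟩ : ∃ N, N = β * w^3 := ⟨_, rfl⟩
  rw [← hNdef] at hy hN hN2 hκ hcon
  have hNp : 0 < N := by omega
  -- choose k
  obtain ⟨k, hk1, hk2⟩ : ∃ k, (N^2)^k ≤ y'^3 ∧ y'^3 < (N^2)^(k+1) :=
    ⟨Nat.log (N^2) (y'^3), Nat.pow_log_le_self _ (by
      have : 0 < N^42 := by positivity
      omega), Nat.lt_pow_succ_log_self (by nlinarith) _⟩
  have hk : 20 ≤ k := by
    by_contra hlt
    have : (N^2)^(k+1) ≤ (N^2)^21 := Nat.pow_le_pow_right (by positivity) (by omega)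
    have e : (N^2)^21 = N^42 := by ring
    omega
  have hy'0 : 0 < y' := by
    rcases Nat.eq_zero_or_pos y' with h | h
    · subst h
      have : 0 < β * w'^3 := by positivity
      omega
    · exact h
  have hNR : (2:ℝ) ≤ N := by exact_mod_cast hN2
  have hN0 : (0:ℝ) < N := by linarith
  have hyR : (0:ℝ) < y' := by exact_mod_cast hy'0
  obtain ⟨g, hg0, hg3⟩ : ∃ g : ℝ, 0 < g ∧ g^3 = β := by
    refine ⟨(β:ℝ)^(1/3:ℝ), by positivity, ?_⟩
    rw [← Real.rpow_natCast, ← Real.rpow_mul (by positivity)]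
    norm_num
  have hcr : ∀ z : ℝ, 0 ≤ z → (z^3) ^ (1/((3:ℕ):ℝ)) = z := by
    intro z hz
    rw [← Real.rpow_natCast, ← Real.rpow_mul hz]
    norm_num
  have hNcr : (N:ℝ) ^ (1/((3:ℕ):ℝ)) = g * w := by
    rw [hNdef]; push_cast
    rw [← hg3, ← mul_pow]
    exact hcr _ (by positivity)
  have hycr : ((N:ℝ) + (X:ℝ)^3) ^ (1/((3:ℕ):ℝ)) = y := by
    have : (N:ℝ) + (X:ℝ)^3 = (y:ℝ)^3 := by
      have : N + X^3 = y^3 := by omega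
      exact_mod_cast this
    rw [this]
    exact hcr _ (by positivity)
  have hXy' : (X':ℝ)^3 ≤ (y':ℝ)^(1/10:ℝ) := by
    have h1 : ((X':ℝ)^3)^10 ≤ y' := by
      rw [← pow_mul]; exact_mod_cast hX'
    have h2 : (((X':ℝ)^3)^10)^(1/10:ℝ) = (X':ℝ)^3 := by
      rw [← Real.rpow_natCast ((X':ℝ)^3) 10, ← Real.rpow_mul (by positivity)]
      norm_num
    rw [← h2]
    exact Real.rpow_le_rpow (by positivity) h1 (by norm_num)
  -- difference
  have hdiff : |(y':ℝ) - g * w'| ≤ X'^3 / y'^2 := by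
    have hy'R : (y':ℝ)^3 = X'^3 + (g * w')^3 := by
      rw [mul_pow, hg3]; exact_mod_cast hy'
    have hge : g * w' ≤ y' := by
      apply le_of_pow_le_pow_left₀ (n := 3) (by norm_num) (by positivity)
      rw [hy'R]; have : (0:ℝ) ≤ (X':ℝ)^3 := by positivity
      linarith
    have hgw : 0 ≤ g * w' := by positivity
    rw [abs_of_nonneg (by linarith), le_div_iff₀ (by positivity)]
    have : (0:ℝ) ≤ ((y':ℝ) - g * w') * (y' * (g * w') + (g*w')^2) := by
      apply mul_nonneg (by linarith); positivity
    nlinarith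
  have hgw1 : (w:ℝ) ≤ N ^ (1/3:ℝ) := by
    rw [show (1/3:ℝ) = 1/((3:ℕ):ℝ) by norm_num, hNcr]
    have : 1 ≤ g := by
      apply le_of_pow_le_pow_left₀ (n := 3) (by norm_num) (by positivity)
      rw [hg3]; simp; exact_mod_cast hβ
    nlinarith [(by positivity : (0:ℝ) ≤ w)]
  have hw'y : (w':ℝ) ≤ y' := by
    have : w'^3 ≤ y'^3 := by
      have : 1 * w'^3 ≤ β * w'^3 := Nat.mul_le_mul_right _ hβ
      omega
    exact_mod_cast (Nat.pow_le_pow_iff_left (by norm_num)).1 this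
  -- y' bounds as powers of N
  have hyeq : (y':ℝ) = ((y':ℝ)^3)^(1/3:ℝ) := by
    rw [show (1/3:ℝ) = 1/((3:ℕ):ℝ) by norm_num]; exact (hcr _ hyR.le).symm
  have hyup : (y':ℝ) ≤ N ^ ((2*k+2)/3:ℝ) := by
    rw [hyeq]
    have h1 : (y':ℝ)^3 ≤ (N:ℝ)^(2*k+2:ℝ) := by
      have : (y':ℝ)^3 ≤ ((N:ℝ)^2)^(k+1) := by exact_mod_cast hk2.le
      rw [← pow_mul, ← Real.rpow_natCast _ (2*(k+1))] at this
      convert this using 2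
      push_cast; ring
    calc ((y':ℝ)^3)^(1/3:ℝ) ≤ ((N:ℝ)^(2*k+2:ℝ))^(1/3:ℝ) := Real.rpow_le_rpow (by positivity) h1 (by norm_num)
      _ = _ := by rw [← Real.rpow_mul hN0.le]; congr 1; ring
  have hylo : (N:ℝ) ^ ((2*k)/3:ℝ) ≤ y' := by
    rw [hyeq]
    have h1 : (N:ℝ)^(2*k:ℝ) ≤ (y':ℝ)^3 := by
      have : ((N:ℝ)^2)^k ≤ (y':ℝ)^3 := by exact_mod_cast hk1
      rw [← pow_mul, ← Real.rpow_natCast _ (2*k)] at this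
      convert this using 2
      push_cast; ring
    calc _ = ((N:ℝ)^(2*k:ℝ))^(1/3:ℝ) := by rw [← Real.rpow_mul hN0.le]; congr 1; ring
      _ ≤ _ := Real.rpow_le_rpow (by positivity) h1 (by norm_num)
  have key := hcons (X^3) N ![0, X^3] (by
      intro i j hij
      have : 0 < X^3 := by positivity
      fin_cases i <;> fin_cases j <;> simp at hij ⊢ <;> omega)
    (by intro j; fin_cases j <;> simp) hN k (by omega) ![(w:ℤ) * y', (y:ℤ) * w'] w' (w * (X'^3 / y'^2))
    (by positivity)
    (by intro h; have := congrFun h 0; simp at this; omega)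
    (by
      intro j
      fin_cases j
      · simp only [Fin.zero_eta, Matrix.cons_val_zero, Nat.cast_zero, add_zero]
        rw [hNcr]; push_cast
        rw [show (w:ℝ) * y' - w' * (g * w) = w * (y' - g * w') by ring, abs_mul, abs_of_nonneg (by positivity : (0:ℝ) ≤ w)]
        exact mul_le_mul_of_nonneg_left hdiff (by positivity)
      · simp only [Fin.mk_one, Matrix.cons_val_one, Matrix.cons_val_zero]
        simp only [Nat.cast_pow, Int.cast_mul, Int.cast_natCast]
        rw [hycr, show (y:ℝ) * w' - w' * y = 0 by ring, abs_zero]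
        positivity)
  have hkR : (20:ℝ) ≤ k := by exact_mod_cast hk
  have hη : (w:ℝ) * (X'^3 / y'^2) ≤ N ^ (1/3 - 1.9 * (2*k/3) : ℝ) := by
    rw [sub_eq_add_neg, Real.rpow_add hN0]
    apply mul_le_mul hgw1 _ (by positivity) (by positivity)
    calc (X':ℝ)^3 / y'^2 ≤ (y':ℝ)^(1/10:ℝ) / y'^2 := div_le_div_of_nonneg_right hXy' (by positivity)
      _ = (y':ℝ)^(-1.9:ℝ) := by
        rw [← Real.rpow_natCast (y':ℝ) 2, ← Real.rpow_sub hyR]; norm_num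
      _ ≤ ((N:ℝ) ^ ((2*k)/3:ℝ))^(-1.9:ℝ) := Real.rpow_le_rpow_of_nonpos (by positivity) hylo (by norm_num)
      _ = _ := by rw [← Real.rpow_mul hN0.le]; congr 1; ring
  have hκ' : ((c0:ℝ) * ((X^3:ℕ)+1))^c0 ≤ (N:ℝ)^(1/12:ℝ) := by
    have h1 : (((c0:ℝ) * ((X^3:ℕ)+1))^c0)^12 ≤ N := by exact_mod_cast hκ
    have h2 : ((((c0:ℝ) * ((X^3:ℕ)+1))^c0)^12)^(1/12:ℝ) = ((c0:ℝ) * ((X^3:ℕ)+1))^c0 := by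
      rw [← Real.rpow_natCast _ 12, ← Real.rpow_mul (by positivity)]
      norm_num
    rw [← h2]
    exact Real.rpow_le_rpow (by positivity) h1 (by norm_num)
  have := gapfin N _ w' _ (1/((3:ℕ):ℝ) - ((2:ℕ)-1:ℝ)*k) (1/12) ((2*k+2)/3) (1/3 - 1.9 * (2*k/3)) 2 k hNR (by positivity) hκ'
    (hw'y.trans hyup) hη (by norm_num) (by push_cast; linarith) (by linarith)
  exact absurd key (not_le.2 this)
end Rat3

set_option linter.all false
namespace Rat3

theorem Sfin : Set.Finite {p : ℕ × ℕ | ∃ X W y, T p.1 p.2 X W y} := by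
  obtain ⟨c0, hc0, hcons⟩ := Pade.cons 2 3 (by norm_num) (by norm_num)
  obtain ⟨C, hC1, hC2, hC3⟩ : ∃ C, (2*c0)^(12*c0) ≤ C ∧ 72*c0 ≤ C ∧ 100 ≤ C :=
    ⟨(2*c0)^(12*c0)+72*c0+100, by omega, by omega, by omega⟩
  obtain ⟨b0, hb0⟩ := large C
  have hbad : Set.Finite {p : ℕ × ℕ | (∃ X W y, T p.1 p.2 X W y) ∧ ¬ C * (3^p.1)^C ≤ 9^p.2} := by
    apply Set.Finite.subset ((Set.finite_lt_nat b0).prod (Set.finite_lt_nat (C * (3^b0)^C)))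
    rintro ⟨b, c⟩ ⟨⟨X, W, y, h⟩, h2⟩
    have h3 : b < b0 := by
      by_contra hh
      exact h2 (hb0 h (by omega))
    refine ⟨h3, ?_⟩
    show c < _
    push Not at h2
    calc c < 9^c := Nat.lt_pow_self (by norm_num)
      _ < C * (3^b)^C := h2
      _ ≤ _ := Nat.mul_le_mul_left _ (Nat.pow_le_pow_left (Nat.pow_le_pow_right (by norm_num) h3.le) _)
  have hgood : ∀ r, Set.Finite {p : ℕ × ℕ | (∃ X W y, T p.1 p.2 X W y) ∧ C * (3^p.1)^C ≤ 9^p.2 ∧ p.1 % 3 = r} := by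
    intro r
    rcases Set.eq_empty_or_nonempty {p : ℕ × ℕ | (∃ X W y, T p.1 p.2 X W y) ∧ C * (3^p.1)^C ≤ 9^p.2 ∧ p.1 % 3 = r} with he | ⟨⟨b, c⟩, ⟨X, W, y, h⟩, hl, hr⟩
    · rw [he]; exact Set.finite_empty
    simp only at h hl hr
    have h9 : ∀ b, 9^b = (3^b)^2 := by intro b; rw [← pow_mul, mul_comm, pow_mul]; norm_num
    have hdec : ∀ b, b % 3 = r → ∀ W, 9^b * W^3 = 9^r * (9^(b/3)*W)^3 := by
      intro b hb W
      have : 9^b = 9^r * (9^(b/3))^3 := by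
        rw [← pow_mul, ← pow_add]; congr 1; omega
      rw [this]; ring
    obtain ⟨N, hN⟩ : ∃ N, N = 9^r * (9^(b/3)*W)^3 := ⟨_, rfl⟩
    have hXB : X ≤ (3^b)^2 := by rw [← h9]; exact h.X_le
    have hBp : 1 ≤ 3^b := Nat.one_le_pow _ _ (by norm_num)
    have hN9 : 9^c ≤ N := by
      have e := h.eq
      rw [hdec b hr, ← hN] at e
      have hc9 : 9 ≤ 9 ^ c := by
        calc 9 = 9^1 := by norm_num
          _ ≤ _ := Nat.pow_le_pow_right (by norm_num) h.hc
      have hy := h.hy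
      have h1 : 9^c * X ≤ y := by omega
      have h2 := Nat.pow_le_pow_left h1 3
      have hX1 : 1 ≤ X^3 := Nat.one_le_pow _ _ h.hX
      generalize 9^c = M at *
      have h4 : M + 1 ≤ M^3 := by nlinarith [Nat.mul_le_mul hc9 hc9]
      have h5 : (M+1) * X^3 ≤ M^3 * X^3 := Nat.mul_le_mul_right _ h4
      have h6 : M * 1 ≤ M * X^3 := Nat.mul_le_mul_left _ hX1
      rw [mul_pow] at h2
      linarith
    have hB6 : (3^b)^6 ≤ (3^b)^C := Nat.pow_le_pow_right (by positivity) (by omega)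
    have hX3 : X^3 ≤ (3^b)^6 := by
      calc X^3 ≤ ((3^b)^2)^3 := Nat.pow_le_pow_left hXB 3
        _ = _ := by ring
    have hB1 : 1 ≤ (3^b)^6 := Nat.one_le_pow _ _ hBp
    have hC2B : 100 * (3^b)^C ≤ N := (Nat.mul_le_mul_right _ hC3).trans (hl.trans hN9)
    have key : ∀ b' c' X' W' y', T b' c' X' W' y' → C * (3^b')^C ≤ 9^c' → b' % 3 = r → y'^3 < N^42 := by
      intro b' c' X' W' y' h' hl' hr'
      rw [hN]
      refine gap c0 hcons (9^r) (9^(b/3)) W X y (9^(b'/3)) W' X' y' h.hX (by positivity)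
        (Nat.mul_pos (by positivity) h.hW) (Nat.mul_pos (by positivity) h'.hW) ?_ ?_ ?_ ?_ ?_ ?_
      · rw [← hdec b hr]; exact h.eq
      · rw [← hdec b' hr']; exact h'.eq
      · rw [← hN]; omega
      · rw [← hN]; omega
      · rw [← hN]
        calc ((c0 * (X^3+1))^c0)^12 ≤ ((c0 * (2*(3^b)^6))^c0)^12 := by
              gcongr; omega
          _ = (2*c0)^(12*c0) * (3^b)^(72*c0) := by
              rw [show c0 * (2*(3^b)^6) = (2*c0) * (3^b)^6 by ring, mul_pow, mul_pow, ← pow_mul, ← pow_mul, ← pow_mul]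
              congr 2 <;> ring
          _ ≤ C * (3^b)^C := Nat.mul_le_mul hC1 (Nat.pow_le_pow_right (by positivity) hC2)
          _ ≤ _ := hl.trans hN9
      · calc X'^30 ≤ (9^b')^30 := Nat.pow_le_pow_left h'.X_le 30
          _ = (3^b')^60 := by rw [h9]; ring
          _ ≤ (3^b')^C := Nat.pow_le_pow_right (by positivity) (by omega)
          _ ≤ C * (3^b')^C := Nat.le_mul_of_pos_left _ (by omega)
          _ ≤ 9^c' := hl'
          _ ≤ _ := h'.le_y.le
    apply Set.Finite.subset ((Set.finite_lt_nat (N^42)).prod (Set.finite_lt_nat (N^42)))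
    rintro ⟨b', c'⟩ ⟨⟨X', W', y', h'⟩, hl', hr'⟩
    simp only at h' hl' hr'
    have k1 := key b' c' X' W' y' h' hl' hr'
    have hc' : c' < N^42 := by
      calc c' < 9^c' := Nat.lt_pow_self (by norm_num)
        _ ≤ y' := h'.le_y.le
        _ ≤ y'^3 := Nat.le_self_pow (by norm_num) _
        _ < _ := k1
    refine ⟨?_, hc'⟩
    show b' < _
    refine lt_of_le_of_lt ?_ hc'
    have : 3^(2*b') ≤ 3^(2*c') := by
      calc 3^(2*b') = (3^b')^2 := by rw [mul_comm, pow_mul]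
        _ ≤ (3^b')^C := Nat.pow_le_pow_right (by positivity) (by omega)
        _ ≤ C * (3^b')^C := Nat.le_mul_of_pos_left _ (by omega)
        _ ≤ 9^c' := hl'
        _ = 3^(2*c') := by rw [pow_mul]; norm_num
    have := (Nat.pow_le_pow_iff_right (by norm_num)).1 this
    omega
  apply Set.Finite.subset (hbad.union ((hgood 0).union ((hgood 1).union (hgood 2))))
  rintro ⟨b, c⟩ h
  by_cases hh : C * (3^b)^C ≤ 9^c
  · right
    have : b % 3 = 0 ∨ b % 3 = 1 ∨ b % 3 = 2 := by omega
    rcases this with h1 | h1 | h1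
    · left; exact ⟨h, hh, h1⟩
    · right; left; exact ⟨h, hh, h1⟩
    · right; right; exact ⟨h, hh, h1⟩
  · left; exact ⟨h, hh⟩

theorem ratFinite : Set.Finite {p : ℕ × ℕ | 0 < p.2 ∧ p.2 < p.1 ∧ ∃ t : ℚ, 3^p.1 + 3^p.2 * t^3 = (3^p.1 + 3^p.2 * t)^3} := by
  apply Set.Finite.subset (Sfin.image (fun p : ℕ × ℕ => (p.1 + 3 * p.2, p.1)))
  rintro ⟨a, b⟩ ⟨hb, hab, t, ht⟩
  simp only at hb hab ht
  obtain ⟨d, rfl⟩ := Nat.exists_eq_add_of_lt hab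
  have : (3:ℚ)^(d+1) + t^3 = 9^b * (3^(d+1) + t)^3 := by
    have h3 : (3:ℚ)^b ≠ 0 := by positivity
    apply mul_left_cancel₀ h3
    rw [show (9:ℚ)^b = (3^b)^2 by rw [← pow_mul, mul_comm, pow_mul]; norm_num]
    linear_combination ht
  obtain ⟨c, X, W, y, hc, hT⟩ := norm_form (d+1) b (by omega) hb t this
  refine ⟨(b, c), ⟨X, W, y, hT⟩, ?_⟩
  simp only [Prod.mk.injEq, and_true]
  omega
end Rat3

set_option linter.all false
namespace PellB
open Pell

theorem xs {a : ℕ} (a1 : 1 < a) (n : ℕ) : (xn a1 (n+1) : ℤ) = xn a1 n * a + ((a:ℤ)*a-1) * yn a1 n := by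
  have h : xn a1 (n + 1) = xn a1 n * a + (a*a-1) * yn a1 n := xn_succ a1 n
  rw [h]; push_cast
  rw [Nat.cast_sub (by nlinarith)]; push_cast; ring

theorem powxy {d : ℤ} (g : Solution₁ d) {a : ℕ} (a1 : 1 < a) (ha : g.x = a) (n : ℕ) :
    (g ^ n).x = xn a1 n ∧ (g ^ n).y = g.y * yn a1 n := by
  induction n with
  | zero => simp
  | succ n ih =>
    rw [pow_succ, Solution₁.x_mul, Solution₁.y_mul, ih.1, ih.2, ha, xs, yn_succ]
    have h := g.prop
    rw [ha] at h
    constructor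
    · linear_combination -(yn a1 n : ℤ) * h
    · push_cast; ring

theorem nd3x {a : ℕ} (a1 : 1 < a) {n : ℕ} (h : 3 ∣ yn a1 n) : ¬ 3 ∣ xn a1 n := by
  intro h2
  have := Nat.dvd_gcd h2 h
  rw [(xy_coprime a1 n)] at this
  omega

theorem lteB {a : ℕ} (a1 : 1 < a) {n k e : ℕ} (he : 1 ≤ e) (h1 : 3^e ∣ yn a1 n) (h2 : ¬ 3^(e+1) ∣ yn a1 n)
    (hk : ¬ 3 ∣ k) : ¬ 3^(e+1) ∣ yn a1 (n*k) := by
  have h3 : 3 ∣ yn a1 n := (dvd_pow_self 3 (by omega)).trans h1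
  have hm := (xy_modEq_yn a1 n k).2
  have hd : 3^(e+1) ∣ yn a1 n ^ 3 := by
    calc 3^(e+1) ∣ 3^(e*3) := pow_dvd_pow _ (by omega)
      _ = (3^e)^3 := pow_mul _ _ _
      _ ∣ _ := pow_dvd_pow_of_dvd h1 3
  intro hh
  have h4 := ((hm.of_dvd hd).dvd_iff (dvd_refl _)).1 hh
  apply h2
  refine Nat.Coprime.dvd_of_dvd_mul_left ?_ h4
  apply Nat.Coprime.pow_left
  apply Nat.Coprime.mul_right
  · exact (Nat.Prime.coprime_iff_not_dvd Nat.prime_three).2 hk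
  · apply Nat.Coprime.pow_right
    exact (Nat.Prime.coprime_iff_not_dvd Nat.prime_three).2 (nd3x a1 h3)

theorem lteA {a : ℕ} (a1 : 1 < a) {n e : ℕ} (he : 1 ≤ e) (h1 : 3^e ∣ yn a1 n) (h2 : ¬ 3^(e+1) ∣ yn a1 n) :
    3^(e+1) ∣ yn a1 (n*3) ∧ ¬ 3^(e+2) ∣ yn a1 (n*3) := by
  have h3 : 3 ∣ yn a1 n := (dvd_pow_self 3 (by omega)).trans h1
  have hm := (xy_modEq_yn a1 n 3).2
  have hd : 3^(e+2) ∣ yn a1 n ^ 3 := by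
    calc 3^(e+2) ∣ 3^(e*3) := pow_dvd_pow _ (by omega)
      _ = (3^e)^3 := pow_mul _ _ _
      _ ∣ _ := pow_dvd_pow_of_dvd h1 3
  constructor
  · refine ((hm.of_dvd ((pow_dvd_pow 3 (by omega)).trans hd)).dvd_iff (dvd_refl _)).2 ?_
    obtain ⟨u, hu⟩ := h1
    rw [hu]
    exact ⟨xn a1 n ^ (3-1) * u, by ring⟩
  · intro hh
    have h4 := ((hm.of_dvd hd).dvd_iff (dvd_refl _)).1 hh
    apply h2
    rw [show 3 * xn a1 n ^ (3-1) * yn a1 n = 3 * (xn a1 n ^ (3-1) * yn a1 n) by ring, pow_succ' 3 (e+1)] at h4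
    have h5 := Nat.dvd_of_mul_dvd_mul_left (by norm_num) h4
    refine Nat.Coprime.dvd_of_dvd_mul_left ?_ h5
    apply Nat.Coprime.pow_left
    apply Nat.Coprime.pow_right
    exact (Nat.Prime.coprime_iff_not_dvd Nat.prime_three).2 (nd3x a1 h3)

theorem lte {a : ℕ} (a1 : 1 < a) {n e : ℕ} (he : 1 ≤ e) (h1 : 3^e ∣ yn a1 n) (h2 : ¬ 3^(e+1) ∣ yn a1 n) (m : ℕ) :
    3^(e+m) ∣ yn a1 (n*3^m) ∧ ¬ 3^(e+m+1) ∣ yn a1 (n*3^m) := by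
  induction m with
  | zero => simpa using ⟨h1, h2⟩
  | succ m ih =>
    have := lteA a1 (by omega) ih.1 ih.2
    rw [pow_succ, ← mul_assoc]
    exact this

theorem index {a : ℕ} (a1 : 1 < a) {n : ℕ} (hn : 0 < n) (h : 3 ∣ yn a1 n) : ∃ e, ∀ t b, 0 < t → 3^b ∣ yn a1 t → 3^(b-e) ≤ t := by
  have hpos : yn a1 n ≠ 0 := by
    have := yn_ge_n a1 n
    omega
  obtain ⟨e, u, hnd, hu⟩ := Nat.exists_eq_pow_mul_and_not_dvd hpos 3 (by norm_num)
  have he : 1 ≤ e := by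
    by_contra hh
    have : e = 0 := by omega
    subst this
    rw [hu] at h; simp at h; exact hnd h
  have h1 : 3^e ∣ yn a1 n := ⟨u, hu⟩
  have h2 : ¬ 3^(e+1) ∣ yn a1 n := by
    rw [hu, pow_succ]
    intro hh
    exact hnd (Nat.dvd_of_mul_dvd_mul_left (by positivity) hh)
  refine ⟨e, ?_⟩
  intro t b ht hb
  obtain ⟨m, k, hkn, hk⟩ := Nat.exists_eq_pow_mul_and_not_dvd ht.ne' 3 (by norm_num)
  have h3 := lte a1 he h1 h2 m
  have h4 := lteB a1 (by omega) h3.1 h3.2 hkn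
  have h5 : 3^b ∣ yn a1 (n * 3^m * k) := by
    refine hb.trans ((y_dvd_iff a1 _ _).2 ?_)
    rw [mul_assoc, ← hk]
    exact dvd_mul_left _ _
  have h6 : b ≤ e + m := by
    by_contra hh
    exact h4 ((pow_dvd_pow 3 (by omega)).trans h5)
  have hk0 : 0 < k := by
    rcases Nat.eq_zero_or_pos k with h | h
    · subst h; simp at hkn
    · exact h
  calc 3^(b-e) ≤ 3^m := Nat.pow_le_pow_right (by norm_num) (by omega)
    _ ≤ 3^m * k := Nat.le_mul_of_pos_right _ hk0
    _ = t := hk.symm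

/-- growth of Pell solutions divisible by powers of 3 -/
theorem growth (s : ℕ) : ∃ e, ∀ (b x w : ℕ), 1 ≤ b → 2 ≤ x → x^2 = 1 + s*w^2 → 3^b ∣ x → 2^(3^(b-e)) ≤ x^2 := by
  by_cases hex : ∃ (b x w : ℕ), 1 ≤ b ∧ 2 ≤ x ∧ x^2 = 1 + s*w^2 ∧ 3^b ∣ x
  swap
  · refine ⟨0, ?_⟩
    intro b x w h1 h2 h3 h4
    exact absurd ⟨b, x, w, h1, h2, h3, h4⟩ hex
  obtain ⟨b0, x0, w0, h1, h2, h3, h4⟩ := hex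
  have hs0 : 0 < s := by
    rcases Nat.eq_zero_or_pos s with h | h
    · subst h; nlinarith
    · exact h
  have hsq : ¬ IsSquare (s:ℤ) := by
    rintro ⟨r, hr⟩
    have h5 : (x0:ℤ)^2 - (r*w0)^2 = 1 := by
      have : (x0:ℤ)^2 = 1 + s*w0^2 := by exact_mod_cast h3
      rw [hr] at this; linear_combination this
    rw [sq_sub_sq] at h5
    have h6 : (2:ℤ) ≤ x0 := by exact_mod_cast h2
    rcases Int.mul_eq_one_iff_eq_one_or_neg_one.1 h5 with ⟨a1, a2⟩ | ⟨a1, a2⟩ <;> omega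
  obtain ⟨g, hg⟩ := IsFundamental.exists_of_not_isSquare (by exact_mod_cast hs0) hsq
  obtain ⟨a, ha⟩ : ∃ a : ℕ, g.x = a := ⟨g.x.toNat, (Int.toNat_of_nonneg hg.x_pos.le).symm⟩
  have a1 : 1 < a := by
    have := hg.1
    rw [ha] at this; exact_mod_cast this
  have rep : ∀ x w : ℕ, 2 ≤ x → x^2 = 1 + s*w^2 → ∃ j, 0 < j ∧ x = xn a1 j := by
    intro x w hx hxw
    have hp : (x:ℤ)^2 - s*(w:ℤ)^2 = 1 := by
      have : (x:ℤ)^2 = 1 + s*w^2 := by exact_mod_cast hxw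
      linarith
    obtain ⟨j, hj⟩ := hg.eq_pow_of_nonneg (a := Solution₁.mk x w hp) (by simp; omega) (by simp)
    have e := (powxy g a1 ha j).1
    rw [← hj] at e
    simp at e
    refine ⟨j, ?_, e⟩
    rcases Nat.eq_zero_or_pos j with h | h
    · subst h; simp at e; omega
    · exact h
  have dbl : ∀ j, yn a1 (2*j) = xn a1 j * (2 * yn a1 j) := by
    intro j; rw [two_mul, yn_add]; ring
  obtain ⟨j0, hj0, e0⟩ := rep x0 w0 h2 h3
  obtain ⟨e, he⟩ := index a1 (n := 2*j0) (by omega) (by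
    rw [dbl, ← e0]
    exact Dvd.dvd.mul_right ((dvd_pow_self 3 (by omega)).trans h4) _)
  refine ⟨e, ?_⟩
  intro b x w hb hx hxw h3x
  obtain ⟨j, hj, ej⟩ := rep x w hx hxw
  have := he (2*j) b (by omega) (by rw [dbl, ← ej]; exact Dvd.dvd.mul_right h3x _)
  have h7 := xn_ge_a_pow a1 j
  calc 2^(3^(b-e)) ≤ 2^(2*j) := Nat.pow_le_pow_right (by norm_num) this
    _ = (2^j)^2 := by rw [mul_comm, pow_mul]
    _ ≤ (a^j)^2 := Nat.pow_le_pow_left (Nat.pow_le_pow_left a1 _) 2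
    _ ≤ x^2 := Nat.pow_le_pow_left (ej ▸ h7) 2
end PellB

set_option linter.all false
namespace PellB

theorem gap (c0 : ℕ) (hcons : ∀ (H N : ℕ) (a : Fin 3 → ℕ),
    Function.Injective a → (∀ j, a j ≤ H) → H + 1 ≤ N → ∀ k : ℕ, 1 ≤ k →
    ∀ (v : Fin 3 → ℤ) (lam η : ℝ), 0 ≤ lam → v ≠ 0 →
     (∀ j, |(v j : ℝ) - lam * ((N:ℝ) + a j) ^ (1/((2:ℕ):ℝ))| ≤ η) →
     1 ≤ (((c0:ℝ) * (H+1))^c0)^k * (lam * (N:ℝ)^(1/((2:ℕ):ℝ) - ((3:ℕ)-1:ℝ)*k) + (3:ℕ) * (N:ℝ)^k * η))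
    (s w w' a a' : Fin 3 → ℕ) (N N' B B' : ℕ)
    (ha : a = ![0, 2, 2*B]) (ha' : a' = ![0, 2, 2*B'])
    (hs : ∀ j, N + a j = s j * w j ^ 2) (hs' : ∀ j, N' + a' j = s j * w' j ^ 2)
    (hB : 2 ≤ B) (hB' : 2 ≤ B') (hNB : 2*B+1 ≤ N)
    (hκ : ((c0 * (2*B+1))^c0)^4 ≤ N)
    (hX' : (2*B')^20 ≤ N') : N' < N^183 := by
  by_contra hcon
  push Not at hcon
  have hN2 : 5 ≤ N := by omega
  have hNp : 0 < N := by omega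
  obtain ⟨k, hk1, hk2⟩ : ∃ k, (N^3)^k ≤ N' ∧ N' < (N^3)^(k+1) :=
    ⟨Nat.log (N^3) N', Nat.pow_log_le_self _ (by
      have : 0 < N^183 := by positivity
      omega), Nat.lt_pow_succ_log_self (Nat.one_lt_pow (by norm_num) (by omega)) _⟩
  have hk : 60 ≤ k := by
    by_contra hlt
    have : (N^3)^(k+1) ≤ (N^3)^61 := Nat.pow_le_pow_right (by positivity) (by omega)
    have e : (N^3)^61 = N^183 := by ring
    omega
  have hN'0 : 0 < N' := by
    have : 0 < (2*B')^20 := by positivity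
    omega
  have hNR : (5:ℝ) ≤ N := by exact_mod_cast hN2
  have hN0 : (0:ℝ) < N := by linarith
  have hN'R : (0:ℝ) < N' := by exact_mod_cast hN'0
  have haB : ∀ j, a j ≤ 2*B := by
    intro j; rw [ha]; fin_cases j <;> simp; omega
  have haB' : ∀ j, a' j ≤ 2*B' := by
    intro j; rw [ha']; fin_cases j <;> simp; omega
  have hsq : ∀ j, √((N:ℝ) + a j) * √((N':ℝ) + a' j) = s j * w j * w' j := by
    intro j
    rw [← Real.sqrt_mul (by positivity)]
    have h1 : (N:ℝ) + a j = s j * w j ^ 2 := by exact_mod_cast hs j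
    have h2 : (N':ℝ) + a' j = s j * w' j ^ 2 := by exact_mod_cast hs' j
    rw [h1, h2, show (s j * w j ^ 2 : ℝ) * (s j * w' j ^ 2) = (s j * w j * w' j)^2 by ring]
    exact Real.sqrt_sq (by positivity)
  have hr2 : (1/((2:ℕ):ℝ)) = 1/2 := by norm_num
  have hlo : ∀ j, √((N:ℝ) + a j) ≤ N := by
    intro j
    rw [Real.sqrt_le_left hN0.le]
    have h1 : (a j : ℝ) ≤ 2*B := by exact_mod_cast haB j
    have h2 : (2*B+1:ℝ) ≤ N := by exact_mod_cast hNB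
    nlinarith
  have hdiff : ∀ j, |√((N':ℝ) + a' j) - √N'| ≤ 2*B' / √N' := by
    intro j
    have hp : 0 < √(N':ℝ) := Real.sqrt_pos.2 hN'R
    have hge : √(N':ℝ) ≤ √((N':ℝ) + a' j) := Real.sqrt_le_sqrt (by have : (0:ℝ) ≤ a' j := by positivity
                                                                   linarith)
    rw [abs_of_nonneg (by linarith), le_div_iff₀ hp]
    have e1 : √((N':ℝ) + a' j) ^ 2 = (N':ℝ) + a' j := Real.sq_sqrt (by positivity)
    have e2 : √(N':ℝ) ^ 2 = (N':ℝ) := Real.sq_sqrt (by positivity)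
    have h1 : (a' j : ℝ) ≤ 2*B' := by exact_mod_cast haB' j
    nlinarith
  have hBN' : (2*B':ℝ) ≤ (N':ℝ)^(1/20:ℝ) := by
    have h1 : (2*B':ℝ)^20 ≤ N' := by exact_mod_cast hX'
    have h2 : ((2*B':ℝ)^20)^(1/20:ℝ) = (2*B':ℝ) := by
      rw [← Real.rpow_natCast (2*B':ℝ) 20, ← Real.rpow_mul (by positivity)]
      norm_num
    rw [← h2]
    exact Real.rpow_le_rpow (by positivity) h1 (by norm_num)
  have hup : (N':ℝ) ≤ N ^ (3*k+3:ℝ) := by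
    have : (N':ℝ) ≤ ((N:ℝ)^3)^(k+1) := by exact_mod_cast hk2.le
    rw [← pow_mul, ← Real.rpow_natCast _ (3*(k+1))] at this
    convert this using 2
    push_cast; ring
  have hdn : (N:ℝ) ^ (3*k:ℝ) ≤ N' := by
    have : ((N:ℝ)^3)^k ≤ N' := by exact_mod_cast hk1
    rw [← pow_mul, ← Real.rpow_natCast _ (3*k)] at this
    convert this using 2
    push_cast; ring
  have hlam : √(N':ℝ) ≤ N ^ ((3*k+3)/2:ℝ) := by
    rw [Real.sqrt_eq_rpow]
    calc _ ≤ ((N:ℝ) ^ (3*k+3:ℝ))^(1/2:ℝ) := Real.rpow_le_rpow (by positivity) hup (by norm_num)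
      _ = _ := by rw [← Real.rpow_mul hN0.le]; congr 1; ring
  have hη : (N:ℝ) * (2*B' / √N') ≤ N ^ (1 + (-0.45) * (3*k) : ℝ) := by
    rw [Real.rpow_add hN0, Real.rpow_one]
    apply mul_le_mul_of_nonneg_left _ hN0.le
    calc (2*B':ℝ) / √N' ≤ (N':ℝ)^(1/20:ℝ) / √N' := div_le_div_of_nonneg_right hBN' (by positivity)
      _ = (N':ℝ)^(-0.45:ℝ) := by
        rw [Real.sqrt_eq_rpow, ← Real.rpow_sub hN'R]; norm_num
      _ ≤ ((N:ℝ) ^ (3*k:ℝ))^(-0.45:ℝ) := Real.rpow_le_rpow_of_nonpos (by positivity) hdn (by norm_num)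
      _ = _ := by rw [← Real.rpow_mul hN0.le]; congr 1; ring
  have hpos : ∀ j, 0 < s j * w j * w' j := by
    intro j
    have h1 := hs j
    have h2 := hs' j
    have : 0 < s j * w j ^ 2 := by omega
    have : 0 < s j * w' j ^ 2 := by omega
    have a1 : s j ≠ 0 := by rintro h; simp [h] at this
    have a2 : w j ≠ 0 := by rintro h; simp [h] at h1; omega
    have a3 : w' j ≠ 0 := by rintro h; simp [h] at h2; omega
    positivity
  have key := hcons (2*B) N a (by
      rw [ha]
      intro i j hij
      fin_cases i <;> fin_cases j <;> simp at hij ⊢ <;> omega)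
    haB hNB k (by omega) (fun j => ((s j * w j * w' j : ℕ) : ℤ)) (√N') (N * (2*B' / √N'))
    (by positivity)
    (by intro h; have := congrFun h 0; have h2 := hpos 0; simp only [Pi.zero_apply] at this; omega)
    (by
      intro j
      rw [hr2, ← Real.sqrt_eq_rpow]
      have e : (((s j * w j * w' j : ℕ) : ℤ):ℝ) = s j * w j * w' j := by push_cast; ring
      rw [e, ← hsq j, show √((N:ℝ) + a j) * √((N':ℝ) + a' j) - √N' * √((N:ℝ) + a j)
        = √((N:ℝ) + a j) * (√((N':ℝ) + a' j) - √N') by ring, abs_mul, abs_of_nonneg (Real.sqrt_nonneg _)]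
      exact mul_le_mul (hlo j) (hdiff j) (abs_nonneg _) hN0.le)
  have hkR : (60:ℝ) ≤ k := by exact_mod_cast hk
  have hκ' : ((c0:ℝ) * ((2*B:ℕ)+1))^c0 ≤ (N:ℝ)^(1/4:ℝ) := by
    have h1 : (((c0:ℝ) * ((2*B:ℕ)+1))^c0)^4 ≤ N := by exact_mod_cast hκ
    have h2 : ((((c0:ℝ) * ((2*B:ℕ)+1))^c0)^4)^(1/4:ℝ) = ((c0:ℝ) * ((2*B:ℕ)+1))^c0 := by
      rw [← Real.rpow_natCast _ 4, ← Real.rpow_mul (by positivity)]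
      norm_num
    rw [← h2]
    exact Real.rpow_le_rpow (by positivity) h1 (by norm_num)
  have := gapfin N _ (√N') _ (1/((2:ℕ):ℝ) - ((3:ℕ)-1:ℝ)*k) (1/4) ((3*k+3)/2) (1 + (-0.45) * (3*k)) 3 k (by linarith) (by positivity) hκ'
    hlam hη (by norm_num) (by push_cast; linarith) (by linarith)
  exact absurd key (not_le.2 this)

def Q (s : Fin 3 → ℕ) (a b N : ℕ) : Prop :=
  0 < b ∧ b < a ∧ 3^a = N + 3^b + 1 ∧ ∃ w : Fin 3 → ℕ, ∀ j, N + (![0, 2, 2*3^b] : Fin 3 → ℕ) j = s j * w j ^ 2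

theorem Q.size {s : Fin 3 → ℕ} {a b N : ℕ} (h : Q s a b N) : 3 ≤ 3^b ∧ 3 * 3^b ≤ 3^a ∧ 3^a ≤ 2 * N := by
  obtain ⟨hb, hab, hN, -⟩ := h
  have h1 : 3^1 ≤ 3^b := Nat.pow_le_pow_right (by norm_num) hb
  have h2 : 3^(b+1) ≤ 3^a := Nat.pow_le_pow_right (by norm_num) hab
  rw [pow_succ] at h2
  omega

theorem large (s : Fin 3 → ℕ) (C : ℕ) : ∃ b0, ∀ {a b N}, Q s a b N → b0 ≤ b → C * (3^b)^C ≤ 3^a := by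
  obtain ⟨e, he⟩ := growth (s 0 * s 1)
  refine ⟨e + (6*C+4*C*e) + 1, ?_⟩
  intro a b N h hb
  obtain ⟨hb1, hab, hN, w, hw⟩ := h
  have hsz := Q.size ⟨hb1, hab, hN, w, hw⟩
  have h0 := hw 0
  have h1 := hw 1
  simp at h0 h1
  have hx := he b (N+1) (w 0 * w 1) hb1 (by omega) (by
      rw [show s 0 * s 1 * (w 0 * w 1)^2 = (s 0 * w 0 ^2) * (s 1 * w 1 ^2) by ring, ← h0, ← h1]; ring) (by
      obtain ⟨d, rfl⟩ := Nat.exists_eq_add_of_lt hab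
      refine ⟨3^(d+1) - 1, ?_⟩
      rw [Nat.mul_sub, ← pow_add, mul_one, ← add_assoc]
      omega)
  have h2 : 2^(3^(b-e)) ≤ (3^a)^2 := hx.trans (Nat.pow_le_pow_left (by omega) 2)
  obtain ⟨m, hm⟩ : ∃ m, b = m + e := ⟨b - e, by omega⟩
  rw [hm, Nat.add_sub_cancel] at h2
  have h3 : (C * (3^b)^C)^2 ≤ 2^(3^m) := by
    calc (C * (3^b)^C)^2 ≤ (2^C * ((2^2)^b)^C)^2 := by
          gcongr
          · exact (Nat.lt_pow_self (by norm_num)).le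
          · norm_num
      _ = 2^(2*C + 4*b*C) := by rw [← pow_mul, ← pow_mul, ← pow_add, ← pow_mul]; congr 1; ring
      _ ≤ 2^(3^m) := by
          apply Nat.pow_le_pow_right (by norm_num)
          have hmm : 6*C+4*C*e ≤ m := by omega
          have hm1 : 1 ≤ m := by omega
          have h4 : m^2 ≤ 3^m := by
            have : ∀ n : ℕ, n^2 ≤ 3^n ∧ 2*n+1 ≤ 2*3^n := by
              intro n
              induction n with
              | zero => simp
              | succ n ih => rw [pow_succ 3]; constructor <;> nlinarith [ih.1, ih.2]
            exact (this m).1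
          calc 2*C + 4*b*C = 4*C*m + (2*C+4*C*e) * 1 := by rw [hm]; ring
            _ ≤ 4*C*m + (2*C+4*C*e) * m := by gcongr
            _ = (6*C+4*C*e) * m := by ring
            _ ≤ m * m := Nat.mul_le_mul_right _ hmm
            _ = m^2 := (sq m).symm
            _ ≤ _ := h4
  exact (Nat.pow_le_pow_iff_left (by norm_num)).1 (h3.trans h2)

theorem Qfin (s : Fin 3 → ℕ) : Set.Finite {p : ℕ × ℕ | ∃ N, Q s p.1 p.2 N} := by
  obtain ⟨c0, hc0, hcons⟩ := Pade.cons 3 2 (by norm_num) (by norm_num)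
  obtain ⟨C, hC1, hC2, hC3⟩ : ∃ C, 2*(3*c0)^(4*c0) ≤ C ∧ 4*c0 ≤ C ∧ 2^30 ≤ C :=
    ⟨2*(3*c0)^(4*c0)+4*c0+2^30, by omega, by omega, by omega⟩
  obtain ⟨b0, hb0⟩ := large s C
  have hbad : Set.Finite {p : ℕ × ℕ | (∃ N, Q s p.1 p.2 N) ∧ ¬ C * (3^p.2)^C ≤ 3^p.1} := by
    apply Set.Finite.subset ((Set.finite_lt_nat (C * (3^b0)^C)).prod (Set.finite_lt_nat b0))
    rintro ⟨a, b⟩ ⟨⟨N, h⟩, h2⟩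
    have h3 : b < b0 := by
      by_contra hh
      exact h2 (hb0 h (by omega))
    refine ⟨?_, h3⟩
    show a < _
    push Not at h2
    calc a < 3^a := Nat.lt_pow_self (by norm_num)
      _ < C * (3^b)^C := h2
      _ ≤ _ := Nat.mul_le_mul_left _ (Nat.pow_le_pow_left (Nat.pow_le_pow_right (by norm_num) h3.le) _)
  have hgood : Set.Finite {p : ℕ × ℕ | (∃ N, Q s p.1 p.2 N) ∧ C * (3^p.2)^C ≤ 3^p.1} := by
    rcases Set.eq_empty_or_nonempty {p : ℕ × ℕ | (∃ N, Q s p.1 p.2 N) ∧ C * (3^p.2)^C ≤ 3^p.1} with hemp | ⟨⟨a, b⟩, ⟨N, h⟩, hl⟩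
    · rw [hemp]; exact Set.finite_empty
    simp only at h hl
    have hsz := h.size
    obtain ⟨hb1, hab, hN, w, hw⟩ := h
    have hp : ∀ b, 1 ≤ 3^b := fun b => Nat.one_le_pow _ _ (by norm_num)
    have key : ∀ a' b' N', Q s a' b' N' → C * (3^b')^C ≤ 3^a' → N' < N^183 := by
      intro a' b' N' h' hl'
      have hsz' := h'.size
      obtain ⟨hb1', hab', hN', w', hw'⟩ := h'
      have hBC : 3^b ≤ (3^b)^C := Nat.le_self_pow (by omega) _
      refine gap c0 hcons s w w' _ _ N N' (3^b) (3^b') rfl rfl hw hw' (by omega) (by omega) ?_ ?_ ?_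
      · have : 2^30 * (3^b)^C ≤ C * (3^b)^C := Nat.mul_le_mul_right _ hC3
        omega
      · have : 2*(3*c0)^(4*c0) * (3^b)^(4*c0) ≤ C * (3^b)^C := Nat.mul_le_mul hC1 (Nat.pow_le_pow_right (by positivity) hC2)
        have h5 : ((c0 * (2*3^b+1))^c0)^4 ≤ (3*c0)^(4*c0) * (3^b)^(4*c0) := by
          calc ((c0 * (2*3^b+1))^c0)^4 ≤ ((c0 * (3*3^b))^c0)^4 := by
                gcongr; omega
            _ = _ := by
                rw [show c0 * (3*3^b) = (3*c0) * 3^b by ring, mul_pow, mul_pow, ← pow_mul, ← pow_mul]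
                congr 2 <;> ring
        rw [mul_assoc] at this
        omega
      · have h5 : 2^30 * (3^b')^20 ≤ C * (3^b')^C := Nat.mul_le_mul hC3 (Nat.pow_le_pow_right (by positivity) (by omega))
        have h6 : (2 * 3^b')^20 = 2^20 * (3^b')^20 := mul_pow _ _ _
        omega
    apply Set.Finite.subset ((Set.finite_lt_nat (2*N^183)).prod (Set.finite_lt_nat (2*N^183)))
    rintro ⟨a', b'⟩ ⟨⟨N', h'⟩, hl'⟩
    simp only at h' hl'
    have k1 := key a' b' N' h' hl'
    have := h'.size
    have h2 : a' < 3^a' := Nat.lt_pow_self (by norm_num)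
    have h3 := h'.2.1
    exact ⟨show a' < _ by omega, show b' < _ by omega⟩
  apply Set.Finite.subset (hbad.union hgood)
  rintro ⟨a, b⟩ h
  by_cases hh : C * (3^b)^C ≤ 3^a
  · right; exact ⟨h, hh⟩
  · left; exact ⟨h, hh⟩
end PellB

set_option linter.all false
namespace PellB

theorem sdvd (f R M : ℕ) (hf : 0 < f) (hR : Nat.Coprime f R) (hM : 0 < M) (hsq : IsSquare (f * R * M)) :
    ∃ s w, f = s * w^2 ∧ s ≤ M := by
  obtain ⟨s, w, hsw, hs⟩ := Nat.sq_mul_squarefree f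
  refine ⟨s, w, by rw [← hsw, mul_comm], ?_⟩
  obtain ⟨r, hr⟩ := hsq
  have hw : w ≠ 0 := by rintro rfl; simp at hsw; omega
  have h1 : w ∣ r := by
    rw [← Nat.pow_dvd_pow_iff (n := 2) (by norm_num), sq r, ← hr, ← hsw]
    exact ⟨s * R * M, by ring⟩
  obtain ⟨r', rfl⟩ := h1
  have h2 : s * (R * M) = r'^2 := by
    have : w^2 * (s * (R * M)) = w^2 * r'^2 := by rw [← hsw] at hr; linarith
    exact Nat.eq_of_mul_eq_mul_left (by positivity) this
  have h3 : s ∣ r' := (hs.dvd_pow_iff_dvd (by norm_num)).1 ⟨_, h2.symm⟩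
  obtain ⟨u, rfl⟩ := h3
  have hs0 : 0 < s := Nat.pos_of_ne_zero hs.ne_zero
  have h4 : R * M = s * u^2 := Nat.eq_of_mul_eq_mul_left hs0 (by rw [h2]; ring)
  have h5 : s ∣ R * M := ⟨_, h4⟩
  have h6 : Nat.Coprime s R := Nat.Coprime.coprime_dvd_left ⟨w^2, by rw [← hsw]; ring⟩ hR
  exact Nat.le_of_dvd hM (h6.dvd_of_dvd_mul_left h5)

theorem cop_of (x y c : ℕ) (hx : x % 2 = 1) (hx3 : x % 3 ≠ 0) (h : ∀ d, d ∣ x → d ∣ y → d ∣ 2 * 3^c) : Nat.Coprime x y := by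
  apply Nat.coprime_of_dvd
  intro p hp h1 h2
  have h3 := h p h1 h2
  rcases (Nat.Prime.dvd_mul hp).1 h3 with h4 | h4
  · have := (Nat.prime_dvd_prime_iff_eq hp Nat.prime_two).1 h4
    subst this; omega
  · have := (Nat.prime_dvd_prime_iff_eq hp Nat.prime_three).1 (hp.dvd_of_dvd_pow h4)
    subst this; omega

theorem cop_add (x c : ℕ) (k : ℕ) (hk : k ∣ 2 * 3^c) (hx : x % 2 = 1) (hx3 : x % 3 ≠ 0) : Nat.Coprime x (x + k) :=
  cop_of x _ c hx hx3 (fun d h1 h2 => ((Nat.dvd_add_right h1).1 h2).trans hk)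

theorem cop_sum (x y c : ℕ) (hk : x + y = 2 * 3^c) (hx : x % 2 = 1) (hx3 : x % 3 ≠ 0) : Nat.Coprime x y :=
  cop_of x _ c hx hx3 (fun d h1 h2 => hk ▸ dvd_add h1 h2)

theorem classFin (M : ℕ) (hM : 0 < M) : Set.Finite {p : ℕ × ℕ | 0 < p.2 ∧ p.2 < p.1 ∧ ∃ N, 3^p.1 = N + 3^p.2 + 1 ∧
    IsSquare (N * (N+2) * (N+2*3^p.2) * (N+2*3^p.2+2) * M)} := by
  apply Set.Finite.subset (Set.Finite.biUnion
    (Fintype.piFinset (fun _ : Fin 3 => Finset.range (M+1))).finite_toSet (fun s _ => Qfin s))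
  rintro ⟨a, b⟩ ⟨hb, hab, N, hN, hsq⟩
  simp only at hb hab hN hsq
  have hoa : (3^a) % 2 = 1 := by rw [Nat.pow_mod]; norm_num
  have hob : (3^b) % 2 = 1 := by rw [Nat.pow_mod]; norm_num
  obtain ⟨B, hB⟩ : ∃ B, 3^b = 3*B := ⟨3^(b-1), by rw [← pow_succ']; congr 1; omega⟩
  obtain ⟨A, hA⟩ : ∃ A, 3^a = 3*A := ⟨3^(a-1), by rw [← pow_succ']; congr 1; omega⟩
  have hpb : 3^1 ≤ 3^b := Nat.pow_le_pow_right (by norm_num) hb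
  have hpa : 3^(b+1) ≤ 3^a := Nat.pow_le_pow_right (by norm_num) hab
  rw [pow_succ] at hpa
  have d2 : ∀ c, 2 ∣ 2 * 3^c := fun c => Dvd.intro _ rfl
  have c01 : Nat.Coprime N (N+2) := cop_add N b 2 (d2 b) (by omega) (by omega)
  have c02 : Nat.Coprime N (N+2*3^b) := cop_add N b _ dvd_rfl (by omega) (by omega)
  have c03 : Nat.Coprime N (N+2*3^b+2) := cop_sum N _ a (by omega) (by omega) (by omega)
  have c12 : Nat.Coprime (N+2) (N+2*3^b) := cop_sum _ _ a (by omega) (by omega) (by omega)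
  have c13 : Nat.Coprime (N+2) (N+2*3^b+2) := by
    have := cop_add (N+2) b _ dvd_rfl (by omega) (by omega)
    rwa [show N + 2 + 2*3^b = N+2*3^b+2 by ring] at this
  have c23 : Nat.Coprime (N+2*3^b) (N+2*3^b+2) := cop_add _ b 2 (d2 b) (by omega) (by omega)
  obtain ⟨s0, w0, e0, l0⟩ := sdvd N ((N+2) * (N+2*3^b) * (N+2*3^b+2)) M (by omega)
    ((c01.mul_right c02).mul_right c03) hM (by convert hsq using 1; ring)
  obtain ⟨s1, w1, e1, l1⟩ := sdvd (N+2) (N * (N+2*3^b) * (N+2*3^b+2)) M (by omega)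
    ((c01.symm.mul_right c12).mul_right c13) hM (by convert hsq using 1; ring)
  obtain ⟨s2, w2, e2, l2⟩ := sdvd (N+2*3^b) (N * (N+2) * (N+2*3^b+2)) M (by omega)
    ((c02.symm.mul_right c12.symm).mul_right c23) hM (by convert hsq using 1; ring)
  simp only [Set.mem_iUnion]
  refine ⟨![s0, s1, s2], ?_, N, hb, hab, hN, ![w0, w1, w2], ?_⟩
  · simp only [Finset.mem_coe, Fintype.mem_piFinset, Finset.mem_range]
    intro j; fin_cases j <;> simp <;> omega
  · intro j; fin_cases j
    · simpa using e0
    · simpa using e1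
    · simpa using e2
end PellB

set_option linter.all false
namespace FieldB
open Polynomial IntermediateField

theorem sqcls (L : Type) [Field L] [CharZero L] (q r : ℚ) (hq : ¬ IsSquare q) (hr : ¬ IsSquare r) (x y : L)
    (hx : x^2 = algebraMap ℚ L q) (hy : y^2 = algebraMap ℚ L r) (h : ℚ⟮x⟯ = ℚ⟮y⟯) : IsSquare (q * r) := by
  have hxm : x ∈ ℚ⟮y⟯ := h ▸ mem_adjoin_simple_self ℚ x
  have hynz : ¬ ∃ u : ℚ, algebraMap ℚ L u = y := by
    rintro ⟨u, hu⟩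
    apply hr
    refine ⟨u, (algebraMap ℚ L).injective ?_⟩
    rw [← hy, ← hu, map_mul, sq]
  have hyint : IsIntegral ℚ y := by
    refine ⟨X^2 - C r, monic_X_pow_sub_C r (by norm_num), ?_⟩
    simp [hy]
  have aux : ∀ z ∈ Algebra.adjoin ℚ {y}, ∃ u v : ℚ, z = algebraMap ℚ L u + algebraMap ℚ L v * y := by
    intro z hz
    clear hx h hxm
    induction hz using Algebra.adjoin_induction with
    | mem z hz => exact ⟨0, 1, by simp at hz; simp [hz]⟩
    | algebraMap c => exact ⟨c, 0, by simp⟩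
    | add z w _ _ h1 h2 =>
      obtain ⟨a, b, h1⟩ := h1; obtain ⟨c, d, h2⟩ := h2
      exact ⟨a+c, b+d, by rw [h1, h2]; push_cast; ring⟩
    | mul z w _ _ h1 h2 =>
      obtain ⟨a, b, h1⟩ := h1; obtain ⟨c, d, h2⟩ := h2
      refine ⟨a*c+b*d*r, a*d+b*c, ?_⟩
      rw [h1, h2]
      simp only [map_add, map_mul]
      linear_combination (algebraMap ℚ L b * algebraMap ℚ L d) * hy
  have hmem : x ∈ Algebra.adjoin ℚ {y} := by
    have h2 := IntermediateField.adjoin_simple_toSubalgebra_of_isAlgebraic (F := ℚ) (α := y) hyint.isAlgebraic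
    rw [← h2]; exact hxm
  obtain ⟨u, v, huv⟩ := aux x hmem
  have e : algebraMap ℚ L (q - u^2 - v^2*r) = algebraMap ℚ L (2*u*v) * y := by
    simp only [map_sub, map_mul, map_pow, map_ofNat]
    rw [← hx, ← hy, huv]; ring
  have huv0 : 2*u*v = 0 := by
    by_contra hne
    apply hynz
    refine ⟨(q - u^2 - v^2*r)/(2*u*v), ?_⟩
    rw [map_div₀, e]
    have : algebraMap ℚ L (2*u*v) ≠ 0 := by simpa using hne
    field_simp
  rw [huv0, map_zero, zero_mul] at e
  have e' : q - u^2 - v^2*r = 0 := (algebraMap ℚ L).injective (by rw [e, map_zero])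
  rcases mul_eq_zero.1 huv0 with h1 | h1
  · have : u = 0 := by linarith
    subst this
    exact ⟨v*r, by linear_combination r * e'⟩
  · subst h1
    exact absurd ⟨u, by linear_combination e'⟩ hq

def cub (A B : ℚ) : Cubic ℚ := ⟨B^3-B, 3*A*B^2, 3*A^2*B, A^3-A⟩

theorem cub_discr (A B : ℚ) : (cub A B).discr = (3*A*B)^2 * (-3 * ((A-B-1)*(A-B+1)*(A+B-1)*(A+B+1))) := by
  simp only [cub, Cubic.discr]; ring

theorem cub_eval {L : Type} [Field L] [CharZero L] (A B : ℚ) (t : L) :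
    eval₂ (algebraMap ℚ L) t (cub A B).toPoly = (algebraMap ℚ L A + algebraMap ℚ L B * t)^3 - (algebraMap ℚ L A + algebraMap ℚ L B * t^3) := by
  simp only [cub, Cubic.toPoly, eval₂_add, eval₂_mul, eval₂_C, eval₂_pow, eval₂_X]
  simp only [map_sub, map_mul, map_pow, map_ofNat]
  ring

theorem sqrt_mem (L : Type) [Field L] [CharZero L] [Normal ℚ L] (A B : ℚ) (hA : A ≠ 0) (hB : B^3-B ≠ 0) (t : L)
    (ht : algebraMap ℚ L A + algebraMap ℚ L B * t^3 = (algebraMap ℚ L A + algebraMap ℚ L B * t)^3)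
    (hno : ¬ ∃ u : ℚ, A + B * u^3 = (A + B*u)^3) :
    ∃ x : L, x^2 = algebraMap ℚ L (-3 * ((A-B-1)*(A-B+1)*(A+B-1)*(A+B+1))) := by
  have ha : (cub A B).a ≠ 0 := hB
  have hB0 : B ≠ 0 := by rintro rfl; simp at hB
  have hdeg : (cub A B).toPoly.natDegree = 3 := Cubic.natDegree_of_a_ne_zero ha
  have hne : (cub A B).toPoly ≠ 0 := by intro h; rw [h] at hdeg; simp at hdeg
  have hirr : Irreducible (cub A B).toPoly := by
    rw [Polynomial.irreducible_iff_roots_eq_zero_of_degree_le_three (by omega) (by omega)]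
    rw [Multiset.eq_zero_iff_forall_notMem]
    intro u hu
    apply hno
    refine ⟨u, ?_⟩
    have h1 := (mem_roots hne).1 hu
    have h2 := cub_eval (L := ℚ) A B u
    have hid : @algebraMap ℚ ℚ _ _ DivisionRing.toRatAlgebra = RingHom.id ℚ := Subsingleton.elim _ _
    rw [hid, eval₂_id] at h2
    simp only [RingHom.id_apply] at h2
    rw [IsRoot.def] at h1
    rw [h1] at h2
    linarith
  have hroot : aeval t (cub A B).toPoly = 0 := by
    rw [aeval_def, cub_eval, ht, sub_self]
  have hspl : ((cub A B).toPoly.map (algebraMap ℚ L)).Splits := by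
    have h1 := Normal.splits (F := ℚ) (K := L) inferInstance t
    rw [← minpoly.eq_of_irreducible hirr hroot] at h1
    rw [Polynomial.map_mul, Polynomial.map_C] at h1
    refine Polynomial.Splits.of_dvd h1 ?_ (Dvd.intro _ rfl)
    refine mul_ne_zero ?_ ?_
    · exact (Polynomial.map_ne_zero_iff (algebraMap ℚ L).injective).2 hne
    · simp [hne]
  obtain ⟨x, y, z, h3⟩ := (Cubic.splits_iff_roots_eq_three ha).1 hspl
  have h4 := Cubic.discr_eq_prod_three_roots ha h3
  rw [cub_discr, map_mul, map_pow] at h4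
  have h5 : algebraMap ℚ L (3*A*B) ≠ 0 := by
    simpa using ⟨hA, hB0⟩
  refine ⟨(algebraMap ℚ L (cub A B).a * algebraMap ℚ L (cub A B).a * (x - y) * (x - z) * (y - z)) / algebraMap ℚ L (3*A*B), ?_⟩
  rw [div_pow, ← h4]
  field_simp
end FieldB

set_option linter.all false
namespace FieldB
open Polynomial IntermediateField

def P4 (a b : ℕ) : ℕ := (3^a-3^b-1) * (3^a-3^b-1+2) * (3^a-3^b-1+2*3^b) * (3^a-3^b-1+2*3^b+2)

theorem P4_aux (a b : ℕ) (hb : 0 < b) (hab : b < a) : 3^a = (3^a-3^b-1) + 3^b + 1 ∧ 0 < 3^a-3^b-1 := by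
  have h1 : 3^(b+1) ≤ 3^a := Nat.pow_le_pow_right (by norm_num) hab
  have h2 : 3^1 ≤ 3^b := Nat.pow_le_pow_right (by norm_num) hb
  rw [pow_succ] at h1
  omega

theorem P4_pos (a b : ℕ) (hb : 0 < b) (hab : b < a) : 0 < P4 a b := by
  obtain ⟨h1, h2⟩ := P4_aux a b hb hab
  unfold P4
  positivity

theorem P4_cast (a b : ℕ) (hb : 0 < b) (hab : b < a) :
    ((P4 a b : ℕ) : ℚ) = ((3^a-3^b-1)*(3^a-3^b+1)*(3^a+3^b-1)*(3^a+3^b+1) : ℚ) := by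
  obtain ⟨h1, h2⟩ := P4_aux a b hb hab
  unfold P4
  generalize hN : 3^a-3^b-1 = N at *
  have : (3^a : ℚ) = N + 3^b + 1 := by exact_mod_cast h1
  rw [this]; push_cast; ring

theorem irrFinite (L : Type) [Field L] [CharZero L] [Normal ℚ L] [FiniteDimensional ℚ L] :
    Set.Finite {p : ℕ × ℕ | 0 < p.2 ∧ p.2 < p.1 ∧ (¬ ∃ u : ℚ, (3^p.1 : ℚ) + 3^p.2 * u^3 = (3^p.1 + 3^p.2*u)^3) ∧
      ∃ t : L, (3^p.1 : L) + 3^p.2 * t^3 = (3^p.1 + 3^p.2 * t)^3} := by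
  set Z := {p : ℕ × ℕ | 0 < p.2 ∧ p.2 < p.1 ∧ (¬ ∃ u : ℚ, (3^p.1 : ℚ) + 3^p.2 * u^3 = (3^p.1 + 3^p.2*u)^3) ∧
      ∃ t : L, (3^p.1 : L) + 3^p.2 * t^3 = (3^p.1 + 3^p.2 * t)^3} with hZ
  have hfin : Finite (IntermediateField ℚ L) :=
    Field.finite_intermediateField_of_exists_primitive_element ℚ L (Field.exists_primitive_element ℚ L)
  have key : ∀ p : ℕ × ℕ, ∃ x : L, p ∈ Z → x^2 = algebraMap ℚ L (-3 * (P4 p.1 p.2 : ℕ)) := by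
    rintro ⟨a, b⟩
    by_cases hp : (a, b) ∈ Z
    · obtain ⟨hb, hab, hno, t, ht⟩ := hp
      simp only at hb hab hno ht
      have hB : (3 : ℚ)^b ≥ 3 := by
        calc (3:ℚ)^b ≥ 3^1 := pow_le_pow_right₀ (by norm_num) hb
          _ = 3 := by norm_num
      obtain ⟨x, hx⟩ := sqrt_mem L (3^a) (3^b) (by positivity) (by
        have : ((3:ℚ)^b)^3 - 3^b = 3^b * ((3^b-1)*(3^b+1)) := by ring
        rw [this]
        have : (0:ℚ) < 3^b - 1 := by linarith
        positivity) t (by simpa using ht) hno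
      refine ⟨x, fun _ => ?_⟩
      rw [hx, P4_cast a b hb hab]
    · exact ⟨0, fun h => absurd h hp⟩
  choose x hx using key
  have nsq : ∀ p ∈ Z, ¬ IsSquare (-3 * ((P4 p.1 p.2 : ℕ) : ℚ)) := by
    rintro ⟨a, b⟩ ⟨hb, hab, _⟩ ⟨r, hr⟩
    have : (0:ℚ) < (P4 a b : ℕ) := by exact_mod_cast P4_pos a b hb hab
    simp only at hr
    nlinarith [mul_self_nonneg r]
  refine Set.Finite.of_finite_fibers (f := fun p => ℚ⟮x p⟯) (Set.toFinite _) ?_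
  rintro K ⟨p0, hp0, rfl⟩
  refine (PellB.classFin (P4 p0.1 p0.2) (P4_pos _ _ hp0.1 hp0.2.1)).subset ?_
  rintro p ⟨hp, hpe⟩
  simp only [Set.mem_preimage, Set.mem_singleton_iff] at hpe
  refine ⟨hp.1, hp.2.1, 3^p.1-3^p.2-1, (P4_aux _ _ hp.1 hp.2.1).1, ?_⟩
  have h1 := sqcls L _ _ (nsq p hp) (nsq p0 hp0) _ _ (hx p hp) (hx p0 hp0) hpe
  obtain ⟨r, hr⟩ := h1
  change IsSquare (P4 p.1 p.2 * P4 p0.1 p0.2)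
  rw [← Rat.isSquare_natCast_iff]
  exact ⟨r/3, by push_cast; linear_combination hr / 9⟩
end FieldB

set_option linter.all false
namespace FieldC
open IntermediateField
open scoped IntermediateField.algebraAdjoinAdjoin

theorem fin_alg (F : Type) [Field F] [CharZero F] (hfg : ∃ S : Finset F, IntermediateField.adjoin ℚ (S : Set F) = ⊤) :
    FiniteDimensional ℚ (algebraicClosure ℚ F) := by
  obtain ⟨S, hS⟩ := hfg
  have hE : Algebra.EssFiniteType ℚ F := by
    rw [← IntermediateField.fg_top_iff]
    exact ⟨S, hS⟩
  obtain ⟨s, hs⟩ := exists_isTranscendenceBasis ℚ F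
  have halg := hs.isAlgebraic_field
  rw [Subtype.range_coe] at halg
  have h1 : Algebra.EssFiniteType (adjoin ℚ s) F := Algebra.EssFiniteType.of_comp ℚ _ _
  have hf : Module.Finite (adjoin ℚ s) F := Algebra.finite_of_essFiniteType_of_isAlgebraic
  have hli := hs.1.algebraicClosure
  let b := Module.Basis.ofVectorSpace ℚ (algebraicClosure ℚ F)
  have hR : LinearIndependent (Algebra.adjoin ℚ s) (fun i => (b i : F)) := by
    rw [linearIndependent_iff']
    intro T g hg i hi
    have hp : ∀ j, ∃ p : MvPolynomial s ℚ, MvPolynomial.aeval (Subtype.val : s → F) p = (g j : F) := by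
      intro j
      have hm : ∀ z ∈ Algebra.adjoin ℚ s, z ∈ Algebra.adjoin ℚ (Set.range (Subtype.val : s → F)) := by
        rw [Subtype.range_coe]; exact fun z hz => hz
      have := hm _ (g j).2
      rw [Algebra.adjoin_range_eq_range_aeval] at this
      exact this
    choose p hp using hp
    have h0 : MvPolynomial.aeval (Subtype.val : s → F)
        (∑ j ∈ T, MvPolynomial.C (b j) * MvPolynomial.map (algebraMap ℚ (algebraicClosure ℚ F)) (p j)) = 0 := by
      rw [map_sum, ← hg]
      refine Finset.sum_congr rfl fun j _ => ?_
      rw [map_mul, MvPolynomial.aeval_C, MvPolynomial.aeval_map_algebraMap, hp, mul_comm]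
      rfl
    have h2 := (algebraicIndependent_iff.1 hli) _ h0
    have h3 : p i = 0 := by
      ext m
      have h4 := congrArg (MvPolynomial.coeff m) h2
      simp only [MvPolynomial.coeff_sum, MvPolynomial.coeff_C_mul, MvPolynomial.coeff_map, MvPolynomial.coeff_zero] at h4
      have h5 := linearIndependent_iff'.1 b.linearIndependent T (fun j => (p j).coeff m) (by
        rw [← h4]
        refine Finset.sum_congr rfl fun j _ => ?_
        rw [Algebra.smul_def, mul_comm]) i hi
      simpa using h5
    have h6 := hp i
    rw [h3, map_zero] at h6
    exact Subtype.ext h6.symm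
  have hL : LinearIndependent (adjoin ℚ s) (fun i => (b i : F)) :=
    (LinearIndependent.iff_fractionRing (Algebra.adjoin ℚ s) (adjoin ℚ s)).1 hR
  have := hL.finite
  exact Module.Finite.of_basis b
end FieldC

set_option linter.all false
namespace FieldC
open IntermediateField

theorem badFinite (F : Type) [Field F] [CharZero F] (hfg : ∃ S : Finset F, IntermediateField.adjoin ℚ (S : Set F) = ⊤) :
    Set.Finite {p : ℕ × ℕ | 0 < p.2 ∧ p.2 < p.1 ∧ ∃ t : F, (3^p.1 : F) + 3^p.2 * t^3 = (3^p.1 + 3^p.2 * t)^3} := by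
  have := fin_alg F hfg
  have h1 : Algebra.IsAlgebraic ℚ (AlgebraicClosure (algebraicClosure ℚ F)) :=
    Algebra.IsAlgebraic.trans ℚ (algebraicClosure ℚ F) _
  have h2 : IsAlgClosure ℚ (AlgebraicClosure (algebraicClosure ℚ F)) := ⟨inferInstance, h1⟩
  have h3 : Normal ℚ (AlgebraicClosure (algebraicClosure ℚ F)) := IsAlgClosure.normal _ _
  have hn : Normal ℚ (normalClosure ℚ (algebraicClosure ℚ F) (AlgebraicClosure (algebraicClosure ℚ F))) :=
    normalClosure.normal _ _ _
  refine (Rat3.ratFinite.union (FieldB.irrFinite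
    (normalClosure ℚ (algebraicClosure ℚ F) (AlgebraicClosure (algebraicClosure ℚ F))))).subset ?_
  rintro ⟨a, b⟩ ⟨hb, hab, t, ht⟩
  simp only at hb hab ht
  by_cases hr : ∃ u : ℚ, (3^a : ℚ) + 3^b * u^3 = (3^a + 3^b*u)^3
  · exact Or.inl ⟨hb, hab, hr⟩
  refine Or.inr ⟨hb, hab, hr, ?_⟩
  have hB : (3 : ℚ)^b ≥ 3 := by
    calc (3:ℚ)^b ≥ 3^1 := pow_le_pow_right₀ (by norm_num) hb
      _ = 3 := by norm_num
  have halg : IsAlgebraic ℚ t := by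
    refine ⟨(FieldB.cub (3^a) (3^b)).toPoly, ?_, ?_⟩
    · have hc : (FieldB.cub (3^a) (3^b)).a ≠ 0 := by
        have : ((3:ℚ)^b)^3 - 3^b = 3^b * ((3^b-1)*(3^b+1)) := by ring
        change ((3:ℚ)^b)^3 - 3^b ≠ 0
        rw [this]
        have : (0:ℚ) < 3^b - 1 := by linarith
        positivity
      exact Cubic.ne_zero_of_a_ne_zero hc
    · rw [Polynomial.aeval_def, FieldB.cub_eval]
      simp [ht]
  have hmem : t ∈ algebraicClosure ℚ F := mem_algebraicClosure_iff.2 halg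
  have ht2 : (3^a : algebraicClosure ℚ F) + 3^b * (⟨t, hmem⟩ : algebraicClosure ℚ F)^3 = (3^a + 3^b * (⟨t, hmem⟩ : algebraicClosure ℚ F))^3 :=
    Subtype.ext (by push_cast; exact ht)
  have ht3 := congrArg (algebraMap (algebraicClosure ℚ F)
    (normalClosure ℚ (algebraicClosure ℚ F) (AlgebraicClosure (algebraicClosure ℚ F)))) ht2
  exact ⟨_, by simpa only [map_add, map_mul, map_pow, map_ofNat] using ht3⟩
end FieldC

theorem relative_hermite_fails_three_powers_of_three
    (F₀ : Type) [Field F₀] [CharZero F₀]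
    (hfg : ∃ S : Finset F₀, IntermediateField.adjoin ℚ (S : Set F₀) = ⊤) :
    ∃ 𝒮 : Finset (ℕ × ℕ),
      ∀ k₁ k₂ k₃ : ℕ, k₁ > k₂ → k₂ > k₃ → (k₁ - k₃, k₂ - k₃) ∉ 𝒮 →
        ∃ (F E : Type) (_ : Field F) (_ : Field E) (_ : Algebra F₀ F) (_ : Algebra F E),
          Module.finrank F E = 3 ^ k₁ + 3 ^ k₂ + 3 ^ k₃ ∧
          ∀ δ : E, δ ≠ 0 →
            ¬ (Algebra.trace F E δ = 0 ∧ Algebra.trace F E (δ ^ 3) = 0) := by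
  refine ⟨(FieldC.badFinite F₀ hfg).toFinset, fun k₁ k₂ k₃ h12 h23 hS => ?_⟩
  obtain ⟨b, rfl⟩ : ∃ b, k₂ = k₃ + b := ⟨k₂ - k₃, by omega⟩
  obtain ⟨a, rfl⟩ : ∃ a, k₁ = k₃ + a := ⟨k₁ - k₃, by omega⟩
  have hb : 0 < b := by omega
  have hab : b < a := by omega
  simp only [Nat.add_sub_cancel_left, Set.Finite.mem_toFinset, Set.mem_setOf_eq, hb, hab, true_and] at hS
  have hinj : Function.Injective ![k₃ + a, k₃ + b, k₃] := by
    intro i j hij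
    fin_cases i <;> fin_cases j <;> simp at hij ⊢ <;> omega
  have := Deform.final F₀ ![k₃ + a, k₃ + b, k₃] hinj ?_
  · simpa [Fin.sum_univ_three] using this
  intro c h1 h3
  simp only [Fin.sum_univ_three, Matrix.cons_val_zero, Matrix.cons_val_one, Matrix.cons_val] at h1 h3
  push_cast at h1 h3
  have hk : (3 : F₀)^k₃ ≠ 0 := pow_ne_zero _ (by norm_num)
  have e1 : (3 : F₀)^a * c 0 + 3^b * c 1 + c 2 = 0 := by
    apply mul_left_cancel₀ hk; rw [mul_zero, ← h1]; ring
  have e3 : (3 : F₀)^a * c 0 ^ 3 + 3^b * c 1 ^ 3 + c 2 ^ 3 = 0 := by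
    apply mul_left_cancel₀ hk; rw [mul_zero, ← h3]; ring
  have ez : c 2 = -((3 : F₀)^a * c 0 + 3^b * c 1) := by linear_combination e1
  rw [ez] at e3
  have hx : c 0 = 0 := by
    by_contra hx
    apply hS
    refine ⟨c 1 / c 0, ?_⟩
    field_simp
    linear_combination e3
  have hy : c 1 = 0 := by
    rw [hx] at e3
    have hf : (3 : F₀)^b * ((3^b)^2 - 1) ≠ 0 := by
      have h9 : (3:ℕ)^1 ≤ 3^b := Nat.pow_le_pow_right (by norm_num) hb
      have : ((3:ℕ)^b)^2 ≠ 1 := by nlinarith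
      refine mul_ne_zero (pow_ne_zero _ (by norm_num)) (sub_ne_zero.2 ?_)
      exact_mod_cast this
    have : ((3 : F₀)^b * ((3^b)^2 - 1)) * c 1 ^ 3 = 0 := by linear_combination -e3
    exact pow_eq_zero_iff (by norm_num) |>.1 ((mul_eq_zero.1 this).resolve_left hf)
  funext i
  fin_cases i
  · exact hx
  · exact hy
  · simp [ez, hx, hy]
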